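/- arXiv:0711.1373 — 2 statements merged into one kernel-verified Lean document; each statement's English description precedes it below -/
import Mathlib

section
/- On the region R(2): uniformly on every compact subset K of the interior of R(2), ln|F_n(z)|/(2√n) → (1/2)·Re(√(Li₂(z²))) as n → ∞; that is, sup_{z ∈ K} | ln|F_n(z)|/(2√n) − (1/2)·Re(√(Li₂(z²))) | → 0. -/
open Complex Filter

/-- `partsCount k n` is the number of partitions of `n` with exactly `k` parts. -/
noncomputable def partsCount (k n : ℕ) : ℕ := Nat.card {p : Nat.Partition n // p.parts.card = k}

/-- The partition polynomial `F_n(x) = ∑_{k=1}^n p_k(n) x^k`. -/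
noncomputable def F (n : ℕ) (x : ℂ) : ℂ := ∑ k ∈ Finset.Icc 1 n, (partsCount k n : ℂ) * x ^ k

/-- The dilogarithm `Li₂(z) = ∑_{n=1}^∞ zⁿ/n²`. -/
noncomputable def dilog (z : ℂ) : ℂ := ∑' n : ℕ, z ^ (n + 1) / ((n : ℂ) + 1) ^ 2

/-- `fk k x = (1/k)·Re √(Li₂(x^k))` with the principal branch square root. -/
noncomputable def fk (k : ℕ) (x : ℂ) : ℝ := (1 / (k : ℝ)) * ((dilog (x ^ k)) ^ (1 / 2 : ℂ)).re

/-- The region `R(1)`. -/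
def R1 : Set ℂ := {x | ‖x‖ < 1 ∧ fk 2 x ≤ fk 1 x ∧ fk 3 x ≤ fk 1 x}

/-- The region `R(2)`. -/
def R2 : Set ℂ := {x | ‖x‖ < 1 ∧ fk 1 x ≤ fk 2 x ∧ fk 3 x ≤ fk 2 x}

/-- The region `R(3)`. -/
def R3 : Set ℂ := {x | ‖x‖ < 1 ∧ fk 1 x ≤ fk 3 x ∧ fk 2 x ≤ fk 3 x}

open Complex Filter

open PowerSeries in
theorem coeff_genFun_pow (x : ℂ) (n : ℕ) (hn : 1 ≤ n) :
    (Nat.Partition.genFun (fun _ c => x ^ c)).coeff n = F n x := by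
  rw [Nat.Partition.coeff_genFun]
  have h1 : ∀ p : n.Partition, p.parts.toFinsupp.prod (fun _ c => x ^ c) = x ^ p.parts.card := by
    intro p
    simp only [Finsupp.prod, Multiset.toFinsupp_support, Multiset.toFinsupp_apply]
    rw [Finset.prod_pow_eq_pow_sum, Multiset.toFinset_sum_count_eq]
  simp_rw [h1]
  unfold F partsCount
  have hmaps : ∀ p ∈ (Finset.univ : Finset n.Partition), p.parts.card ∈ Finset.Icc 1 n := by
    intro p _
    rw [Finset.mem_Icc]
    constructor
    · rw [Nat.one_le_iff_ne_zero]
      intro h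
      rw [Multiset.card_eq_zero] at h
      have := p.parts_sum
      rw [h] at this
      simp at this
      omega
    · have h2 : p.parts.card • 1 ≤ p.parts.sum := Multiset.card_nsmul_le_sum (fun y hy => p.parts_pos hy)
      rw [p.parts_sum] at h2
      simpa using h2
  rw [← Finset.sum_fiberwise_of_maps_to hmaps]
  refine Finset.sum_congr rfl fun k _ => ?_
  rw [Finset.sum_congr rfl (g := fun _ => x ^ k) (by
    intro p hp
    rw [(Finset.mem_filter.1 hp).2])]
  rw [Finset.sum_const, nsmul_eq_mul, Nat.card_eq_fintype_card, Fintype.card_subtype]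

open PowerSeries PowerSeries.WithPiTopology in
theorem genFun_mul_prod (x : ℂ) (N : ℕ) :
    (X : ℂ⟦X⟧) ^ (N + 1) ∣ (Nat.Partition.genFun (fun _ c => x ^ c)) *
      ∏ i ∈ Finset.range N, (1 - C x * X ^ (i + 1)) - 1 := by
  set u : ℕ → ℂ⟦X⟧ := fun i => 1 + ∑' j, x ^ (j + 1) • (X : ℂ⟦X⟧) ^ ((i + 1) * (j + 1)) with hu
  have hP : HasProd u (Nat.Partition.genFun (fun _ c => x ^ c)) :=
    Nat.Partition.hasProd_genFun (fun _ c => x ^ c)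
  have huv : ∀ i, u i * (1 - C x * X ^ (i + 1)) = 1 := by
    intro i
    have hs := Nat.Partition.summable_genFun_term (fun _ c => x ^ c) i
    have h2 : ∑' j, x ^ (j + 1) • (X : ℂ⟦X⟧) ^ ((i + 1) * (j + 1)) =
        C x * X ^ (i + 1) + (C x * X ^ (i + 1)) *
          ∑' j, x ^ (j + 1) • (X : ℂ⟦X⟧) ^ ((i + 1) * (j + 1)) := by
      conv_lhs => rw [hs.tsum_eq_zero_add]
      rw [← hs.tsum_mul_left]
      congr 1
      · simp [PowerSeries.smul_eq_C_mul]
      · refine tsum_congr fun j => ?_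
        simp only [PowerSeries.smul_eq_C_mul, map_pow]
        ring
    simp only [hu]
    linear_combination h2
  have hdvd : ∀ i, (X : ℂ⟦X⟧) ^ (i + 1) ∣ u i - 1 := by
    intro i
    exact ⟨C x * u i, by linear_combination (huv i)⟩
  have hIco : ∀ M, X ^ (N + 1) ∣ ∏ i ∈ Finset.Ico N M, u i - 1 := by
    intro M
    induction M with
    | zero => simp
    | succ M ih =>
      by_cases h : N ≤ M
      · rw [Finset.prod_Ico_succ_top h]
        have h3 : (X : ℂ⟦X⟧) ^ (N + 1) ∣ u M - 1 := (pow_dvd_pow _ (by omega)).trans (hdvd M)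
        have : (∏ i ∈ Finset.Ico N M, u i) * u M - 1 =
          (∏ i ∈ Finset.Ico N M, u i - 1) * u M + (u M - 1) := by ring
        rw [this]
        exact dvd_add (Dvd.dvd.mul_right ih _) h3
      · rw [Finset.Ico_eq_empty (by omega)]; simp
  have ht := hP.tendsto_prod_nat.mul_const (∏ i ∈ Finset.range N, (1 - C x * X ^ (i + 1)))
  have hev : ∀ᶠ M in atTop, (∏ i ∈ Finset.range M, u i) *
      (∏ i ∈ Finset.range N, (1 - C x * X ^ (i + 1))) = ∏ i ∈ Finset.Ico N M, u i := by
    filter_upwards [eventually_ge_atTop N] with M hM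
    rw [← Finset.prod_range_mul_prod_Ico _ hM, mul_right_comm, ← Finset.prod_mul_distrib]
    simp [huv]
  have ht2 := ht.congr' hev
  rw [PowerSeries.X_pow_dvd_iff]
  intro m hm
  rw [WithPiTopology.tendsto_iff_coeff_tendsto] at ht2
  have h5 := ht2 m
  have h6 : ∀ M, coeff m (∏ i ∈ Finset.Ico N M, u i) = coeff m (1 : ℂ⟦X⟧) := by
    intro M
    have := PowerSeries.X_pow_dvd_iff.1 (hIco M) m hm
    rw [map_sub, sub_eq_zero] at this
    exact this
  simp_rw [h6] at h5
  rw [map_sub, sub_eq_zero]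
  exact tendsto_nhds_unique h5 tendsto_const_nhds |>.symm ▸ rfl

theorem poly_dvd (x : ℂ) (n N : ℕ) (hN : n ≤ N) : ∃ T R : Polynomial ℂ,
    T.natDegree ≤ n ∧ (1 ≤ n → T.coeff n = F n x) ∧
    T * ∏ i ∈ Finset.range N, (1 - Polynomial.C x * Polynomial.X ^ (i + 1)) =
      1 + Polynomial.X ^ (n + 1) * R := by
  set Φ := (Nat.Partition.genFun (fun _ c => x ^ c)) with hΦ
  set D : Polynomial ℂ := ∏ i ∈ Finset.range N, (1 - Polynomial.C x * Polynomial.X ^ (i + 1)) with hD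
  have hdv : (Polynomial.X : Polynomial ℂ) ^ (n + 1) ∣ PowerSeries.trunc (n + 1) Φ * D - 1 := by
    rw [Polynomial.X_pow_dvd_iff]
    intro d hd
    have h1 := genFun_mul_prod x N
    rw [PowerSeries.X_pow_dvd_iff] at h1
    have h2 := h1 d (by omega)
    have h3 : (D : PowerSeries ℂ) = ∏ i ∈ Finset.range N, (1 - PowerSeries.C x * PowerSeries.X ^ (i + 1)) := by
      rw [hD]
      rw [← Polynomial.coeToPowerSeries.ringHom_apply, map_prod]
      refine Finset.prod_congr rfl fun i _ => ?_
      simp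
    rw [← h3, map_sub] at h2
    rw [Polynomial.coeff_sub, ← Polynomial.coeff_coe, Polynomial.coe_mul,
      PowerSeries.coeff_mul_eq_coeff_trunc_mul_trunc _ _ hd, PowerSeries.trunc_trunc,
      ← PowerSeries.coeff_mul_eq_coeff_trunc_mul_trunc _ _ hd]
    rw [← h2]
    congr 1
    rw [← Polynomial.coeff_coe, Polynomial.coe_one]
  obtain ⟨R, hR⟩ := hdv
  refine ⟨PowerSeries.trunc (n + 1) Φ, R, ?_, ?_, ?_⟩
  · have := PowerSeries.natDegree_trunc_lt Φ n
    omega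
  · intro hn
    rw [PowerSeries.coeff_trunc, if_pos (by omega), coeff_genFun_pow x n hn]
  · linear_combination hR

open Complex Filter

/-- The logarithm of the generating function. -/
noncomputable def HH (x q : ℂ) : ℂ := ∑' k : ℕ, x ^ k / k * (q ^ k / (1 - q ^ k))

theorem cauchy_trunc (x : ℂ) (hx : ‖x‖ < 1) (n N : ℕ) (hn : 1 ≤ n) (hN : n ≤ N) (ρ : ℝ) (hρ : 0 < ρ)
    (hρ1 : ρ < 1) :
    ∫ φ in (0:ℝ)..(2 * Real.pi), (∏ i ∈ Finset.range N, (1 - x * (circleMap 0 ρ φ) ^ (i + 1)))⁻¹ *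
      ((circleMap 0 ρ φ) ^ n)⁻¹ = 2 * Real.pi * F n x := by
  obtain ⟨T, R, hT, hTn, hTR⟩ := poly_dvd x n N hN
  set D : ℂ → ℂ := fun q => ∏ i ∈ Finset.range N, (1 - x * q ^ (i + 1)) with hD
  have hDne : ∀ q ∈ Metric.closedBall (0:ℂ) ρ, D q ≠ 0 := by
    intro q hq
    rw [mem_closedBall_zero_iff] at hq
    rw [hD]
    refine Finset.prod_ne_zero_iff.2 fun i _ h => ?_
    have h1 : ‖x * q ^ (i + 1)‖ < 1 := by
      rw [norm_mul, norm_pow]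
      have : ‖q‖ ^ (i + 1) ≤ 1 := pow_le_one₀ (norm_nonneg _) (by linarith)
      calc ‖x‖ * ‖q‖ ^ (i + 1) ≤ ‖x‖ * 1 := by gcongr
        _ < 1 := by linarith
    rw [sub_eq_zero] at h
    rw [← h] at h1
    simp at h1
  have hTD : ∀ q, T.eval q * D q = 1 + q ^ (n + 1) * R.eval q := by
    intro q
    have := congrArg (Polynomial.eval q) hTR
    simpa [Polynomial.eval_prod] using this
  have hDd : Differentiable ℂ D := by
    rw [hD]
    fun_prop
  have hIntg : ∮ q in C(0, ρ), (D q)⁻¹ * (q ^ (n + 1))⁻¹ = 2 * Real.pi * I * F n x := by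
    have e1 : ∮ q in C(0, ρ), (D q)⁻¹ * (q ^ (n + 1))⁻¹ =
        ∮ q in C(0, ρ), ((∑ i ∈ Finset.range (n + 1), T.coeff i * (q - 0) ^ ((i : ℤ) - (n + 1))) -
          R.eval q / D q) := by
      refine circleIntegral.integral_congr hρ.le fun q hq => ?_
      have hq1 : q ∈ Metric.closedBall (0:ℂ) ρ := Metric.sphere_subset_closedBall hq
      have hq0 : q ≠ 0 := by
        rintro rfl
        simp at hq
        linarith
      have h1 := hDne q hq1
      have h2 : ∑ i ∈ Finset.range (n + 1), T.coeff i * (q - 0) ^ ((i : ℤ) - (n + 1)) =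
          T.eval q * (q ^ (n + 1))⁻¹ := by
        rw [Polynomial.eval_eq_sum_range' (Nat.lt_succ_of_le hT), Finset.sum_mul]
        refine Finset.sum_congr rfl fun i _ => ?_
        rw [sub_zero, zpow_sub₀ hq0, zpow_natCast]
        have : ((n : ℤ) + 1) = ((n + 1 : ℕ) : ℤ) := by push_cast; ring
        rw [this, zpow_natCast]
        rw [div_eq_mul_inv, mul_assoc]
      rw [h2]
      field_simp
      linear_combination - hTD q
    rw [e1]
    have hc : ∀ i : ℕ, ContinuousOn (fun q : ℂ => T.coeff i * (q - 0) ^ ((i : ℤ) - (n + 1)))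
        (Metric.sphere 0 ρ) := by
      intro i
      refine ContinuousOn.mul continuousOn_const ?_
      refine ContinuousOn.zpow₀ (by fun_prop) _ ?_
      intro q hq
      left
      rw [sub_zero]
      rintro rfl
      simp at hq
      linarith
    have hdiff : DifferentiableOn ℂ (fun q => R.eval q / D q) (Metric.closedBall 0 ρ) := by
      refine DifferentiableOn.div ?_ hDd.differentiableOn hDne
      exact R.differentiable.differentiableOn
    rw [circleIntegral.integral_sub]
    · rw [circleIntegral.integral_fun_sum]
      · have e2 : ∮ q in C(0, ρ), R.eval q / D q = 0 := by
          refine Complex.circleIntegral_eq_zero_of_differentiable_on_off_countable hρ.le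
            Set.countable_empty hdiff.continuousOn ?_
          intro z hz
          exact (hdiff z (Metric.ball_subset_closedBall hz.1)).differentiableAt
            (Metric.closedBall_mem_nhds_of_mem hz.1)
        rw [e2, sub_zero, Finset.sum_range_succ, Finset.sum_eq_zero]
        · rw [circleIntegral.integral_const_mul, hTn hn]
          have : ((n : ℤ) - (n + 1)) = -1 := by ring
          simp only [this, zpow_neg_one]
          rw [circleIntegral.integral_sub_center_inv _ hρ.ne']
          ring
        · intro i hi
          rw [Finset.mem_range] at hi
          rw [circleIntegral.integral_const_mul, circleIntegral.integral_sub_zpow_of_ne, mul_zero]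
          omega
      · intro i _
        exact (hc i).circleIntegrable hρ.le
    · exact (continuousOn_finsetSum _ (fun i _ => hc i)).circleIntegrable hρ.le
    · exact (hdiff.continuousOn.mono Metric.sphere_subset_closedBall).circleIntegrable hρ.le
  rw [circleIntegral] at hIntg
  have e3 : ∫ φ in (0:ℝ)..(2 * Real.pi), deriv (circleMap 0 ρ) φ • ((D (circleMap 0 ρ φ))⁻¹ *
      ((circleMap 0 ρ φ) ^ (n + 1))⁻¹) = I * ∫ φ in (0:ℝ)..(2 * Real.pi), (D (circleMap 0 ρ φ))⁻¹ *
      ((circleMap 0 ρ φ) ^ n)⁻¹ := by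
    rw [← intervalIntegral.integral_const_mul]
    congr 1
    ext φ
    have : circleMap 0 ρ φ ≠ 0 := circleMap_ne_center hρ.ne'
    rw [deriv_circleMap, smul_eq_mul, pow_succ]
    field_simp
  rw [e3] at hIntg
  have := mul_left_cancel₀ I_ne_zero (hIntg.trans (by ring : _ = I * (2 * Real.pi * F n x)))
  exact this

theorem norm_geom_part (q : ℂ) (N k : ℕ) (hk : k ≠ 0) (hq : ‖q‖ < 1) :
    ‖∑ i ∈ Finset.range N, q ^ ((i + 1) * k)‖ ≤ (1 - ‖q‖)⁻¹ := by
  calc ‖∑ i ∈ Finset.range N, q ^ ((i + 1) * k)‖ ≤ ∑ i ∈ Finset.range N, ‖q‖ ^ i := by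
        refine norm_sum_le_of_le _ fun i _ => ?_
        rw [norm_pow]
        refine pow_le_pow_of_le_one (norm_nonneg _) hq.le ?_
        nlinarith [Nat.one_le_iff_ne_zero.2 hk]
    _ ≤ (1 - ‖q‖)⁻¹ := by
        rw [← tsum_geometric_of_lt_one (norm_nonneg _) hq]
        exact (summable_geometric_of_lt_one (norm_nonneg _) hq).sum_le_tsum _ (fun i _ => by positivity)

theorem prod_eq_exp (x q : ℂ) (hx : ‖x‖ < 1) (hq : ‖q‖ < 1) (N : ℕ) :
    (∏ i ∈ Finset.range N, (1 - x * q ^ (i + 1)))⁻¹ =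
      exp (∑' k : ℕ, x ^ k / k * ∑ i ∈ Finset.range N, q ^ ((i + 1) * k)) := by
  have hlt : ∀ i : ℕ, ‖x * q ^ (i + 1)‖ < 1 := by
    intro i
    rw [norm_mul, norm_pow]
    have : ‖q‖ ^ (i + 1) ≤ 1 := pow_le_one₀ (norm_nonneg _) (by linarith)
    calc ‖x‖ * ‖q‖ ^ (i + 1) ≤ ‖x‖ * 1 := by gcongr
      _ < 1 := by linarith
  have h1 := hasSum_sum (fun i (_ : i ∈ Finset.range N) => hasSum_taylorSeries_neg_log (hlt i))
  have h2 : ∑' k : ℕ, x ^ k / k * ∑ i ∈ Finset.range N, q ^ ((i + 1) * k) =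
      ∑ i ∈ Finset.range N, -log (1 - x * q ^ (i + 1)) := by
    rw [← h1.tsum_eq]
    refine tsum_congr fun k => ?_
    rw [Finset.mul_sum]
    refine Finset.sum_congr rfl fun i _ => ?_
    rw [mul_pow, pow_mul]
    ring
  rw [h2, Complex.exp_sum, ← Finset.prod_inv_distrib]
  refine Finset.prod_congr rfl fun i _ => ?_
  rw [Complex.exp_neg, Complex.exp_log]
  intro h
  have h3 := hlt i
  rw [sub_eq_zero] at h
  rw [← h] at h3
  simp at h3

theorem norm_pow_div_le (x : ℂ) (k : ℕ) : ‖x ^ k / (k : ℂ)‖ ≤ ‖x‖ ^ k := by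
  rw [norm_div, norm_pow, Complex.norm_natCast]
  rcases Nat.eq_zero_or_pos k with rfl | hk
  · simp
  · exact div_le_self (by positivity) (by exact_mod_cast hk)

theorem cauchyF (x : ℂ) (hx : ‖x‖ < 1) (n : ℕ) (hn : 1 ≤ n) (ρ : ℝ) (hρ : 0 < ρ) (hρ1 : ρ < 1) :
    ∫ φ in (0:ℝ)..(2 * Real.pi), exp (HH x (circleMap 0 ρ φ)) * ((circleMap 0 ρ φ) ^ n)⁻¹
      = 2 * Real.pi * F n x := by
  have hq : ∀ φ, ‖circleMap 0 ρ φ‖ = ρ := by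
    intro φ
    simp [abs_of_pos hρ]
  have hbd : ∀ φ (N k : ℕ), ‖x ^ k / k * ∑ i ∈ Finset.range N, (circleMap 0 ρ φ) ^ ((i + 1) * k)‖ ≤
      ‖x‖ ^ k * (1 - ρ)⁻¹ := by
    intro φ N k
    rcases eq_or_ne k 0 with rfl | hk
    · simp
      linarith
    · rw [norm_mul]
      gcongr
      · exact norm_pow_div_le x k
      · have := norm_geom_part (circleMap 0 ρ φ) N k hk (by rw [hq]; exact hρ1)
        rwa [hq] at this
  have hsum : Summable (fun k : ℕ => ‖x‖ ^ k * (1 - ρ)⁻¹) :=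
    (summable_geometric_of_lt_one (norm_nonneg _) hx).mul_right _
  have hlim : Tendsto (fun N : ℕ => ∫ φ in (0:ℝ)..(2 * Real.pi),
      (∏ i ∈ Finset.range N, (1 - x * (circleMap 0 ρ φ) ^ (i + 1)))⁻¹ *
      ((circleMap 0 ρ φ) ^ n)⁻¹) atTop (nhds (∫ φ in (0:ℝ)..(2 * Real.pi),
        exp (HH x (circleMap 0 ρ φ)) * ((circleMap 0 ρ φ) ^ n)⁻¹)) := by
    refine intervalIntegral.tendsto_integral_filter_of_dominated_convergence
      (fun _ => Real.exp (∑' k : ℕ, ‖x‖ ^ k * (1 - ρ)⁻¹) * (ρ ^ n)⁻¹) ?_ ?_ ?_ ?_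
    · refine Eventually.of_forall fun N => ?_
      refine Measurable.aestronglyMeasurable ?_
      refine Measurable.mul ?_ ?_
      · refine Measurable.inv ?_
        refine Continuous.measurable ?_
        have := continuous_circleMap 0 ρ
        fun_prop
      · refine Measurable.inv ?_
        refine Continuous.measurable ?_
        have := continuous_circleMap 0 ρ
        fun_prop
    · refine Eventually.of_forall fun N => Eventually.of_forall fun φ _ => ?_
      rw [norm_mul, norm_inv (_ ^ n), norm_pow, hq]
      gcongr
      rw [prod_eq_exp x _ hx (by rw [hq]; exact hρ1), Complex.norm_exp]
      gcongr
      refine (Complex.re_le_norm _).trans ?_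
      exact tsum_of_norm_bounded hsum.hasSum (hbd φ N)
    · exact intervalIntegrable_const
    · refine Eventually.of_forall fun φ _ => ?_
      refine Tendsto.mul_const _ ?_
      simp_rw [fun N => prod_eq_exp x (circleMap 0 ρ φ) hx (by rw [hq]; exact hρ1) N]
      refine (Complex.continuous_exp.tendsto _).comp ?_
      refine tendsto_tsum_of_dominated_convergence hsum ?_ (Eventually.of_forall fun N => hbd φ N)
      intro k
      rcases eq_or_ne k 0 with rfl | hk
      · simp
      refine Tendsto.const_mul _ ?_
      have hqk : ‖(circleMap 0 ρ φ) ^ k‖ < 1 := by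
        rw [norm_pow, hq]
        exact pow_lt_one₀ hρ.le hρ1 hk
      have := (hasSum_geometric_of_norm_lt_one hqk).mul_left ((circleMap 0 ρ φ) ^ k)
      have h2 := this.tendsto_sum_nat
      refine (h2.congr fun N => ?_)
      refine Finset.sum_congr rfl fun i _ => ?_
      rw [add_mul, one_mul, pow_add, mul_comm i k, pow_mul, mul_comm]
  refine tendsto_nhds_unique hlim (tendsto_const_nhds.congr' ?_)
  filter_upwards [eventually_ge_atTop n] with N hN
  exact (cauchy_trunc x hx n N hn hN ρ hρ hρ1).symm

theorem cauchyF' (x : ℂ) (hx : ‖x‖ < 1) (n : ℕ) (hn : 1 ≤ n) (σ : ℝ) (hσ : 0 < σ) :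
    ∫ τ in (-(Real.pi * √n))..(Real.pi * √n), exp (HH x (-exp (-((σ + τ * I) / (√n : ℝ)))) +
      (√n : ℝ) * (σ + τ * I)) = (-1) ^ n * (2 * Real.pi * (√n : ℝ)) * F n x := by
  have hn0 : (0:ℝ) < √n := Real.sqrt_pos.2 (by exact_mod_cast hn)
  have hnC : ((√n : ℝ) : ℂ) ≠ 0 := by exact_mod_cast hn0.ne'
  have hsq : ((√n : ℝ) : ℂ) ^ 2 = n := by
    rw [← ofReal_pow, Real.sq_sqrt (by positivity)]
    simp
  set ρ := Real.exp (-(σ / √n)) with hρ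
  have hρ1 : ρ < 1 := by
    rw [hρ, Real.exp_lt_one_iff]
    have : 0 < σ / √n := by positivity
    linarith
  have hc := cauchyF x hx n hn ρ (Real.exp_pos _) hρ1
  have h1 := intervalIntegral.integral_comp_sub_div (a := -(Real.pi * √n)) (b := Real.pi * √n)
    (fun φ => exp (HH x (circleMap 0 ρ φ)) * ((circleMap 0 ρ φ) ^ n)⁻¹) hn0.ne' Real.pi
  have e1 : Real.pi - Real.pi * √n / √n = 0 := by field_simp; ring
  have e2 : Real.pi - -(Real.pi * √n) / √n = 2 * Real.pi := by field_simp; ring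
  rw [e1, e2, hc] at h1
  have h2 : ∀ τ : ℝ, circleMap 0 ρ (Real.pi - τ / √n) = -exp (-((σ + τ * I) / (√n : ℝ))) := by
    intro τ
    rw [circleMap, zero_add, hρ, ofReal_exp, ← Complex.exp_add]
    push_cast
    have : -((σ:ℂ) / (√n : ℝ)) + (Real.pi - τ / (√n : ℝ)) * I =
      Real.pi * I + -((σ + τ * I) / (√n : ℝ)) := by
      field_simp; ring
    rw [this, Complex.exp_add, Complex.exp_pi_mul_I]
    ring
  have h3 : ∀ τ : ℝ, ((-exp (-((σ + τ * I) / (√n : ℝ)))) ^ n)⁻¹ =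
      (-1) ^ n * exp ((√n : ℝ) * (σ + τ * I)) := by
    intro τ
    rw [neg_pow, mul_inv, ← Complex.exp_nat_mul, ← Complex.exp_neg]
    congr 1
    · rw [← inv_pow]; norm_num
    · congr 1
      rw [← hsq]
      field_simp
  simp_rw [h2, h3] at h1
  have h4 : ∀ τ : ℝ, exp (HH x (-exp (-((σ + τ * I) / (√n : ℝ)))) +
      (√n : ℝ) * (σ + τ * I)) = (-1) ^ n * (exp (HH x (-exp (-((σ + τ * I) / (√n : ℝ))))) *
      ((-1) ^ n * exp ((√n : ℝ) * (σ + τ * I)))) := by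
    intro τ
    rw [Complex.exp_add]
    have : ((-1:ℂ) ^ n) * (-1) ^ n = 1 := by rw [← mul_pow]; norm_num
    linear_combination (-exp (HH x (-exp (-((σ + τ * I) / (√n : ℝ))))) * exp ((√n : ℝ) * (σ + τ * I))) * this
  simp_rw [h4]
  rw [intervalIntegral.integral_const_mul, h1, real_smul]
  ring

open Complex Filter

theorem dilog_term_le (z : ℂ) (hz : ‖z‖ ≤ 1) (n : ℕ) :
    ‖z ^ (n + 1) / ((n : ℂ) + 1) ^ 2‖ ≤ ‖z‖ * (1 / ((n : ℝ) + 1) ^ 2) := by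
  have h : ‖((n : ℂ) + 1)‖ = (n : ℝ) + 1 := by
    have := Complex.norm_natCast (n + 1)
    push_cast at this
    exact this
  rw [norm_div, norm_pow, norm_pow, h, pow_succ', mul_div_assoc]
  gcongr
  exact pow_le_one₀ (norm_nonneg _) hz

theorem summable_inv_sq : HasSum (fun n : ℕ => 1 / ((n : ℝ) + 1) ^ 2) (Real.pi ^ 2 / 6) := by
  have := (hasSum_nat_add_iff' 1).2 hasSum_zeta_two
  simpa using this

theorem pi_sq_le : Real.pi ^ 2 / 6 ≤ 5 / 3 := by
  have h1 := Real.pi_lt_d2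
  have h2 := Real.pi_pos
  nlinarith

theorem norm_dilog_le (z : ℂ) (hz : ‖z‖ ≤ 1) : ‖dilog z‖ ≤ 5 / 3 * ‖z‖ := by
  have h := tsum_of_norm_bounded (summable_inv_sq.mul_left ‖z‖) (dilog_term_le z hz)
  unfold dilog
  refine h.trans ?_
  rw [mul_comm]
  exact mul_le_mul_of_nonneg_right pi_sq_le (norm_nonneg _)

theorem dilog_differentiableOn : DifferentiableOn ℂ dilog (Metric.ball 0 1) := by
  unfold dilog
  refine differentiableOn_tsum_of_summable_norm summable_inv_sq.summable ?_ Metric.isOpen_ball ?_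
  · intro i
    fun_prop
  · intro n w hw
    rw [mem_ball_zero_iff] at hw
    refine (dilog_term_le w hw.le n).trans ?_
    refine mul_le_of_le_one_left (by positivity) hw.le

theorem dilog_differentiableAt (z : ℂ) (hz : ‖z‖ < 1) : DifferentiableAt ℂ dilog z :=
  (dilog_differentiableOn z (mem_ball_zero_iff.2 hz)).differentiableAt
    (Metric.isOpen_ball.mem_nhds (mem_ball_zero_iff.2 hz))

theorem integral_pow_log (n : ℕ) :
    ∫ t in (0:ℝ)..1, t ^ n * (-Real.log t) = 1 / ((n : ℝ) + 1) ^ 2 := by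
  have hn : ((n : ℝ) + 1) ≠ 0 := by positivity
  rw [intervalIntegral.integral_eq_sub_of_hasDerivAt_of_le (f := fun t : ℝ =>
    -(t ^ n * (t * Real.log t) / (n + 1)) + t ^ (n + 1) / ((n : ℝ) + 1) ^ 2) zero_le_one]
  · simp
  · have := Real.continuous_mul_log
    exact Continuous.continuousOn (by fun_prop)
  · intro t ht
    have h0 : t ≠ 0 := ht.1.ne'
    have h1 := (((hasDerivAt_pow (n + 1) t).mul (Real.hasDerivAt_log h0)).div_const ((n : ℝ) + 1)).neg.add
      ((hasDerivAt_pow (n + 1) t).div_const (((n : ℝ) + 1) ^ 2))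
    refine (h1.congr_deriv ?_).congr_of_eventuallyEq (Eventually.of_forall fun s => ?_)
    · simp only [add_tsub_cancel_right]
      push_cast
      field_simp
      ring
    · simp only [Pi.add_apply, Pi.neg_apply, Pi.mul_apply]
      ring
  · exact (intervalIntegral.intervalIntegrable_log'.neg).continuousOn_mul (by fun_prop)

theorem one_sub_ne (z : ℂ) (hz : ‖z‖ < 1) (t : ℝ) (h0 : 0 ≤ t) (h1 : t ≤ 1) : 1 - t * z ≠ 0 := by
  intro h
  rw [sub_eq_zero] at h
  have h2 : ‖(t : ℂ) * z‖ < 1 := by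
    rw [norm_mul, Complex.norm_real, Real.norm_of_nonneg h0]
    nlinarith [norm_nonneg z]
  rw [← h] at h2
  simp at h2

theorem kernel_cont (z : ℂ) (hz : ‖z‖ < 1) :
    ContinuousOn (fun t : ℝ => z / (1 - t * z)) (Set.uIcc 0 1) := by
  rw [Set.uIcc_of_le zero_le_one]
  refine ContinuousOn.div continuousOn_const (by fun_prop) ?_
  intro t ht
  exact one_sub_ne z hz t ht.1 ht.2

theorem kernel_int (z : ℂ) (hz : ‖z‖ < 1) :
    IntervalIntegrable (fun t : ℝ => z / (1 - t * z) * ((-Real.log t : ℝ) : ℂ)) MeasureTheory.volume 0 1 := by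
  have h : IntervalIntegrable (fun t : ℝ => ((-Real.log t : ℝ) : ℂ)) MeasureTheory.volume 0 1 := by
    have := (intervalIntegral.intervalIntegrable_log' (a := 0) (b := 1)).neg
    exact ⟨this.1.ofReal, this.2.ofReal⟩
  exact h.continuousOn_mul (kernel_cont z hz)

theorem dilog_eq_integral (z : ℂ) (hz : ‖z‖ < 1) :
    dilog z = ∫ t in (0:ℝ)..1, z / (1 - t * z) * ((-Real.log t : ℝ) : ℂ) := by
  have key := intervalIntegral.hasSum_integral_of_dominated_convergence (a := 0) (b := 1)
    (μ := MeasureTheory.volume)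
    (F := fun (n : ℕ) (t : ℝ) => z * ((t * z) ^ n) * ((-Real.log t : ℝ) : ℂ))
    (f := fun t : ℝ => z / (1 - t * z) * ((-Real.log t : ℝ) : ℂ))
    (fun n t => ‖z‖ ^ n * (-Real.log t)) ?_ ?_ ?_ ?_ ?_
  · unfold dilog
    rw [← key.tsum_eq]
    refine tsum_congr fun n => ?_
    have h1 : ∀ t : ℝ, z * ((t * z) ^ n) * ((-Real.log t : ℝ) : ℂ) =
        z ^ (n + 1) * ((t ^ n * (-Real.log t) : ℝ) : ℂ) := by
      intro t
      push_cast
      ring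
    simp_rw [h1]
    rw [intervalIntegral.integral_const_mul, intervalIntegral.integral_ofReal, integral_pow_log]
    push_cast
    ring
  · intro n
    refine Measurable.aestronglyMeasurable ?_
    have : Measurable (fun t : ℝ => ((-Real.log t : ℝ) : ℂ)) := by
      exact Complex.measurable_ofReal.comp (Real.measurable_log.neg)
    refine Measurable.mul ?_ this
    exact Continuous.measurable (by fun_prop)
  · intro n
    refine Eventually.of_forall fun t ht => ?_
    rw [Set.uIoc_of_le zero_le_one] at ht
    have hl : 0 ≤ -Real.log t := by
      have := Real.log_nonpos ht.1.le ht.2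
      linarith
    rw [norm_mul, Complex.norm_real, Real.norm_of_nonneg hl]
    gcongr
    rw [norm_mul, norm_pow, norm_mul, Complex.norm_real, Real.norm_of_nonneg ht.1.le]
    have : (t * ‖z‖) ^ n ≤ ‖z‖ ^ n := by
      gcongr
      · exact mul_nonneg ht.1.le (norm_nonneg _)
      · exact mul_le_of_le_one_left (norm_nonneg _) ht.2
    calc ‖z‖ * (t * ‖z‖) ^ n ≤ 1 * ‖z‖ ^ n := by
          gcongr
          exact pow_nonneg (mul_nonneg ht.1.le (norm_nonneg _)) _
      _ = _ := one_mul _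
  · refine Eventually.of_forall fun t ht => ?_
    exact (summable_geometric_of_lt_one (norm_nonneg _) hz).mul_right _
  · simp_rw [tsum_mul_right]
    exact (intervalIntegral.intervalIntegrable_log'.neg).const_mul _
  · refine Eventually.of_forall fun t ht => ?_
    rw [Set.uIoc_of_le zero_le_one] at ht
    refine HasSum.mul_right _ ?_
    rw [div_eq_mul_inv]
    refine HasSum.mul_left _ ?_
    refine hasSum_geometric_of_norm_lt_one ?_
    rw [norm_mul, Complex.norm_real, Real.norm_of_nonneg ht.1.le]
    nlinarith [norm_nonneg z, ht.2]

theorem dilog_lin (c z : ℂ) (hz : ‖z‖ < 1) :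
    IntervalIntegrable (fun t : ℝ => (c * (z / (1 - t * z))).re * (-Real.log t)) MeasureTheory.volume 0 1 ∧
    (c * dilog z).re = ∫ t in (0:ℝ)..1, (c * (z / (1 - t * z))).re * (-Real.log t) := by
  have hi := (kernel_int z hz).const_mul c
  have e : ∀ t : ℝ, RCLike.re (c * (z / (1 - t * z) * ((-Real.log t : ℝ) : ℂ))) =
      (c * (z / (1 - t * z))).re * (-Real.log t) := by
    intro t
    rw [← mul_assoc]
    exact Complex.re_mul_ofReal _ _
  constructor
  · have h2 : IntervalIntegrable (fun t : ℝ => (c * (z / (1 - t * z))).re) MeasureTheory.volume 0 1 ∨ True := Or.inr trivial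
    refine ((intervalIntegral.intervalIntegrable_log').neg).continuousOn_mul ?_
    exact Complex.continuous_re.comp_continuousOn (continuousOn_const.mul (kernel_cont z hz))
  · rw [dilog_eq_integral z hz, ← intervalIntegral.integral_const_mul]
    simp_rw [← e]
    rw [intervalIntegral.intervalIntegral_re hi]
    rfl

theorem kernel_eq (z : ℂ) (hz : ‖z‖ < 1) (t : ℝ) (h0 : 0 ≤ t) (h1 : t ≤ 1) :
    z / (1 - t * z) = (z - t * (‖z‖ ^ 2 : ℝ)) / (normSq (1 - t * z) : ℝ) := by
  have hne := one_sub_ne z hz t h0 h1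
  have h2 : (starRingEnd ℂ) (1 - t * z) ≠ 0 := by simpa using (map_ne_zero (starRingEnd ℂ)).2 hne
  rw [← Complex.mul_conj, ← Complex.normSq_eq_norm_sq, ← Complex.mul_conj]
  rw [div_eq_div_iff hne (mul_ne_zero hne h2)]
  simp only [map_sub, map_one, map_mul, conj_ofReal]
  ring

theorem dilog_im_pos (z : ℂ) (hz : ‖z‖ < 1) (h : 0 < z.im) : 0 < (dilog z).im := by
  obtain ⟨hi, he⟩ := dilog_lin (-I) z hz
  have : (-I * dilog z).re = (dilog z).im := by simp
  rw [this] at he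
  rw [he]
  refine intervalIntegral.intervalIntegral_pos_of_pos_on hi ?_ one_pos
  intro t ht
  refine mul_pos ?_ (by have := Real.log_neg ht.1 ht.2; linarith)
  rw [kernel_eq z hz t ht.1.le ht.2.le]
  have hne := normSq_pos.2 (one_sub_ne z hz t ht.1.le ht.2.le)
  rw [← mul_div_assoc, Complex.div_ofReal_re]
  refine div_pos ?_ hne
  simpa [← ofReal_pow] using h

theorem dilog_re_nonpos (z : ℂ) (hz : ‖z‖ < 1) (h : z.re ≤ 0) : (dilog z).re ≤ 0 := by
  obtain ⟨hi, he⟩ := dilog_lin (-1) z hz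
  have h0 : (-1 * dilog z).re = -(dilog z).re := by simp
  suffices 0 ≤ (-1 * dilog z).re by rw [h0] at this; linarith
  rw [he]
  refine intervalIntegral.integral_nonneg zero_le_one ?_
  intro t ht
  refine mul_nonneg ?_ (by have := Real.log_nonpos ht.1 ht.2; linarith)
  rw [kernel_eq z hz t ht.1 ht.2]
  have hne := normSq_pos.2 (one_sub_ne z hz t ht.1 ht.2)
  rw [← mul_div_assoc, Complex.div_ofReal_re]
  refine div_nonneg ?_ hne.le
  have : 0 ≤ t * ‖z‖ ^ 2 := mul_nonneg ht.1 (by positivity)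
  simp [← ofReal_pow]
  linarith

/-- The function `(Re √A)²`. -/
noncomputable def hh (A : ℂ) : ℝ := (‖A‖ + A.re) / 2

theorem dilog_low (a b c : ℝ) (hb : 0 ≤ b) (hc : -1 ≤ c) (hab : 0 ≤ a - b / 4)
    (hq : ∀ u : ℝ, 0 ≤ u → u ≤ 1 → (a - b * u) * (1 - 2 * c * u + u ^ 2) ≤ 1 - u)
    (z : ℂ) (hz : ‖z‖ < 1) (hz0 : z ≠ 0) (hcz : c * ‖z‖ ≤ z.re) :
    (1 + c) / 2 * (a - b / 4) * ‖z‖ ≤ hh (dilog z) := by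
  have hr : 0 < ‖z‖ := norm_pos_iff.2 hz0
  set r := ‖z‖ with hrdef
  obtain ⟨hi, he⟩ := dilog_lin (1 + (starRingEnd ℂ) z / r) z hz
  have hnn : 0 ≤ r + z.re := by nlinarith
  have h1 : ((1 + (starRingEnd ℂ) z / r) * dilog z).re ≤ 2 * hh (dilog z) := by
    have h2 : ((starRingEnd ℂ) z / r * dilog z).re ≤ ‖dilog z‖ := by
      refine (Complex.re_le_norm _).trans ?_
      rw [norm_mul, norm_div, RCLike.norm_conj, Complex.norm_real, Real.norm_of_nonneg hr.le,
        ← hrdef, div_self hr.ne', one_mul]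
    rw [add_mul, one_mul, add_re]
    unfold hh
    linarith
  have h2 : (r + z.re) * (a - b / 4) ≤ ((1 + (starRingEnd ℂ) z / r) * dilog z).re := by
    rw [he]
    have e1 : ∫ t in (0:ℝ)..1, (r + z.re) * (a * (t ^ 0 * (-Real.log t)) - b * (t ^ 1 * (-Real.log t))) =
        (r + z.re) * (a - b / 4) := by
      have i0 : IntervalIntegrable (fun t : ℝ => t ^ 0 * (-Real.log t)) MeasureTheory.volume 0 1 :=
        (intervalIntegral.intervalIntegrable_log'.neg).continuousOn_mul (by fun_prop)
      have i1 : IntervalIntegrable (fun t : ℝ => t ^ 1 * (-Real.log t)) MeasureTheory.volume 0 1 :=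
        (intervalIntegral.intervalIntegrable_log'.neg).continuousOn_mul (by fun_prop)
      rw [intervalIntegral.integral_const_mul, intervalIntegral.integral_sub (i0.const_mul _) (i1.const_mul _),
        intervalIntegral.integral_const_mul, intervalIntegral.integral_const_mul,
        integral_pow_log, integral_pow_log]
      norm_num
      left; ring
    rw [← e1]
    refine intervalIntegral.integral_mono_on zero_le_one ?_ hi ?_
    · have i0 : IntervalIntegrable (fun t : ℝ => t ^ 0 * (-Real.log t)) MeasureTheory.volume 0 1 :=
        (intervalIntegral.intervalIntegrable_log'.neg).continuousOn_mul (by fun_prop)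
      have i1 : IntervalIntegrable (fun t : ℝ => t ^ 1 * (-Real.log t)) MeasureTheory.volume 0 1 :=
        (intervalIntegral.intervalIntegrable_log'.neg).continuousOn_mul (by fun_prop)
      exact ((i0.const_mul _).sub (i1.const_mul _)).const_mul _
    intro t ht
    have hl : 0 ≤ -Real.log t := by have := Real.log_nonpos ht.1 ht.2; linarith
    have e2 : (r + z.re) * (a * (t ^ 0 * (-Real.log t)) - b * (t ^ 1 * (-Real.log t))) =
      ((r + z.re) * (a - b * t)) * (-Real.log t) := by ring
    rw [e2]
    refine mul_le_mul_of_nonneg_right ?_ hl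
    rw [kernel_eq z hz t ht.1 ht.2]
    have hpos := normSq_pos.2 (one_sub_ne z hz t ht.1 ht.2)
    rw [← mul_div_assoc, Complex.div_ofReal_re, le_div_iff₀ hpos]
    have hns : z.re ^ 2 + z.im ^ 2 = r ^ 2 := by
      rw [hrdef, ← Complex.normSq_eq_norm_sq, Complex.normSq_apply]; ring
    have e3 : ((1 + (starRingEnd ℂ) z / r) * (z - t * (r ^ 2 : ℝ))).re = (r + z.re) * (1 - t * r) := by
      rw [mul_re, add_re, add_im, Complex.div_ofReal_re, Complex.div_ofReal_im]
      simp only [one_re, conj_re, sub_re, one_im, conj_im, sub_im, re_ofReal_mul, im_ofReal_mul, ofReal_re, ofReal_im]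
      field_simp
      linear_combination hns
    rw [e3]
    have e4 : normSq (1 - t * z) = 1 - 2 * t * z.re + (t * r) ^ 2 := by
      rw [normSq_apply]
      simp
      linear_combination t ^ 2 * hns
    rw [e4, mul_assoc]
    refine mul_le_mul_of_nonneg_left ?_ hnn
    have hu0 : 0 ≤ t * r := mul_nonneg ht.1 hr.le
    have hu1 : t * r ≤ 1 := by nlinarith [ht.2, ht.1]
    have hqu := hq (t * r) hu0 hu1
    have hd0 : 0 ≤ 1 - 2 * t * z.re + (t * r) ^ 2 := by rw [← e4]; exact hpos.le
    have hd1 : 1 - 2 * t * z.re + (t * r) ^ 2 ≤ 1 - 2 * c * (t * r) + (t * r) ^ 2 := by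
      nlinarith [mul_le_mul_of_nonneg_left hcz ht.1]
    have h3 : a - b * t ≤ a - b * (t * r) := by
      have : t * r ≤ t := mul_le_of_le_one_right ht.1 hz.le
      nlinarith
    rcases le_total (a - b * (t * r)) 0 with h4 | h4
    · have : (a - b * t) * (1 - 2 * t * z.re + (t * r) ^ 2) ≤ 0 :=
        mul_nonpos_of_nonpos_of_nonneg (h3.trans h4) hd0
      linarith
    · calc (a - b * t) * (1 - 2 * t * z.re + (t * r) ^ 2) ≤
          (a - b * (t * r)) * (1 - 2 * t * z.re + (t * r) ^ 2) := by gcongr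
        _ ≤ (a - b * (t * r)) * (1 - 2 * c * (t * r) + (t * r) ^ 2) := by gcongr
        _ ≤ _ := hqu
  have h3 : (1 + c) * r * (a - b / 4) ≤ (r + z.re) * (a - b / 4) := by
    refine mul_le_mul_of_nonneg_right ?_ hab
    linarith
  linarith

theorem low1 (z : ℂ) (hz : ‖z‖ < 1) (hz0 : z ≠ 0) (h : -(0.7072:ℝ) * ‖z‖ ≤ z.re) :
    0.0768 * ‖z‖ ≤ hh (dilog z) := by
  have := dilog_low 0.88 1.42 (-0.7072) (by norm_num) (by norm_num) (by norm_num) ?_ z hz hz0 h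
  · have h2 := norm_nonneg z
    norm_num at this ⊢
    linarith
  · intro u h0 h1
    nlinarith [mul_nonneg h0 (sq_nonneg (u - 0.25)), sq_nonneg (u - 0.25), mul_nonneg h0 (sub_nonneg.2 h1)]

theorem low2 (z : ℂ) (hz : ‖z‖ < 1) (hz0 : z ≠ 0) (h : -(1/2:ℝ) * ‖z‖ ≤ z.re) :
    0.14 * ‖z‖ ≤ hh (dilog z) := by
  have := dilog_low 0.92 1.415 (-(1/2)) (by norm_num) (by norm_num) (by norm_num) ?_ z hz hz0 h
  · have h2 := norm_nonneg z
    norm_num at this ⊢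
    linarith
  · intro u h0 h1
    nlinarith [mul_nonneg h0 (sq_nonneg (u - 0.25)), sq_nonneg (u - 0.25), mul_nonneg h0 (sub_nonneg.2 h1)]

theorem low3 (z : ℂ) (hz : ‖z‖ < 1) (hz0 : z ≠ 0) (h : 0 ≤ z.re) :
    0.34 * ‖z‖ ≤ hh (dilog z) := by
  have := dilog_low 1 1.25 0 (by norm_num) (by norm_num) (by norm_num) ?_ z hz hz0 (by simpa using h)
  · have h2 := norm_nonneg z
    norm_num at this ⊢
    linarith
  · intro u h0 h1
    nlinarith [mul_nonneg h0 (sq_nonneg (u - 0.4))]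

theorem low4 (z : ℂ) (hz : ‖z‖ < 1) (hz0 : z ≠ 0) (h : 1/2 * ‖z‖ ≤ z.re) :
    0.56 * ‖z‖ ≤ hh (dilog z) := by
  have := dilog_low 1 1 (1/2) (by norm_num) (by norm_num) (by norm_num) ?_ z hz hz0 h
  · have h2 := norm_nonneg z
    norm_num at this ⊢
    linarith
  · intro u h0 h1
    nlinarith [mul_nonneg h0 (sq_nonneg (u - 1)), sq_nonneg (u - 1)]

open Complex Filter

theorem sqrt_sq (A : ℂ) : (A ^ (1 / 2 : ℂ)) ^ 2 = A := by
  simp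

theorem sqrt_re_nonneg (A : ℂ) : 0 ≤ (A ^ (1 / 2 : ℂ)).re := by
  by_cases hA : A = 0
  · subst hA; simp
  rw [Complex.cpow_def_of_ne_zero hA, Complex.exp_re]
  have h1 : (Complex.log A * (1 / 2 : ℂ)).im = A.arg / 2 := by
    simp [Complex.mul_im, Complex.log_im]
    ring
  rw [h1]
  apply mul_nonneg (Real.exp_pos _).le
  apply Real.cos_nonneg_of_neg_pi_div_two_le_of_le
  · linarith [Complex.neg_pi_lt_arg A]
  · linarith [Complex.arg_le_pi A]

theorem sqrt_re_sq (A : ℂ) : (A ^ (1 / 2 : ℂ)).re ^ 2 = hh A := by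
  set w := A ^ (1 / 2 : ℂ) with hw
  have h : w ^ 2 = A := sqrt_sq A
  have h1 : ‖A‖ = w.re ^ 2 + w.im ^ 2 := by
    rw [← h, norm_pow, Complex.sq_norm, Complex.normSq_apply]; ring
  have h2 : A.re = w.re ^ 2 - w.im ^ 2 := by
    rw [← h, pow_two, Complex.mul_re]; ring
  unfold hh
  rw [h1, h2]; ring

theorem fk_nonneg (k : ℕ) (x : ℂ) : 0 ≤ fk k x := by
  unfold fk
  exact mul_nonneg (by positivity) (sqrt_re_nonneg _)

theorem fk_sq (k : ℕ) (x : ℂ) : fk k x ^ 2 = hh (dilog (x ^ k)) / k ^ 2 := by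
  unfold fk
  rw [mul_pow, sqrt_re_sq]; ring

theorem fk_lt (j k : ℕ) (x : ℂ) (h : fk j x ^ 2 < fk k x ^ 2) : fk j x < fk k x :=
  lt_of_pow_lt_pow_left₀ 2 (fk_nonneg _ _) h

theorem hh_le (A : ℂ) : hh A ≤ ‖A‖ := by
  unfold hh
  linarith [Complex.re_le_norm A]

theorem hh_nonneg (A : ℂ) : 0 ≤ hh A := by
  unfold hh
  linarith [neg_le_of_abs_le (Complex.abs_re_le_norm A)]

theorem gk_le (x : ℂ) (hx : ‖x‖ < 1) (k : ℕ) (hk : 1 ≤ k) :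
    fk k x ^ 2 ≤ 5 / 3 * ‖x‖ ^ k / k ^ 2 := by
  rw [fk_sq]
  have : ‖x ^ k‖ ≤ 1 := by rw [norm_pow]; exact pow_le_one₀ (norm_nonneg _) hx.le
  have h2 := norm_dilog_le _ this
  rw [norm_pow] at h2
  gcongr
  exact (hh_le _).trans h2

theorem gk_le' (x : ℂ) (hx : ‖x‖ < 1) (k : ℕ) (hk : 1 ≤ k) (hre : (x ^ k).re ≤ 0) :
    fk k x ^ 2 ≤ 5 / 6 * ‖x‖ ^ k / k ^ 2 := by
  rw [fk_sq]
  have h0 : ‖x ^ k‖ < 1 := by rw [norm_pow]; exact pow_lt_one₀ (norm_nonneg _) hx (by omega)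
  have h2 := norm_dilog_le _ h0.le
  rw [norm_pow] at h2
  have h3 := dilog_re_nonpos _ h0 hre
  gcongr
  unfold hh
  linarith

theorem fk_ge4 (x : ℂ) (hx : ‖x‖ < 1) (hx0 : x ≠ 0) (k : ℕ) (hk : 4 ≤ k) :
    fk k x < max (fk 1 x) (fk 2 x) := by
  have hr : 0 < ‖x‖ := norm_pos_iff.2 hx0
  have hpk : ∀ j, j ≤ k → ‖x‖ ^ k ≤ ‖x‖ ^ j := fun j hj =>
    pow_le_pow_of_le_one hr.le hx.le hj
  have g1 : fk 1 x ^ 2 = hh (dilog x) := by rw [fk_sq]; simp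
  have g2 : fk 2 x ^ 2 = hh (dilog (x ^ 2)) / 4 := by rw [fk_sq]; norm_num
  have gk := gk_le x hx k (by omega)
  have hx2 : ‖x ^ 2‖ < 1 := by rw [norm_pow]; exact pow_lt_one₀ hr.le hx (by omega)
  have hx20 : x ^ 2 ≠ 0 := pow_ne_zero _ hx0
  have hkR : (4:ℝ) ≤ k := by exact_mod_cast hk
  have hn : ‖x‖ ^ 2 = x.re ^ 2 + x.im ^ 2 := by
    rw [Complex.sq_norm, Complex.normSq_apply]; ring
  have e2 : (x ^ 2).re = x.re ^ 2 - x.im ^ 2 := by rw [pow_two, Complex.mul_re]; ring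
  have e2i : (x ^ 2).im = 2 * x.re * x.im := by rw [pow_two, Complex.mul_im]; ring
  have e4 : (x ^ 4).re = (x ^ 2).re ^ 2 - (x ^ 2).im ^ 2 := by
    rw [show x ^ 4 = x ^ 2 * x ^ 2 by ring, Complex.mul_re]; ring
  have bnd : ∀ j, 1 ≤ j → j ≤ 2 → fk k x ^ 2 ≤ 5 / 48 * ‖x‖ ^ j := by
    intro j _ hj
    calc _ ≤ _ := gk
      _ ≤ 5 / 3 * ‖x‖ ^ j / 4 ^ 2 := by have := hpk j (by omega); gcongr
      _ = _ := by ring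
  have bnd5 : 5 ≤ k → ∀ j, 1 ≤ j → j ≤ 2 → fk k x ^ 2 ≤ 1 / 15 * ‖x‖ ^ j := by
    intro hk5 j _ hj
    have hkR : (5:ℝ) ≤ k := by exact_mod_cast hk5
    calc _ ≤ _ := gk
      _ ≤ 5 / 3 * ‖x‖ ^ j / 5 ^ 2 := by have := hpk j (by omega); gcongr
      _ = _ := by ring
  have bnd4 : k = 4 → (x ^ 4).re ≤ 0 → ∀ j, 1 ≤ j → j ≤ 2 → fk k x ^ 2 ≤ 5 / 96 * ‖x‖ ^ j := by
    intro hk4 hre j _ hj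
    subst hk4
    calc _ ≤ _ := gk_le' x hx 4 (by omega) hre
      _ ≤ 5 / 6 * ‖x‖ ^ j / 4 ^ 2 := by push_cast; have := hpk j (by omega); gcongr
      _ = _ := by ring
  by_cases c1 : -(1/2:ℝ) * ‖x‖ ≤ x.re
  · apply lt_max_of_lt_left
    apply fk_lt
    rw [g1]
    have := low2 x hx hx0 c1
    have := bnd 1 le_rfl (by norm_num)
    rw [pow_one] at this
    linarith
  push Not at c1
  by_cases c2 : (x ^ 2).re < 0
  · apply lt_max_of_lt_left
    apply fk_lt
    rw [g1]
    have h1 : -(0.7072:ℝ) * ‖x‖ ≤ x.re := by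
      have : x.re ^ 2 < (0.7072 * ‖x‖) ^ 2 := by nlinarith
      have := abs_lt_of_sq_lt_sq this (by positivity)
      linarith [(abs_lt.1 this).1]
    have := low1 x hx hx0 h1
    rcases eq_or_lt_of_le hk with h4 | h5
    · have hre : (x ^ 4).re ≤ 0 := by
        rw [e4, e2, e2i]
        rw [e2] at c2
        have : ‖x‖ ^ 2 ≤ 4 * x.re ^ 2 := by nlinarith
        rw [hn] at this
        nlinarith [mul_nonneg (sub_nonneg.2 this) (sub_nonneg.2 c2.le), sq_nonneg (x.re), sq_nonneg (x.im), sq_nonneg (x.re*x.im), sq_nonneg (x.re^2-x.im^2)]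
      have := bnd4 h4.symm hre 1 le_rfl (by norm_num)
      rw [pow_one] at this
      linarith
    · have := bnd5 h5 1 le_rfl (by norm_num)
      rw [pow_one] at this
      linarith
  push Not at c2
  apply lt_max_of_lt_right
  apply fk_lt
  rw [g2]
  have l3 := low3 (x^2) hx2 hx20 c2
  rw [norm_pow] at l3
  have hr2 : 0 < ‖x‖ ^ 2 := by positivity
  rcases eq_or_lt_of_le hk with h4 | h5
  · by_cases c4 : (x ^ 4).re ≤ 0
    · have := bnd4 h4.symm c4 2 (by norm_num) (by norm_num)
      linarith
    · push Not at c4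
      have h : 1/2 * ‖x ^ 2‖ ≤ (x ^ 2).re := by
        have hn2 : ‖x ^ 2‖ ^ 2 = (x^2).re ^ 2 + (x^2).im ^ 2 := by
          rw [Complex.sq_norm, Complex.normSq_apply]; ring
        rw [e4] at c4
        apply le_of_sq_le_sq _ c2
        nlinarith
      have := low4 (x^2) hx2 hx20 h
      rw [norm_pow] at this
      have := bnd 2 (by norm_num) (by norm_num)
      linarith
  · have := bnd5 h5 2 (by norm_num) (by norm_num)
    linarith

open Complex Filter

theorem fk_pos_slit (k : ℕ) (x : ℂ) (h : 0 < fk k x) : dilog (x ^ k) ∈ slitPlane := by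
  by_contra hc
  rw [Complex.mem_slitPlane_iff] at hc
  push Not at hc
  have h1 : ‖dilog (x ^ k)‖ = -(dilog (x ^ k)).re := by
    rw [← abs_of_nonpos hc.1, Complex.abs_re_eq_norm.2 hc.2]
  have h2 : fk k x ^ 2 = 0 := by
    rw [fk_sq]; unfold hh; rw [h1]; simp
  have := pow_pos h 2
  linarith

theorem zero_notMem_interior : (0 : ℂ) ∉ interior R2 := by
  intro h
  rw [mem_interior_iff_mem_nhds, Metric.mem_nhds_iff] at h
  obtain ⟨ε, hε, hsub⟩ := h
  set t : ℝ := min (ε / 2) (1 / 2) with ht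
  have ht0 : 0 < t := by positivity
  have ht1 : t ≤ 1 / 2 := min_le_right _ _
  have ht2 : t < ε := lt_of_le_of_lt (min_le_left _ _) (by linarith)
  have hnt : ‖(t : ℂ)‖ = t := by simp [abs_of_pos ht0]
  have hm : (t : ℂ) ∈ R2 := hsub (by rw [mem_ball_zero_iff, hnt]; exact ht2)
  obtain ⟨h1, h2, -⟩ := hm
  have h3 : fk 1 t ^ 2 ≤ fk 2 t ^ 2 := pow_le_pow_left₀ (fk_nonneg _ _) h2 2
  have h4 := gk_le t h1 2 (by norm_num)
  have h5 : fk 1 t ^ 2 = hh (dilog t) := by rw [fk_sq]; simp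
  have h6 := low4 t h1 (by exact_mod_cast ht0.ne') (by rw [hnt]; simp; linarith)
  rw [hnt] at h4 h6
  push_cast at h4
  nlinarith

theorem analyticAt_sq (k : ℕ) (hk : 1 ≤ k) (x : ℂ) (hx : ‖x‖ < 1) :
    AnalyticAt ℂ (fun z => dilog (z ^ k)) x := by
  have h1 : AnalyticAt ℂ dilog (x ^ k) := by
    apply dilog_differentiableOn.analyticAt
    apply Metric.isOpen_ball.mem_nhds
    rw [mem_ball_zero_iff, norm_pow]
    exact pow_lt_one₀ (norm_nonneg _) hx (by omega)
  have h2 : AnalyticAt ℂ (fun z : ℂ => z ^ k) x := by fun_prop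
  exact AnalyticAt.fun_comp (f := fun z : ℂ => z ^ k) h1 h2

theorem fk_strict (k : ℕ) (hk : k = 1 ∨ k = 3) (x : ℂ) (hx : ‖x‖ < 1) (hpos : 0 < fk 2 x)
    (hle : ∀ᶠ z in nhds x, fk k z ≤ fk 2 z) : fk k x < fk 2 x := by
  have hk1 : 1 ≤ k := by omega
  have hkc : (k : ℂ) ≠ 0 := by exact_mod_cast (by omega : k ≠ 0)
  refine lt_of_le_of_ne hle.self_of_nhds fun heq => ?_
  have aa : AnalyticAt ℂ (fun z => 1 / (k:ℂ) * (dilog (z ^ k)) ^ (1 / 2 : ℂ)) x :=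
    analyticAt_const.mul ((analyticAt_sq k hk1 x hx).cpow analyticAt_const
      (fk_pos_slit k x (heq ▸ hpos)))
  have ab : AnalyticAt ℂ (fun z => 1 / ((2:ℕ):ℂ) * (dilog (z ^ 2)) ^ (1 / 2 : ℂ)) x :=
    analyticAt_const.mul ((analyticAt_sq 2 (by norm_num) x hx).cpow analyticAt_const
      (fk_pos_slit 2 x hpos))
  have hre : ∀ (j : ℕ) z, (1 / (j:ℂ) * (dilog (z ^ j)) ^ (1 / 2 : ℂ)).re = fk j z := by
    intro j z
    unfold fk
    rw [show (1 / (j:ℂ)) = ((1 / (j:ℝ) : ℝ) : ℂ) by push_cast; rfl, Complex.re_ofReal_mul]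
  rcases (aa.sub ab).eventually_constant_or_nhds_le_map_nhds with hc | hc
  · simp only [Pi.sub_apply] at hc
    set c := 1 / (k:ℂ) * (dilog (x ^ k)) ^ (1 / 2 : ℂ) - 1 / ((2:ℕ):ℂ) * (dilog (x ^ 2)) ^ (1 / 2 : ℂ)
    have hev : (fun z => (dilog (z ^ k) / k ^ 2 - dilog (z ^ 2) / 4 - c ^ 2) ^ 2) =ᶠ[nhds x]
        (fun z => 4 * c ^ 2 * (dilog (z ^ 2) / 4)) := by
      filter_upwards [hc] with z hz
      have e1 := sqrt_sq (dilog (z ^ k))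
      have e2 := sqrt_sq (dilog (z ^ 2))
      set u := (dilog (z ^ k)) ^ (1 / 2 : ℂ)
      set v := (dilog (z ^ 2)) ^ (1 / 2 : ℂ)
      rw [← e1, ← e2, ← hz]
      push_cast
      field_simp
      ring
    have hball : ∀ z ∈ Metric.ball (0:ℂ) 1, ‖z‖ < 1 := fun z hz => mem_ball_zero_iff.1 hz
    have hE := AnalyticOnNhd.eqOn_of_preconnected_of_eventuallyEq
      (U := Metric.ball (0:ℂ) 1) (f := fun z => (dilog (z ^ k) / k ^ 2 - dilog (z ^ 2) / 4 - c ^ 2) ^ 2)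
      (g := fun z => 4 * c ^ 2 * (dilog (z ^ 2) / 4))
      (fun z hz => ((((analyticAt_sq k hk1 z (hball z hz)).div_const).sub
        ((analyticAt_sq 2 (by norm_num) z (hball z hz)).div_const)).sub analyticAt_const).pow 2)
      (fun z hz => analyticAt_const.mul ((analyticAt_sq 2 (by norm_num) z (hball z hz)).div_const))
      (convex_ball _ _).isPreconnected (mem_ball_zero_iff.2 hx) hev
    have d0 : dilog 0 = 0 := by simp [dilog]
    have hc0 : c = 0 := by
      have := hE (Metric.mem_ball_self one_pos)
      simp only [zero_pow (by omega : k ≠ 0), zero_pow (by norm_num : (2:ℕ) ≠ 0), d0] at this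
      simpa using this
    have hh2 : dilog ((1/2:ℂ) ^ k) / k ^ 2 = dilog ((1/2) ^ 2) / 4 := by
      have := hE (x := (1/2:ℂ)) (mem_ball_zero_iff.2 (by norm_num))
      simp only [hc0] at this
      have h2 : (dilog ((1/2:ℂ) ^ k) / k ^ 2 - dilog ((1/2) ^ 2) / 4) ^ 2 = 0 := by
        rw [zero_pow two_ne_zero, sub_zero] at this
        rw [this]; ring
      exact sub_eq_zero.1 (pow_eq_zero_iff two_ne_zero |>.1 h2)
    rcases hk with rfl | rfl
    · have l := low4 (1/2) (by norm_num) (by norm_num) (by norm_num)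
      have u := norm_dilog_le (1/4) (by norm_num)
      have l' := hh_le (dilog (1/2))
      norm_num at hh2 l u l'
      rw [hh2, norm_div] at l'
      norm_num at l'
      rw [hh2] at l
      linarith
    · have l := low4 (1/4) (by norm_num) (by norm_num) (by norm_num)
      have u := norm_dilog_le (1/8) (by norm_num)
      have l' := hh_le (dilog (1/4))
      norm_num at hh2 l u l'
      have : ‖dilog (1/8) / 9‖ = ‖dilog (1/4) / 4‖ := by rw [hh2]
      rw [norm_div, norm_div] at this
      norm_num at this
      linarith
  · simp only [Pi.sub_apply] at hc
    have hS : {w : ℂ | w.re ≤ 0} ∈ map ((fun z => 1 / (k:ℂ) * (dilog (z ^ k)) ^ (1 / 2 : ℂ)) -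
        fun z => 1 / ((2:ℕ):ℂ) * (dilog (z ^ 2)) ^ (1 / 2 : ℂ)) (nhds x) := by
      rw [mem_map]
      filter_upwards [hle] with z hz
      simp only [Set.mem_preimage, Pi.sub_apply, Set.mem_ofPred_eq, Complex.sub_re, hre]
      linarith
    have hS2 := hc hS
    set c := 1 / (k:ℂ) * (dilog (x ^ k)) ^ (1 / 2 : ℂ) - 1 / ((2:ℕ):ℂ) * (dilog (x ^ 2)) ^ (1 / 2 : ℂ) with hcdef
    have hcre : c.re = 0 := by rw [hcdef, Complex.sub_re, hre, hre, heq, sub_self]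
    rw [Metric.mem_nhds_iff] at hS2
    obtain ⟨ε, hε, hsub⟩ := hS2
    have : c + ((ε/2:ℝ):ℂ) ∈ Metric.ball c ε := by
      rw [mem_ball_iff_norm, add_sub_cancel_left, Complex.norm_real, Real.norm_of_nonneg (by positivity)]
      linarith
    have := hsub this
    simp only [Set.mem_ofPred_eq, Complex.add_re, Complex.ofReal_re, hcre] at this
    linarith

/-- All consequences of membership in the interior of `R2` needed later. -/
theorem interior_facts (x : ℂ) (hx : x ∈ interior R2) :
    ‖x‖ < 1 ∧ x ≠ 0 ∧ 0 < fk 2 x ∧ ∃ c, 0 ≤ c ∧ c < fk 2 x ∧ ∀ k, 1 ≤ k → k ≠ 2 → fk k x ≤ c := by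
  have hm := interior_subset hx
  have hx1 : ‖x‖ < 1 := hm.1
  have hx0 : x ≠ 0 := fun h => zero_notMem_interior (h ▸ hx)
  have h4 : ∀ k, 4 ≤ k → fk k x < fk 2 x := by
    intro k hk
    have := fk_ge4 x hx1 hx0 k hk
    rwa [max_eq_right hm.2.1] at this
  have hpos : 0 < fk 2 x := (fk_nonneg 4 x).trans_lt (h4 4 le_rfl)
  have hnh : ∀ᶠ z in nhds x, z ∈ R2 := mem_interior_iff_mem_nhds.1 hx
  have h1 := fk_strict 1 (Or.inl rfl) x hx1 hpos (hnh.mono fun z hz => hz.2.1)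
  have h3 := fk_strict 3 (Or.inr rfl) x hx1 hpos (hnh.mono fun z hz => hz.2.2)
  have hall : ∀ k, 1 ≤ k → k ≠ 2 → fk k x < fk 2 x := by
    intro k hk hk2
    rcases (by omega : k = 1 ∨ k = 3 ∨ 4 ≤ k) with rfl | rfl | h
    · exact h1
    · exact h3
    · exact h4 k h
  refine ⟨hx1, hx0, hpos, ?_⟩
  have hlim : Tendsto (fun k : ℕ => 5 / 3 * ‖x‖ ^ k) atTop (nhds (5/3 * 0)) :=
    (tendsto_pow_atTop_nhds_zero_of_lt_one (norm_nonneg _) hx1).const_mul _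
  have hev : ∀ᶠ k : ℕ in atTop, fk k x ≤ fk 2 x / 2 := by
    have : 5/3 * (0:ℝ) < (fk 2 x / 2) ^ 2 := by rw [mul_zero]; positivity
    filter_upwards [hlim.eventually (gt_mem_nhds this), eventually_ge_atTop 1] with k hk hk1
    have := gk_le x hx1 k hk1
    have hk1' : (1:ℝ) ≤ k := by exact_mod_cast hk1
    have h2 : 5 / 3 * ‖x‖ ^ k / k ^ 2 ≤ 5 / 3 * ‖x‖ ^ k :=
      div_le_self (by positivity) (one_le_pow₀ hk1')
    exact le_of_sq_le_sq (by linarith) (by positivity)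
  obtain ⟨M, hM⟩ := eventually_atTop.1 hev
  obtain ⟨c, hc, hcm⟩ : ∃ c, c < fk 2 x ∧ ∀ k ∈ (Finset.range M).filter (fun k => 1 ≤ k ∧ k ≠ 2), fk k x ≤ c := by
    by_cases hne : ((Finset.range M).filter (fun k => 1 ≤ k ∧ k ≠ 2)).Nonempty
    · obtain ⟨k0, hk0, hmax⟩ := Finset.exists_max_image _ (fun k => fk k x) hne
      simp only [Finset.mem_filter] at hk0
      exact ⟨fk k0 x, hall _ hk0.2.1 hk0.2.2, hmax⟩
    · rw [Finset.not_nonempty_iff_eq_empty] at hne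
      exact ⟨0, hpos, by simp [hne]⟩
  refine ⟨max c (fk 2 x / 2), le_max_of_le_right (by linarith), max_lt hc (by linarith), ?_⟩
  intro k hk hk2
  by_cases hkM : k < M
  · exact le_max_of_le_left (hcm k (by simp [hkM, hk, hk2]))
  · exact le_max_of_le_right (hM k (by omega))

open Complex Filter Topology

/-- from `N (e^u - 1) → γ`, `u → 0` deduce `N u → γ`. -/
theorem lim_of_exp {ι : Type*} {l : Filter ι} (N : ι → ℂ) (u : ι → ℂ) (γ : ℂ)
    (hu : Tendsto u l (𝓝 0)) (hu0 : ∀ᶠ i in l, u i ≠ 0)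
    (h : Tendsto (fun i => N i * (exp (u i) - 1)) l (𝓝 γ)) :
    Tendsto (fun i => N i * u i) l (𝓝 γ) := by
  have h1 := (hasDerivAt_exp (0:ℂ)).tendsto_slope_zero
  have h2 : Tendsto u l (𝓝[≠] 0) := tendsto_nhdsWithin_iff.2 ⟨hu, hu0⟩
  have h3 := h1.comp h2
  simp only [Function.comp_def, zero_add, exp_zero, smul_eq_mul] at h3
  have h4 := h.div h3 one_ne_zero
  rw [div_one] at h4
  refine h4.congr' ?_
  have h5 : ∀ᶠ i in l, (u i)⁻¹ * (exp (u i) - 1) ≠ 0 := h3.eventually_ne one_ne_zero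
  filter_upwards [hu0, h5] with i h0 h1
  have : exp (u i) - 1 ≠ 0 := fun h => h1 (by rw [h, mul_zero])
  simp only [Pi.div_apply]
  field_simp

theorem lim_exp_real {ι : Type*} {l : Filter ι} (N s : ι → ℝ) (s0 : ℝ)
    (hN : Tendsto N l atTop) (hs : Tendsto s l (𝓝 s0)) (hs0 : ∀ᶠ i in l, s i ≠ 0) :
    Tendsto (fun i => N i * (Real.exp (s i / N i) - 1)) l (𝓝 s0) := by
  have h1 := (Real.hasDerivAt_exp (0:ℝ)).tendsto_slope_zero
  have hN0 : ∀ᶠ i in l, N i ≠ 0 := hN.eventually_ne_atTop 0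
  have h2 : Tendsto (fun i => s i / N i) l (𝓝[≠] 0) := by
    refine tendsto_nhdsWithin_iff.2 ⟨hs.div_atTop hN, ?_⟩
    filter_upwards [hs0, hN0] with i h h' using div_ne_zero h h'
  have h3 := h1.comp h2
  simp only [Function.comp_def, zero_add, Real.exp_zero, smul_eq_mul] at h3
  have h4 := hs.mul h3
  rw [mul_one] at h4
  refine h4.congr' ?_
  filter_upwards [hs0, hN0] with i h h'
  field_simp

theorem re_div_le (A : ℂ) (Z : ℂ) (hZ : 0 < Z.re) : (A / Z).re ≤ hh A / Z.re := by
  have h := Complex.re_le_norm (A * (starRingEnd ℂ) (Z ^ 2))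
  have hn : ‖Z ^ 2‖ = Z.re ^ 2 + Z.im ^ 2 := by
    rw [norm_pow, Complex.sq_norm, Complex.normSq_apply]; ring
  rw [norm_mul, Complex.norm_conj, hn] at h
  have e : (A * (starRingEnd ℂ) (Z ^ 2)).re = A.re * (Z.re ^ 2 - Z.im ^ 2) + A.im * (2 * Z.re * Z.im) := by
    rw [Complex.mul_re, Complex.conj_re, Complex.conj_im, pow_two, Complex.mul_re, Complex.mul_im]; ring
  rw [e] at h
  have hp : 0 < Z.re ^ 2 + Z.im ^ 2 := by positivity
  have e2 : (A / Z).re = (A.re * Z.re + A.im * Z.im) / (Z.re ^ 2 + Z.im ^ 2) := by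
    rw [Complex.div_re, Complex.normSq_apply]; ring_nf
  rw [e2, div_le_div_iff₀ hp hZ]
  unfold hh
  nlinarith

/-- The bound on one summand. -/
theorem norm_bk_le (N σ y : ℝ) (hN : 0 < N) (hσ : 0 < σ) (k : ℕ) (hk : 1 ≤ k) (Q : ℂ)
    (hQ : Q = -exp (-(((σ:ℂ) + y * I) / (N:ℂ)))) :
    ‖Q ^ k / (1 - Q ^ k) / N‖ ≤ 1 / (k * σ) := by
  have hk' : (0:ℝ) < k := by exact_mod_cast hk
  have hQn : ‖Q‖ = Real.exp (-(σ / N)) := by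
    rw [hQ, norm_neg, Complex.norm_exp]
    congr 1
    rw [Complex.neg_re, Complex.div_ofReal_re]
    simp
  have hE : ‖Q ^ k‖ = Real.exp (-(k * σ / N)) := by
    rw [norm_pow, hQn, ← Real.exp_nat_mul]; congr 1; ring
  have hlt : Real.exp (-(k * σ / N)) < 1 := by
    rw [Real.exp_lt_one_iff]; have : 0 < k * σ / N := by positivity
    linarith
  have h1 : 1 - Real.exp (-(k * σ / N)) ≤ ‖1 - Q ^ k‖ := by
    have := norm_sub_norm_le (1:ℂ) (Q ^ k)
    rw [hE, norm_one] at this; exact this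
  rw [norm_div, norm_div, hE, Complex.norm_real, Real.norm_of_nonneg hN.le]
  have h2 : Real.exp (-(k * σ / N)) * (k * σ / N) ≤ 1 - Real.exp (-(k * σ / N)) := by
    have h3 := Real.add_one_le_exp (k * σ / N)
    have h4 : Real.exp (-(k * σ / N)) * Real.exp (k * σ / N) = 1 := by
      rw [← Real.exp_add]; simp
    nlinarith [Real.exp_pos (-(k * σ / N))]
  rw [div_div, div_le_div_iff₀ (mul_pos (by linarith) hN) (by positivity)]
  · have := h2.trans h1
    calc Real.exp (-(k * σ / N)) * (k * σ) = Real.exp (-(k * σ / N)) * (k * σ / N) * N := by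
          field_simp
      _ ≤ ‖1 - Q ^ k‖ * N := by gcongr
      _ = _ := by ring

open Complex Filter Topology

theorem ultra_conv {ι : Type*} (U : Ultrafilter ι) (f : ι → ℂ) (C : ℝ) (h : ∀ᶠ i in (U : Filter ι), ‖f i‖ ≤ C) :
    ∃ a, Tendsto f U (𝓝 a) := by
  have hc := isCompact_closedBall (0:ℂ) C
  obtain ⟨a, -, ha⟩ := hc.ultrafilter_le_nhds (U.map f) (by
    rw [le_principal_iff]
    show f ⁻¹' _ ∈ (U : Filter ι)
    filter_upwards [h] with i hi
    simpa using hi)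
  exact ⟨a, ha⟩

theorem ultra_lim {ι : Type*} (U : Ultrafilter ι) (N σ y : ι → ℝ) (x : ι → ℂ) (x0 : ℂ) (σ0 : ℝ)
    (hN : Tendsto N U atTop) (hσ : Tendsto σ U (𝓝 σ0)) (hσ0 : 0 < σ0) (hx : Tendsto x U (𝓝 x0))
    (hx0 : ‖x0‖ < 1) (hy : ∀ᶠ i in (U : Filter ι), |y i| ≤ Real.pi * N i) (c : ℝ)
    (hc0 : 0 ≤ c) (hc : ∀ k, 1 ≤ k → k ≠ 2 → fk k x0 ≤ c) :
    ∃ L : ℂ, Tendsto (fun i => HH (x i) (-exp (-(((σ i:ℂ) + y i * I) / (N i:ℂ)))) / (N i : ℂ)) U (𝓝 L) ∧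
      (L.re ≤ c ^ 2 / σ0 ∨ ∃ W0 : ℂ, Tendsto (fun i => (σ i : ℂ) + y i * I) U (𝓝 W0) ∧
        L = dilog (x0 ^ 2) / 4 / W0) := by
  set Q : ι → ℂ := fun i => -exp (-(((σ i:ℂ) + y i * I) / (N i:ℂ))) with hQ
  have hNpos : ∀ᶠ i in (U : Filter ι), 0 < N i := hN.eventually_gt_atTop 0
  have hσpos : ∀ᶠ i in (U : Filter ι), σ0 / 2 < σ i := hσ.eventually (lt_mem_nhds (by linarith))
  -- termwise bounds
  have hb : ∀ᶠ i in (U : Filter ι), ∀ k : ℕ, 1 ≤ k → ‖Q i ^ k / (1 - Q i ^ k) / N i‖ ≤ 2 / σ0 := by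
    filter_upwards [hNpos, hσpos] with i h1 h2 k hk
    have hk' : (1:ℝ) ≤ k := by exact_mod_cast hk
    refine (norm_bk_le (N i) (σ i) (y i) h1 (by linarith) k hk (Q i) rfl).trans ?_
    rw [div_le_div_iff₀ (by nlinarith) hσ0]
    nlinarith
  have hβ' : ∀ k : ℕ, ∃ β, 1 ≤ k → Tendsto (fun i => Q i ^ k / (1 - Q i ^ k) / N i) U (𝓝 β) := by
    intro k
    by_cases hk : 1 ≤ k
    · obtain ⟨a, ha⟩ := ultra_conv U (fun i => Q i ^ k / (1 - Q i ^ k) / N i) (2 / σ0)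
        (hb.mono fun i hi => hi k hk)
      exact ⟨a, fun _ => ha⟩
    · exact ⟨0, fun h => absurd h hk⟩
  choose β hβ using hβ'
  set ρ : ℝ := (1 + ‖x0‖) / 2 with hρ
  have hρ1 : ρ < 1 := by linarith
  have hρ0 : 0 ≤ ρ := by positivity
  have hxρ : ∀ᶠ i in (U : Filter ι), ‖x i‖ < ρ := hx.norm.eventually (gt_mem_nhds (by linarith))
  have hlim : Tendsto (fun i => HH (x i) (Q i) / (N i : ℂ)) U (𝓝 (∑' k : ℕ, x0 ^ k / k * β k)) := by
    have : ∀ i, HH (x i) (Q i) / (N i : ℂ) = ∑' k : ℕ, x i ^ k / k * (Q i ^ k / (1 - Q i ^ k) / N i) := by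
      intro i
      unfold HH
      rw [← tsum_div_const]
      congr 1; ext k; ring
    simp_rw [this]
    refine tendsto_tsum_of_dominated_convergence (bound := fun k => ρ ^ k * (2 / σ0))
      ((summable_geometric_of_lt_one hρ0 hρ1).mul_right _) ?_ ?_
    · intro k
      rcases Nat.eq_zero_or_pos k with rfl | hk
      · simp
      · exact ((hx.pow k).div_const _).mul (hβ k hk)
    · filter_upwards [hb, hxρ] with i h1 h2 k
      rcases Nat.eq_zero_or_pos k with rfl | hk
      · simp; positivity
      · rw [norm_mul]
        gcongr
        · exact (norm_pow_div_le _ _).trans (by gcongr)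
        · exact h1 k hk
  refine ⟨_, hlim, ?_⟩
  -- the inverses
  set P : ι → ℂ := fun i => (Q i)⁻¹ with hP
  have hQ0 : ∀ i, Q i ≠ 0 := fun i => neg_ne_zero.2 (exp_ne_zero _)
  have hP0 : ∀ i, P i ≠ 0 := fun i => inv_ne_zero (hQ0 i)
  have hPe : ∀ i, P i = -exp (((σ i:ℂ) + y i * I) / (N i:ℂ)) := by
    intro i
    simp only [hP, hQ, inv_neg, ← exp_neg, neg_neg]
  set d : ℕ → ι → ℂ := fun k i => N i * (P i ^ k - 1) with hd
  have hbd : ∀ k i, Q i ^ k / (1 - Q i ^ k) / N i = (d k i)⁻¹ := by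
    intro k i
    simp only [hd, hP]
    have : (Q i)⁻¹ ^ k - 1 = (1 - Q i ^ k) / Q i ^ k := by
      have := pow_ne_zero k (hQ0 i)
      rw [inv_pow]
      field_simp
    rw [this, mul_inv, inv_div]
    ring
  have hNinv : Tendsto (fun i => ((N i : ℂ))⁻¹) U (𝓝 0) := by
    have := hN.inv_tendsto_atTop
    have h2 := (Complex.continuous_ofReal.tendsto 0).comp this
    simpa [Function.comp_def] using h2
  -- convergence of `d` implies `P^k → 1`
  have hPk : ∀ k γ, Tendsto (d k) U (𝓝 γ) → Tendsto (fun i => P i ^ k) U (𝓝 1) := by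
    intro k γ h
    have h1 := (h.mul hNinv).const_add 1
    rw [mul_zero, add_zero] at h1
    refine h1.congr' ?_
    filter_upwards [hNpos] with i hi
    have : (N i : ℂ) ≠ 0 := by exact_mod_cast hi.ne'
    simp only [hd]
    field_simp
    ring
  have hadd : ∀ j k γ γ', Tendsto (d j) U (𝓝 γ) → Tendsto (d k) U (𝓝 γ') →
      Tendsto (d (j + k)) U (𝓝 (γ + γ')) := by
    intro j k γ γ' h h'
    have := h.add ((hPk j γ h).mul h')
    rw [one_mul] at this
    refine this.congr fun i => ?_
    simp only [hd]; ring
  have hsub : ∀ j k γ γ', Tendsto (d j) U (𝓝 γ) → Tendsto (d (j + k)) U (𝓝 γ') →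
      Tendsto (d k) U (𝓝 (γ' - γ)) := by
    intro j k γ γ' h h'
    have := (h'.sub h).div (hPk j γ h) one_ne_zero
    rw [div_one] at this
    refine this.congr fun i => ?_
    have := pow_ne_zero j (hP0 i)
    simp only [hd, Pi.div_apply]
    field_simp
    ring
  have hmul : ∀ m γ, Tendsto (d m) U (𝓝 γ) → ∀ j : ℕ, Tendsto (d (m * j)) U (𝓝 (j * γ)) := by
    intro m γ h j
    induction j with
    | zero => simp [hd]
    | succ j ih =>
      have := hadd _ _ _ _ ih h
      rw [mul_add, mul_one]
      convert this using 2
      push_cast; ring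
  have hre : ∀ k γ, 1 ≤ k → Tendsto (d k) U (𝓝 γ) → γ.re = k * σ0 := by
    intro k γ hk h
    have hk' : (0:ℝ) < k := by exact_mod_cast hk
    have h1 : Tendsto (fun i => 2 * (d k i).re + ‖d k i‖ ^ 2 * (N i)⁻¹) U (𝓝 (2 * γ.re + ‖γ‖ ^ 2 * 0)) :=
      (((Complex.continuous_re.tendsto γ).comp h).const_mul 2).add ((h.norm.pow 2).mul hN.inv_tendsto_atTop)
    have h2 := lim_exp_real N (fun i => 2 * k * σ i) (2 * k * σ0) hN (hσ.const_mul _) (by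
      filter_upwards [hσpos] with i hi
      have : 0 < σ i := by linarith
      positivity)
    have h3 : 2 * γ.re + ‖γ‖ ^ 2 * 0 = 2 * k * σ0 := by
      refine tendsto_nhds_unique (h1.congr' ?_) h2
      filter_upwards [hNpos] with i hi
      have hPn : ‖P i ^ k‖ ^ 2 = Real.exp (2 * k * σ i / N i) := by
        rw [hPe, norm_pow, norm_neg, Complex.norm_exp, ← pow_mul, ← Real.exp_nat_mul]
        congr 1
        rw [Complex.div_ofReal_re]
        push_cast
        simp
        ring
      rw [← hPn]
      have e1 : ‖P i ^ k‖ ^ 2 = (P i ^ k).re ^ 2 + (P i ^ k).im ^ 2 := by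
        rw [Complex.sq_norm, Complex.normSq_apply]; ring
      have e2 : ‖d k i‖ ^ 2 = N i ^ 2 * (((P i ^ k).re - 1) ^ 2 + (P i ^ k).im ^ 2) := by
        simp only [hd]
        rw [norm_mul, mul_pow, Complex.sq_norm (P i ^ k - 1), Complex.normSq_apply, Complex.norm_real,
          Real.norm_eq_abs, sq_abs, Complex.sub_re, Complex.sub_im, Complex.one_re, Complex.one_im]
        ring
      have e3 : (d k i).re = N i * ((P i ^ k).re - 1) := by
        simp only [hd]
        rw [Complex.re_ofReal_mul]; simp
      rw [e1, e2, e3]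
      field_simp
      ring
    linarith
  have hne : ∀ k γ, 1 ≤ k → Tendsto (d k) U (𝓝 γ) → γ ≠ 0 := by
    intro k γ hk h h0
    have := hre k γ hk h
    rw [h0] at this
    have hk' : (0:ℝ) < k := by exact_mod_cast hk
    simp at this
    rcases this with h | h
    · omega
    · linarith
  have hβd : ∀ k γ, 1 ≤ k → Tendsto (d k) U (𝓝 γ) → β k = γ⁻¹ := by
    intro k γ hk h
    refine tendsto_nhds_unique (hβ k hk) ?_
    simp_rw [hbd]
    exact h.inv₀ (hne k γ hk h)
  have hdβ : ∀ k, 1 ≤ k → β k ≠ 0 → Tendsto (d k) U (𝓝 (β k)⁻¹) := by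
    intro k hk h
    have := (hβ k hk).inv₀ h
    simp_rw [hbd, inv_inv] at this
    exact this
  by_cases hS : ∃ m, 1 ≤ m ∧ ∃ γ, Tendsto (d m) U (𝓝 γ)
  swap
  · left
    have : ∀ k : ℕ, x0 ^ k / k * β k = 0 := by
      intro k
      rcases Nat.eq_zero_or_pos k with rfl | hk
      · simp
      · have : β k = 0 := by
          by_contra h
          exact hS ⟨k, hk, _, hdβ k hk h⟩
        simp [this]
    simp_rw [this]
    simp
    positivity
  classical
  set m := Nat.find hS with hm
  obtain ⟨hm1, γ, hγ⟩ := Nat.find_spec hS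
  rw [← hm] at hm1 hγ
  have hmin : ∀ r γ', 1 ≤ r → Tendsto (d r) U (𝓝 γ') → m ≤ r := fun r γ' h1 h2 =>
    Nat.find_min' hS ⟨h1, γ', h2⟩
  have hγ0 := hne m γ hm1 hγ
  have hdvd : ∀ k, 1 ≤ k → β k ≠ 0 → m ∣ k := by
    intro k hk h
    have h1 := hdβ k hk h
    have h2 := hmul m γ hγ (k / m)
    rw [← Nat.div_add_mod k m] at h1
    have h3 := hsub _ _ _ _ h2 h1
    by_contra hnd
    have hr : 1 ≤ k % m := Nat.pos_of_ne_zero fun h0 => hnd (Nat.dvd_of_mod_eq_zero h0)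
    have := hmin _ _ hr h3
    have := Nat.mod_lt k (by omega : 0 < m)
    omega
  have hm0 : (m : ℂ) ≠ 0 := by exact_mod_cast (by omega : m ≠ 0)
  have hsum : ∑' k : ℕ, x0 ^ k / k * β k = dilog (x0 ^ m) / (m * γ) := by
    have hinj : Function.Injective (fun j : ℕ => m * (j + 1)) := by
      intro a b h
      simpa [show m ≠ 0 by omega] using h
    rw [← hinj.tsum_eq]
    · unfold dilog
      rw [← tsum_div_const]
      congr 1; ext j
      have hj : (j : ℂ) + 1 ≠ 0 := by exact_mod_cast Nat.succ_ne_zero j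
      rw [hβd (m * (j + 1)) _ (Nat.mul_pos hm1 (Nat.succ_pos j)) (hmul m γ hγ (j + 1)), pow_mul]
      push_cast
      field_simp
    · intro k hk
      rw [Function.mem_support] at hk
      have hk1 : 1 ≤ k := by
        rcases Nat.eq_zero_or_pos k with rfl | h
        · simp at hk
        · exact h
      obtain ⟨j, rfl⟩ := hdvd k hk1 (right_ne_zero_of_mul hk)
      refine ⟨j - 1, ?_⟩
      have : 1 ≤ j := by
        rcases Nat.eq_zero_or_pos j with rfl | h
        · omega
        · exact h
      show m * (j - 1 + 1) = m * j
      rw [Nat.sub_add_cancel this]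
  rw [hsum]
  have hγre := hre m γ hm1 hγ
  have hmR : (0:ℝ) < m := by exact_mod_cast hm1
  by_cases hm2 : m = 2
  swap
  · left
    have e : dilog (x0 ^ m) / (m * γ) = (dilog (x0 ^ m) / ((m:ℝ):ℂ)) / γ := by
      push_cast; field_simp
    rw [e]
    have h1 := re_div_le (dilog (x0 ^ m) / ((m:ℝ):ℂ)) γ (by rw [hγre]; positivity)
    have e2 : hh (dilog (x0 ^ m) / ((m:ℝ):ℂ)) = hh (dilog (x0 ^ m)) / m := by
      unfold hh
      rw [norm_div, Complex.norm_real, Real.norm_of_nonneg hmR.le, Complex.div_ofReal_re]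
      ring
    rw [e2, hγre] at h1
    have h2 := fk_sq m x0
    have h3 : fk m x0 ^ 2 ≤ c ^ 2 := pow_le_pow_left₀ (fk_nonneg _ _) (hc m hm1 hm2) 2
    refine h1.trans ?_
    calc hh (dilog (x0 ^ m)) / m / (m * σ0) = fk m x0 ^ 2 / σ0 := by rw [h2]; field_simp
      _ ≤ _ := by gcongr
  · right
    rw [hm2] at hγ
    refine ⟨γ / 2, ?_, ?_⟩
    swap
    · rw [hm2]; push_cast; field_simp; norm_num
    -- limit of u = W/N
    set u : ι → ℂ := fun i => ((σ i:ℂ) + y i * I) / (N i:ℂ) with hu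
    have hure : ∀ i, (u i).re = σ i / N i := by
      intro i; simp only [hu]; rw [Complex.div_ofReal_re]; simp
    have huim : ∀ i, (u i).im = y i / N i := by
      intro i; simp only [hu]; rw [Complex.div_ofReal_im]; simp
    have hur : Tendsto (fun i => (u i).re) U (𝓝 0) := by
      simp_rw [hure]; exact hσ.div_atTop hN
    have hui : ∀ᶠ i in (U : Filter ι), |(u i).im| ≤ Real.pi := by
      filter_upwards [hy, hNpos] with i h1 h2
      rw [huim, abs_div, abs_of_pos h2, div_le_iff₀ h2]
      exact h1
    obtain ⟨u0, hu0⟩ := ultra_conv U u (1 + Real.pi) (by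
      filter_upwards [hui, hur.eventually (Metric.ball_mem_nhds 0 one_pos)] with i h1 h2
      rw [Real.dist_0_eq_abs] at h2
      have := Complex.norm_le_abs_re_add_abs_im (u i)
      linarith)
    have hu0re : u0.re = 0 :=
      tendsto_nhds_unique ((Complex.continuous_re.tendsto u0).comp hu0) hur
    have hu0im : |u0.im| ≤ Real.pi := le_of_tendsto
      (((Complex.continuous_im.tendsto u0).comp hu0).abs) hui
    have hE : Tendsto (fun i => exp (u i)) U (𝓝 (exp u0)) := (continuous_exp.tendsto u0).comp hu0
    have hPu : ∀ i, P i = - exp (u i) := hPe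
    have hsq : (exp u0) ^ 2 = 1 := by
      refine tendsto_nhds_unique (hE.pow 2) ((hPk 2 γ hγ).congr fun i => ?_)
      rw [hPu]; ring
    have hE1 : exp u0 = 1 := by
      rcases mul_self_eq_one_iff.1 (by rwa [pow_two] at hsq) with h | h
      · exact h
      · exfalso
        -- then `d 1` converges
        have h1 : Tendsto (fun i => P i + 1) U (𝓝 2) := by
          have := hE.neg.add_const 1
          rw [h] at this
          convert this using 2
          · rw [hPu]
          · norm_num
        have h2 := hγ.div h1 two_ne_zero
        have h3 : Tendsto (d 1) U (𝓝 (γ / 2)) := by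
          refine h2.congr' ?_
          filter_upwards [h1.eventually_ne two_ne_zero] with i hi
          simp only [Pi.div_apply, hd]
          field_simp
          ring
        have := hmin 1 _ le_rfl h3
        omega
    have hu00 : u0 = 0 := by
      apply Complex.ext hu0re
      obtain ⟨n, hn⟩ := Complex.exp_eq_one_iff.1 hE1
      have him : u0.im = n * (2 * Real.pi) := by rw [hn]; simp
      rw [him, abs_mul, abs_of_pos Real.two_pi_pos] at hu0im
      have : |(n:ℝ)| < 1 := by nlinarith [Real.pi_pos]
      have hn0 : n = 0 := by
        have : |n| < 1 := by exact_mod_cast this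
        exact Int.abs_lt_one_iff.1 this
      rw [him, hn0]; simp
    rw [hE1] at hE
    rw [hu00] at hu0
    have h2 := hγ.div (hE.add_const 1) (by norm_num : (1:ℂ) + 1 ≠ 0)
    rw [show (1:ℂ) + 1 = 2 by norm_num] at h2
    have h3 : Tendsto (fun i => (N i : ℂ) * (exp (u i) - 1)) U (𝓝 (γ / 2)) := by
      refine h2.congr' ?_
      have h4 := (hE.add_const 1).eventually_ne (by norm_num : (1:ℂ) + 1 ≠ 0)
      filter_upwards [h4] with i hi
      simp only [Pi.div_apply, hd, hPu]
      field_simp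
      ring
    have h4 := lim_of_exp (fun i => (N i : ℂ)) u _ hu0 (by
      filter_upwards [hNpos, hσpos] with i h1 h2 h0
      have := hure i
      rw [h0] at this
      have h3 : 0 < σ i / N i := div_pos (by linarith) h1
      rw [Complex.zero_re] at this
      linarith) h3
    refine h4.congr' ?_
    filter_upwards [hNpos] with i hi
    have : (N i : ℂ) ≠ 0 := by exact_mod_cast hi.ne'
    simp only [hu]
    field_simp

open Complex Filter Topology

theorem saddle_id (w W : ℂ) (hW : W ≠ 0) : w ^ 2 / W = 2 * w - W + (W - w) ^ 2 / W := by
  field_simp; ring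

theorem re_saddle (w : ℂ) (τ : ℝ) (hw : 0 < w.re) :
    ((τ * I) ^ 2 / (w + τ * I)).re = - (τ ^ 2 * w.re / ‖w + τ * I‖ ^ 2) := by
  have e : ((τ:ℂ) * I) ^ 2 = ((-τ ^ 2 : ℝ) : ℂ) := by rw [mul_pow, I_sq]; push_cast; ring
  rw [e, Complex.div_re, Complex.sq_norm, Complex.ofReal_re, Complex.ofReal_im]
  simp
  ring

theorem region2 {ι : Type*} (l : Filter ι) (N : ι → ℝ) (x w : ι → ℂ) (x0 w0 : ℂ)
    (hN : Tendsto N l atTop) (hx : Tendsto x l (𝓝 x0)) (hx0 : ‖x0‖ < 1) (hw : Tendsto w l (𝓝 w0))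
    (hw0 : 0 < w0.re) (hA : w0 ^ 2 = dilog (x0 ^ 2) / 4) (c : ℝ) (hc0 : 0 ≤ c) (hcw : c < w0.re)
    (hc : ∀ k, 1 ≤ k → k ≠ 2 → fk k x0 ≤ c) :
    ∃ η > 0, ∀ᶠ i in l, ∀ y : ℝ, |y| ≤ Real.pi * N i → 1 ≤ |y - (w i).im| →
      (HH (x i) (-exp (-((((w i).re:ℂ) + y * I) / (N i:ℂ))))).re ≤ (w0.re - η) * N i := by
  set δ := min (w0.re - c ^ 2 / w0.re) (w0.re / (‖w0‖ + 1) ^ 2) with hδ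
  have hδ0 : 0 < δ := by
    apply lt_min
    · have : c ^ 2 / w0.re < w0.re := by rw [div_lt_iff₀ hw0]; nlinarith
      linarith
    · positivity
  refine ⟨δ / 2, by positivity, ?_⟩
  by_contra hcon
  rw [not_eventually] at hcon
  push Not at hcon
  have : ∀ i, ∃ y : ℝ, (∃ y : ℝ, |y| ≤ Real.pi * N i ∧ 1 ≤ |y - (w i).im| ∧ (w0.re - δ / 2) * N i < 
      (HH (x i) (-exp (-((((w i).re:ℂ) + y * I) / (N i:ℂ))))).re) → (|y| ≤ Real.pi * N i ∧ 1 ≤ |y - (w i).im| ∧ (w0.re - δ / 2) * N i < 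
      (HH (x i) (-exp (-((((w i).re:ℂ) + y * I) / (N i:ℂ))))).re) := by
    intro i
    by_cases h : (∃ y : ℝ, |y| ≤ Real.pi * N i ∧ 1 ≤ |y - (w i).im| ∧ (w0.re - δ / 2) * N i < 
      (HH (x i) (-exp (-((((w i).re:ℂ) + y * I) / (N i:ℂ))))).re)
    · obtain ⟨y, hy⟩ := h
      exact ⟨y, fun _ => hy⟩
    · exact ⟨0, fun h' => absurd h' h⟩
  choose y hy using this
  have hf := hcon.mono fun i hi => hy i hi
  have : NeBot (l ⊓ 𝓟 {i | |y i| ≤ Real.pi * N i ∧ 1 ≤ |y i - (w i).im| ∧ (w0.re - δ / 2) * N i < 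
      (HH (x i) (-exp (-((((w i).re:ℂ) + y i * I) / (N i:ℂ))))).re}) := frequently_iff_neBot.1 hf
  set U := Ultrafilter.of (l ⊓ 𝓟 {i | |y i| ≤ Real.pi * N i ∧ 1 ≤ |y i - (w i).im| ∧ (w0.re - δ / 2) * N i < 
      (HH (x i) (-exp (-((((w i).re:ℂ) + y i * I) / (N i:ℂ))))).re})
  have hU := Ultrafilter.of_le (l ⊓ 𝓟 {i | |y i| ≤ Real.pi * N i ∧ 1 ≤ |y i - (w i).im| ∧ (w0.re - δ / 2) * N i < 
      (HH (x i) (-exp (-((((w i).re:ℂ) + y i * I) / (N i:ℂ))))).re})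
  have hUl : (U : Filter ι) ≤ l := hU.trans inf_le_left
  have hUe : ∀ᶠ i in (U : Filter ι), |y i| ≤ Real.pi * N i ∧ 1 ≤ |y i - (w i).im| ∧ (w0.re - δ / 2) * N i < 
      (HH (x i) (-exp (-((((w i).re:ℂ) + y i * I) / (N i:ℂ))))).re :=
    hU.trans inf_le_right (mem_principal_self _)
  obtain ⟨L, hL, hcase⟩ := ultra_lim U N (fun i => (w i).re) y x x0 w0.re (hN.mono_left hUl)
    ((Complex.continuous_re.tendsto w0).comp (hw.mono_left hUl)) hw0 (hx.mono_left hUl) hx0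
    (hUe.mono fun i hi => hi.1) c hc0 hc
  have hLre : w0.re - δ / 2 ≤ L.re := by
    refine ge_of_tendsto ((Complex.continuous_re.tendsto L).comp hL) ?_
    filter_upwards [hUe, (hN.mono_left hUl).eventually_gt_atTop 0] with i h1 h2
    simp only [Function.comp]
    rw [Complex.div_ofReal_re, le_div_iff₀ h2]
    exact h1.2.2.le
  rcases hcase with h | ⟨W0, hW0, hLW⟩
  · have := min_le_left (w0.re - c ^ 2 / w0.re) (w0.re / (‖w0‖ + 1) ^ 2)
    linarith
  · have hre : W0.re = w0.re := by
      refine tendsto_nhds_unique ((Complex.continuous_re.tendsto W0).comp hW0) ?_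
      have := (Complex.continuous_re.tendsto w0).comp (hw.mono_left hUl)
      refine this.congr fun i => ?_
      simp
    have him : Tendsto y U (𝓝 W0.im) := by
      have := (Complex.continuous_im.tendsto W0).comp hW0
      refine this.congr fun i => ?_
      simp
    set τ := W0.im - w0.im with hτ
    have hτ1 : 1 ≤ |τ| := by
      have h1 := (him.sub ((Complex.continuous_im.tendsto w0).comp (hw.mono_left hUl))).abs
      exact ge_of_tendsto h1 (hUe.mono fun i hi => hi.2.1)
    have hW : W0 = w0 + τ * I := by
      apply Complex.ext <;> simp [hre, hτ]
    have hWne : W0 ≠ 0 := fun h => by rw [h] at hre; simp at hre; linarith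
    have e : L.re = w0.re - τ ^ 2 * w0.re / ‖w0 + τ * I‖ ^ 2 := by
      rw [hLW, ← hA, saddle_id w0 W0 hWne, Complex.add_re]
      have e1 : W0 - w0 = τ * I := by rw [hW]; ring
      rw [e1]
      conv_lhs => rw [hW]
      rw [re_saddle w0 τ hw0]
      simp
      ring
    have hnW : ‖w0 + τ * I‖ ≤ (‖w0‖ + 1) * |τ| := by
      have := norm_add_le w0 (τ * I)
      rw [norm_mul, norm_I, mul_one, Complex.norm_real, Real.norm_eq_abs] at this
      nlinarith [norm_nonneg w0]
    have hnp : 0 < ‖w0 + τ * I‖ := by rw [← hW]; exact norm_pos_iff.2 hWne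
    have h3 : w0.re / (‖w0‖ + 1) ^ 2 ≤ τ ^ 2 * w0.re / ‖w0 + τ * I‖ ^ 2 := by
      rw [div_le_div_iff₀ (by positivity) (by positivity)]
      have : ‖w0 + τ * I‖ ^ 2 ≤ (‖w0‖ + 1) ^ 2 * τ ^ 2 := by
        rw [← sq_abs τ, ← mul_pow]
        exact pow_le_pow_left₀ hnp.le hnW 2
      nlinarith
    have := min_le_right (w0.re - c ^ 2 / w0.re) (w0.re / (‖w0‖ + 1) ^ 2)
    linarith

open Complex Filter Topology

theorem expm1_small (z : ℂ) (hz : ‖z‖ ≤ 1 / 2) : ‖exp z - 1 - z‖ ≤ ‖z‖ ^ 2 :=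
  Complex.norm_exp_sub_one_sub_id_le (by linarith)

theorem expm1_large (z : ℂ) (h : 0 ≤ z.re) (e : ℂ) (he : ‖e‖ = 1) : z.re ≤ ‖exp z - e‖ := by
  have h1 := norm_sub_norm_le (exp z) e
  rw [he, Complex.norm_exp] at h1
  linarith [Real.add_one_le_exp z.re]

theorem bound_even (z : ℂ) (M : ℝ) (hM : 1 ≤ M) (hz : 0 < z.re) (hs : ‖z‖ ≤ M * z.re) :
    ‖1 / (exp z - 1) - 1 / z‖ ≤ 2 * M + 2 := by
  have hz0 : z ≠ 0 := fun h => by rw [h] at hz; simp at hz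
  have hn : 0 < ‖z‖ := norm_pos_iff.2 hz0
  have hl := expm1_large z hz.le 1 norm_one
  have hne : exp z - 1 ≠ 0 := norm_pos_iff.1 (hz.trans_le hl)
  by_cases h : ‖z‖ ≤ 1 / 2
  · have h1 := expm1_small z h
    have h2 : ‖z‖ / 2 ≤ ‖exp z - 1‖ := by
      have := norm_sub_norm_le z (z - (exp z - 1))
      rw [show z - (z - (exp z - 1)) = exp z - 1 by ring,
        show z - (exp z - 1) = -(exp z - 1 - z) by ring, norm_neg] at this
      nlinarith
    have e : 1 / (exp z - 1) - 1 / z = -(exp z - 1 - z) / ((exp z - 1) * z) := by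
      field_simp; ring
    rw [e, norm_div, norm_neg, norm_mul, div_le_iff₀ (by positivity)]
    nlinarith [mul_le_mul_of_nonneg_right h2 hn.le, mul_nonneg (by linarith : (0:ℝ) ≤ 2 * M) (mul_nonneg (norm_nonneg (exp z - 1)) hn.le)]
  · push Not at h
    have h1 : 1 / (2 * M) ≤ z.re := by
      rw [div_le_iff₀ (by positivity)]; nlinarith
    have h2 : ‖1 / (exp z - 1)‖ ≤ 2 * M := by
      rw [norm_div, norm_one, div_le_iff₀ (norm_pos_iff.2 hne)]
      have := h1.trans hl
      rw [div_le_iff₀ (by positivity)] at this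
      linarith
    have h3 : ‖1 / z‖ ≤ 2 := by
      rw [norm_div, norm_one, div_le_iff₀ hn]; linarith
    exact (norm_sub_le _ _).trans (by linarith)

theorem bound_odd (z : ℂ) (M : ℝ) (hM : 1 ≤ M) (hz : 0 < z.re) (hs : ‖z‖ ≤ M * z.re) :
    ‖1 / (exp z + 1)‖ ≤ 2 * M + 2 := by
  have hl := expm1_large z hz.le (-1) (by simp)
  rw [sub_neg_eq_add] at hl
  have hne : 0 < ‖exp z + 1‖ := hz.trans_le hl
  rw [norm_div, norm_one, div_le_iff₀ hne]
  by_cases h : ‖z‖ ≤ 1 / 2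
  · have h1 := expm1_small z h
    have := norm_sub_norm_le (2:ℂ) (-(exp z - 1 - z) - z)
    rw [show (2:ℂ) - (-(exp z - 1 - z) - z) = exp z + 1 by ring] at this
    have h2 := norm_sub_le (-(exp z - 1 - z)) z
    rw [norm_neg] at h2
    rw [Complex.norm_ofNat] at this
    have : 1 ≤ ‖exp z + 1‖ := by nlinarith [norm_nonneg z]
    nlinarith
  · push Not at h
    have h1 : 1 / (2 * M) ≤ z.re := by
      rw [div_le_iff₀ (by positivity)]; nlinarith
    have := h1.trans hl
    rw [div_le_iff₀ (by positivity)] at this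
    nlinarith

theorem lim_even : Tendsto (fun z : ℂ => 1 / (exp z - 1) - 1 / z) (𝓝[≠] 0) (𝓝 (-(1 / 2))) := by
  have h1 := (hasDerivAt_exp (0:ℂ)).tendsto_slope_zero
  simp only [zero_add, exp_zero, smul_eq_mul] at h1
  have h2 : Tendsto (fun z : ℂ => (exp z - 1 - z) / z ^ 2) (𝓝[≠] 0) (𝓝 (1 / 2)) := by
    rw [tendsto_iff_norm_sub_tendsto_zero]
    have hz : Tendsto (fun z : ℂ => ‖z‖) (𝓝[≠] 0) (𝓝 0) := by
      have : Tendsto (fun z : ℂ => ‖z‖) (𝓝 0) (𝓝 ‖(0:ℂ)‖) := continuous_norm.tendsto 0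
      rw [norm_zero] at this
      exact this.mono_left nhdsWithin_le_nhds
    refine squeeze_zero' (Eventually.of_forall fun _ => norm_nonneg _) ?_ hz
    filter_upwards [self_mem_nhdsWithin, hz.eventually (gt_mem_nhds one_pos)] with z hz0 hz1
    have hz0 : z ≠ 0 := hz0
    have hb := Complex.exp_bound hz1.le (n := 3) (by norm_num)
    simp [Finset.sum_range_succ, Nat.factorial] at hb
    have e : (exp z - 1 - z) / z ^ 2 - 1 / 2 = (exp z - (1 + z + z ^ 2 / 2)) / z ^ 2 := by
      field_simp; ring
    have hp : 0 < ‖z‖ := norm_pos_iff.2 hz0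
    rw [e, norm_div, norm_pow, div_le_iff₀ (by positivity)]
    refine hb.trans ?_
    have : 0 < ‖z‖ ^ 3 := by positivity
    nlinarith
  have h3 := (h2.div h1 one_ne_zero).neg
  rw [div_one] at h3
  refine h3.congr' ?_
  have hne := h1.eventually_ne one_ne_zero
  filter_upwards [self_mem_nhdsWithin, hne] with z hz0 hn
  have hz0 : z ≠ 0 := hz0
  have : exp z - 1 ≠ 0 := fun h => hn (by rw [h, mul_zero])
  simp only [Pi.div_apply]
  field_simp
  ring

noncomputable def GG (k : ℕ) (s : ℂ) : ℂ :=
  (-exp (-s)) ^ k / (1 - (-exp (-s)) ^ k) - (if Even k then 1 / (k * s) else 0)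

theorem GG_even (k : ℕ) (s : ℂ) (h : Even k) : GG k s = 1 / (exp (k * s) - 1) - 1 / (k * s) := by
  unfold GG
  rw [if_pos h, h.neg_pow, ← exp_nat_mul, mul_neg, exp_neg]
  congr 1
  have := exp_ne_zero (k * s)
  by_cases h1 : exp (k * s) = 1
  · simp [h1]
  have h2 : exp (k * s) - 1 ≠ 0 := sub_ne_zero.2 h1
  have h3 : 1 - (exp (k * s))⁻¹ ≠ 0 := by
    intro h
    apply h2
    field_simp at h
    rwa [mul_zero] at h
  field_simp

theorem GG_odd (k : ℕ) (s : ℂ) (h : ¬ Even k) (hs : 0 < (k * s).re) : GG k s = - (1 / (exp (k * s) + 1)) := by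
  unfold GG
  rw [if_neg h, (Nat.not_even_iff_odd.1 h).neg_pow, ← exp_nat_mul, mul_neg, exp_neg]
  have := exp_ne_zero (k * s)
  have h2 : exp (k * s) + 1 ≠ 0 := by
    have hl := expm1_large (k * s) hs.le (-1) (by simp)
    rw [sub_neg_eq_add] at hl
    exact norm_pos_iff.1 (hs.trans_le hl)
  have h3 : 1 - -(exp (k * s))⁻¹ ≠ 0 := by
    rw [sub_neg_eq_add]
    intro h
    apply h2
    field_simp at h
    rwa [mul_zero] at h
  rw [sub_zero]
  rw [sub_neg_eq_add] at h3 ⊢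
  field_simp

theorem GG_bound (k : ℕ) (hk : 1 ≤ k) (s : ℂ) (M : ℝ) (hM : 1 ≤ M) (hs : 0 < s.re)
    (hsM : ‖s‖ ≤ M * s.re) : ‖GG k s‖ ≤ 2 * M + 2 := by
  have hk' : (0:ℝ) < k := by exact_mod_cast hk
  have hre : ((k:ℂ) * s).re = k * s.re := by
    rw [show (k:ℂ) = ((k:ℝ):ℂ) by push_cast; rfl, Complex.re_ofReal_mul]
  have h1 : 0 < ((k:ℂ) * s).re := by rw [hre]; positivity
  have h2 : ‖(k:ℂ) * s‖ ≤ M * ((k:ℂ) * s).re := by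
    rw [hre, norm_mul, Complex.norm_natCast]; nlinarith
  by_cases h : Even k
  · rw [GG_even k s h]
    exact bound_even _ M hM h1 h2
  · rw [GG_odd k s h h1, norm_neg]
    exact bound_odd _ M hM h1 h2

theorem GG_lim {ι : Type*} {l : Filter ι} (s : ι → ℂ) (hs : Tendsto s l (𝓝 0))
    (hp : ∀ᶠ i in l, 0 < (s i).re) (k : ℕ) (hk : 1 ≤ k) :
    Tendsto (fun i => GG k (s i)) l (𝓝 (-(1 / 2))) := by
  have hk' : (0:ℝ) < k := by exact_mod_cast hk
  have hks : Tendsto (fun i => (k:ℂ) * s i) l (𝓝 0) := by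
    simpa using hs.const_mul (k:ℂ)
  by_cases h : Even k
  · simp_rw [GG_even k _ h]
    refine lim_even.comp (tendsto_nhdsWithin_iff.2 ⟨hks, ?_⟩)
    filter_upwards [hp] with i hi h0
    have : (k:ℂ) ≠ 0 := by exact_mod_cast (by omega : k ≠ 0)
    rcases mul_eq_zero.1 h0 with h | h
    · exact this h
    · rw [h] at hi; simp at hi
  · have h1 : Tendsto (fun i => - (1 / (exp (k * s i) + 1))) l (𝓝 (-(1 / (exp 0 + 1)))) := by
      refine (Tendsto.div tendsto_const_nhds (((continuous_exp.tendsto 0).comp hks).add_const 1) ?_).neg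
      rw [exp_zero]; norm_num
    have e : (-(1 / (exp 0 + 1)) : ℂ) = -(1/2) := by rw [exp_zero]; norm_num
    rw [e] at h1
    refine h1.congr' ?_
    filter_upwards [hp] with i hi
    rw [GG_odd k _ h]
    rw [show (k:ℂ) = ((k:ℝ):ℂ) by push_cast; rfl, Complex.re_ofReal_mul]
    positivity

/-- the bounded remainder -/
noncomputable def phi (x s : ℂ) : ℂ := ∑' k : ℕ, x ^ k / k * GG k s

theorem even_sum (x s : ℂ) (hx : ‖x‖ < 1) :
    HasSum (fun k : ℕ => x ^ k / k * (if Even k then 1 / (k * s) else 0)) (dilog (x ^ 2) / 4 / s) := by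
  have hinj : Function.Injective (fun j : ℕ => 2 * (j + 1)) := by
    intro a b h; simpa using h
  rw [← hinj.hasSum_iff]
  · have hS : Summable (fun n : ℕ => (x ^ 2) ^ (n + 1) / ((n : ℂ) + 1) ^ 2) := by
      refine Summable.of_norm_bounded (summable_inv_sq.summable) fun n => ?_
      have := dilog_term_le (x ^ 2) (by rw [norm_pow]; exact pow_le_one₀ (norm_nonneg _) hx.le) n
      refine this.trans (mul_le_of_le_one_left (by positivity) ?_)
      rw [norm_pow]; exact pow_le_one₀ (norm_nonneg _) hx.le
    have := (hS.hasSum.div_const 4).div_const s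
    unfold dilog
    refine Eq.subst (motive := fun f => HasSum f _) (funext fun j => ?_) this
    simp only [Function.comp]
    symm
    rw [if_pos (even_two_mul _), pow_mul]
    have hj : (j : ℂ) + 1 ≠ 0 := by exact_mod_cast Nat.succ_ne_zero j
    push_cast
    by_cases hs : s = 0
    · simp [hs]
    field_simp
    norm_num
  · intro k hk
    by_cases h : Even k
    · obtain ⟨j, rfl⟩ := h
      rcases Nat.eq_zero_or_pos j with rfl | hj
      · simp
      · exact absurd ⟨j - 1, by show 2 * (j - 1 + 1) = j + j; omega⟩ hk
    · simp [h]

theorem HH_eq (x s : ℂ) (hx : ‖x‖ < 1) (M : ℝ) (hM : 1 ≤ M) (hs : 0 < s.re)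
    (hsM : ‖s‖ ≤ M * s.re) : HH x (-exp (-s)) = phi x s + dilog (x ^ 2) / 4 / s := by
  have hsum : Summable (fun k : ℕ => x ^ k / k * GG k s) := by
    refine Summable.of_norm_bounded (g := fun k => ‖x‖ ^ k * (2 * M + 2))
      ((summable_geometric_of_lt_one (norm_nonneg _) hx).mul_right _) fun k => ?_
    rcases Nat.eq_zero_or_pos k with rfl | hk
    · simp; positivity
    · rw [norm_mul]
      gcongr
      · exact norm_pow_div_le _ _
      · exact GG_bound k hk s M hM hs hsM
  have h := hsum.hasSum.add (even_sum x s hx)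
  unfold HH phi
  rw [← h.tsum_eq]
  congr 1; ext k
  unfold GG
  ring

theorem phi_bound (x s : ℂ) (ρ : ℝ) (hx : ‖x‖ ≤ ρ) (hρ : ρ < 1) (M : ℝ) (hM : 1 ≤ M) (hs : 0 < s.re)
    (hsM : ‖s‖ ≤ M * s.re) : ‖phi x s‖ ≤ (1 - ρ)⁻¹ * (2 * M + 2) := by
  have hρ0 : 0 ≤ ρ := (norm_nonneg _).trans hx
  refine tsum_of_norm_bounded ((hasSum_geometric_of_lt_one hρ0 hρ).mul_right _) fun k => ?_
  rcases Nat.eq_zero_or_pos k with rfl | hk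
  · simp; positivity
  · rw [norm_mul]
    gcongr
    · exact (norm_pow_div_le _ _).trans (by gcongr)
    · exact GG_bound k hk s M hM hs hsM

theorem phi_lim {ι : Type*} {l : Filter ι} (x s : ι → ℂ) (x0 : ℂ) (hx : Tendsto x l (𝓝 x0)) (hx0 : ‖x0‖ < 1)
    (M : ℝ) (hM : 1 ≤ M) (hs : Tendsto s l (𝓝 0)) (hp : ∀ᶠ i in l, 0 < (s i).re)
    (hsM : ∀ᶠ i in l, ‖s i‖ ≤ M * (s i).re) :
    Tendsto (fun i => phi (x i) (s i)) l (𝓝 (∑' k : ℕ, x0 ^ k / k * (-(1 / 2)))) := by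
  set ρ : ℝ := (1 + ‖x0‖) / 2 with hρ
  have hρ1 : ρ < 1 := by linarith
  have hρ0 : 0 ≤ ρ := by positivity
  have hxρ : ∀ᶠ i in l, ‖x i‖ < ρ := hx.norm.eventually (gt_mem_nhds (by linarith))
  refine tendsto_tsum_of_dominated_convergence (bound := fun k => ρ ^ k * (2 * M + 2))
    ((summable_geometric_of_lt_one hρ0 hρ1).mul_right _) ?_ ?_
  · intro k
    rcases Nat.eq_zero_or_pos k with rfl | hk
    · simpa using tendsto_const_nhds
    · exact ((hx.pow k).div_const _).mul (GG_lim s hs hp k hk)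
  · filter_upwards [hp, hsM, hxρ] with i h1 h2 h3 k
    rcases Nat.eq_zero_or_pos k with rfl | hk
    · simp; positivity
    · rw [norm_mul]
      gcongr
      · exact (norm_pow_div_le _ _).trans (by gcongr)
      · exact GG_bound k hk _ M hM h1 h2

theorem HH_cont (x : ℂ) (hx : ‖x‖ < 1) (N σ : ℝ) (hN : 0 < N) (hσ : 0 < σ) :
    Continuous (fun y : ℝ => HH x (-exp (-(((σ:ℂ) + y * I) / (N:ℂ))))) := by
  unfold HH
  refine continuous_tsum (u := fun k => ‖x‖ ^ k * (N / σ)) ?_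
    ((summable_geometric_of_lt_one (norm_nonneg _) hx).mul_right _) ?_
  · intro k
    rcases Nat.eq_zero_or_pos k with rfl | hk
    · simp; exact continuous_const
    · refine Continuous.mul continuous_const (Continuous.div (by fun_prop) (by fun_prop) fun y h => ?_)
      have h1 : ‖(-exp (-(((σ:ℂ) + y * I) / (N:ℂ)))) ^ k‖ < 1 := by
        rw [norm_pow, norm_neg, Complex.norm_exp]
        refine pow_lt_one₀ (Real.exp_pos _).le ?_ (by omega)
        rw [Real.exp_lt_one_iff, Complex.neg_re, Complex.div_ofReal_re]
        simp
        positivity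
      rw [← sub_eq_zero.1 h, norm_one] at h1
      exact lt_irrefl _ h1
  · intro k y
    rcases Nat.eq_zero_or_pos k with rfl | hk
    · simp; positivity
    · rw [norm_mul]
      have hk' : (1:ℝ) ≤ k := by exact_mod_cast hk
      gcongr
      · exact norm_pow_div_le _ _
      · have := norm_bk_le N σ y hN hσ k hk _ rfl
        rw [norm_div, Complex.norm_real, Real.norm_of_nonneg hN.le, div_le_iff₀ hN] at this
        refine this.trans ?_
        rw [div_mul_eq_mul_div, one_mul]
        gcongr
        nlinarith

open Complex Filter Topology

noncomputable def JJ (x w : ℂ) (N y : ℝ) : ℂ :=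
  exp (HH x (-exp (-(((w.re:ℂ) + y * I) / (N:ℂ)))) + N * ((w.re:ℂ) + y * I) - 2 * N * w)

theorem JJ_cont (x w : ℂ) (N : ℝ) (hx : ‖x‖ < 1) (hN : 0 < N) (hw : 0 < w.re) :
    Continuous (JJ x w N) := by
  unfold JJ
  have := HH_cont x hx N w.re hN hw
  fun_prop

theorem JJ_eq (x w : ℂ) (N t : ℝ) (hx : ‖x‖ < 1) (hN : 0 < N) (hw : 0 < w.re)
    (hA : w ^ 2 = dilog (x ^ 2) / 4) :
    JJ x w N (w.im + (√N)⁻¹ * t) = exp (phi x ((w + ((√N)⁻¹ * t : ℝ) * I) / N) +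
      - (1 / (w + ((√N)⁻¹ * t : ℝ) * I)) * (t:ℂ) ^ 2) := by
  set τ : ℝ := (√N)⁻¹ * t with hτ
  have hW : (w.re : ℂ) + ((w.im + τ : ℝ) : ℂ) * I = w + τ * I := by
    apply Complex.ext <;> simp
  have hre : (w + τ * I).re = w.re := by simp
  have hWn : w + τ * I ≠ 0 := fun h => by rw [h] at hre; simp at hre; linarith
  have hNc : (N:ℂ) ≠ 0 := by exact_mod_cast hN.ne'
  have hNt : (N:ℂ) * (τ:ℂ) ^ 2 = (t:ℂ) ^ 2 := by
    have : N * τ ^ 2 = t ^ 2 := by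
      rw [hτ, mul_pow, inv_pow, Real.sq_sqrt hN.le]; field_simp
    exact_mod_cast this
  have hs : ((w + τ * I) / (N:ℂ)).re = w.re / N := by rw [Complex.div_ofReal_re, hre]
  have hs0 : 0 < ((w + τ * I) / (N:ℂ)).re := by rw [hs]; positivity
  have hM := HH_eq x ((w + τ * I) / N) hx (‖w + τ * I‖ / w.re)
    (by rw [le_div_iff₀ hw, one_mul, ← hre]; exact Complex.re_le_norm _) hs0 (by
      rw [hs, norm_div, Complex.norm_real, Real.norm_of_nonneg hN.le]
      apply le_of_eq; field_simp)
  unfold JJ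
  rw [hW, hM, ← hA]
  congr 1
  have h1 := saddle_id w (w + τ * I) hWn
  have h2 : w ^ 2 / ((w + τ * I) / N) = N * (w ^ 2 / (w + τ * I)) := by field_simp
  rw [h2, h1, show w + τ * I - w = τ * I by ring, mul_pow, I_sq, ← hNt]
  ring

theorem region1 {ι : Type*} (l : Filter ι) [l.IsCountablyGenerated] (N : ι → ℝ) (x w : ι → ℂ) (x0 w0 : ℂ)
    (hN : Tendsto N l atTop) (hx : Tendsto x l (𝓝 x0)) (hx0 : ‖x0‖ < 1) (hw : Tendsto w l (𝓝 w0))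
    (hw0 : 0 < w0.re) (hA : ∀ i, (w i) ^ 2 = dilog (x i ^ 2) / 4) :
    ∃ G : ℂ, G ≠ 0 ∧ Tendsto (fun i => (√(N i) : ℂ) * ∫ y in ((w i).im - 1)..((w i).im + 1),
      JJ (x i) (w i) (N i) y) l (𝓝 G) := by
  set φ0 : ℂ := ∑' k : ℕ, x0 ^ k / k * (-(1 / 2)) with hφ0
  have hw00 : w0 ≠ 0 := fun h => by rw [h] at hw0; simp at hw0
  have hb : 0 < (1 / w0).re := by
    rw [one_div, Complex.inv_re]; have := Complex.normSq_pos.2 hw00; positivity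
  refine ⟨∫ t : ℝ, exp (φ0 + -(1 / w0) * (t:ℂ) ^ 2), ?_, ?_⟩
  · simp_rw [exp_add]
    rw [MeasureTheory.integral_const_mul, integral_gaussian_complex hb]
    refine mul_ne_zero (exp_ne_zero _) ?_
    rw [Ne, Complex.cpow_eq_zero_iff]
    push Not
    intro h
    exfalso
    have : (Real.pi : ℂ) ≠ 0 := by exact_mod_cast Real.pi_ne_zero
    exact div_ne_zero this (one_div_ne_zero hw00) h
  have hNpos : ∀ᶠ i in l, 0 < N i := hN.eventually_gt_atTop 0
  have hwre : ∀ᶠ i in l, w0.re / 2 < (w i).re :=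
    ((Complex.continuous_re.tendsto w0).comp hw).eventually (lt_mem_nhds (by linarith))
  have hwn : ∀ᶠ i in l, ‖w i‖ < ‖w0‖ + 1 := hw.norm.eventually (gt_mem_nhds (by linarith))
  set ρ : ℝ := (1 + ‖x0‖) / 2 with hρ
  have hρ1 : ρ < 1 := by linarith
  have hρ0 : 0 ≤ ρ := by positivity
  have hxρ : ∀ᶠ i in l, ‖x i‖ < ρ := hx.norm.eventually (gt_mem_nhds (by linarith))
  -- sector constant
  set M : ℝ := 2 * (‖w0‖ + 2) / w0.re with hMdef
  have hM1 : 1 ≤ M := by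
    rw [hMdef, le_div_iff₀ hw0]
    have := Complex.re_le_norm w0
    linarith [norm_nonneg w0]
  set κ : ℝ := (w0.re / 2) / (‖w0‖ + 2) ^ 2 with hκ
  have hκ0 : 0 < κ := by positivity
  set C : ℝ := (1 - ρ)⁻¹ * (2 * M + 2) with hC
  have key : ∀ i, 0 < N i → (√(N i) : ℂ) * ∫ y in ((w i).im - 1)..((w i).im + 1), JJ (x i) (w i) (N i) y
      = ∫ t : ℝ, (Set.Ioc (-√(N i)) (√(N i))).indicator
        (fun t => JJ (x i) (w i) (N i) ((w i).im + (√(N i))⁻¹ * t)) t := by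
    intro i hi
    have hsq : 0 < √(N i) := Real.sqrt_pos.2 hi
    have h1 := intervalIntegral.smul_integral_comp_add_mul (a := -√(N i)) (b := √(N i))
      (JJ (x i) (w i) (N i)) (√(N i))⁻¹ (w i).im
    have e1 : (√(N i))⁻¹ * √(N i) = 1 := inv_mul_cancel₀ hsq.ne'
    rw [mul_neg, e1, ← sub_eq_add_neg] at h1
    rw [← h1, MeasureTheory.integral_indicator measurableSet_Ioc,
      ← intervalIntegral.integral_of_le (by linarith), Complex.real_smul, ← mul_assoc]
    push_cast
    rw [mul_inv_cancel₀ (by exact_mod_cast hsq.ne'), one_mul]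
  -- geometric facts on W
  have geo : ∀ i t, 0 < N i → w0.re / 2 < (w i).re → ‖w i‖ < ‖w0‖ + 1 → |t| ≤ √(N i) →
      ‖w i + ((√(N i))⁻¹ * t : ℝ) * I‖ ≤ ‖w0‖ + 2 := by
    intro i t hi h1 h2 ht
    have hsq : 0 < √(N i) := Real.sqrt_pos.2 hi
    refine (norm_add_le _ _).trans ?_
    rw [norm_mul, norm_I, mul_one, Complex.norm_real, Real.norm_eq_abs, abs_mul, abs_inv, abs_of_pos hsq]
    have : (√(N i))⁻¹ * |t| ≤ 1 := by rw [inv_mul_le_iff₀ hsq, mul_one]; exact ht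
    linarith
  have sec : ∀ i t, 0 < N i → w0.re / 2 < (w i).re → ‖w i‖ < ‖w0‖ + 1 → |t| ≤ √(N i) →
      0 < ((w i + ((√(N i))⁻¹ * t : ℝ) * I) / N i).re ∧
      ‖(w i + ((√(N i))⁻¹ * t : ℝ) * I) / N i‖ ≤ M * ((w i + ((√(N i))⁻¹ * t : ℝ) * I) / N i).re := by
    intro i t hi h1 h2 ht
    have hg := geo i t hi h1 h2 ht
    have hre : ((w i + ((√(N i))⁻¹ * t : ℝ) * I) / N i).re = (w i).re / N i := by
      rw [Complex.div_ofReal_re]; congr 1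
      rw [Complex.add_re, Complex.re_ofReal_mul]; simp
    rw [hre]
    refine ⟨div_pos (by linarith) hi, ?_⟩
    rw [norm_div, Complex.norm_real, Real.norm_of_nonneg hi.le, ← mul_div_assoc]
    gcongr
    refine hg.trans ?_
    rw [hMdef, div_mul_eq_mul_div, le_div_iff₀ hw0]
    nlinarith [norm_nonneg w0]
  have htd : Tendsto (fun i => ∫ t : ℝ, (Set.Ioc (-√(N i)) (√(N i))).indicator
        (fun t => JJ (x i) (w i) (N i) ((w i).im + (√(N i))⁻¹ * t)) t) l
        (𝓝 (∫ t : ℝ, exp (φ0 + -(1 / w0) * (t:ℂ) ^ 2))) := by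
    refine MeasureTheory.tendsto_integral_filter_of_dominated_convergence
      (fun t => Real.exp C * Real.exp (-κ * t ^ 2)) ?_ ?_ ?_ ?_
    · filter_upwards [hNpos, hxρ, hwre] with i h1 h2 h3
      have := JJ_cont (x i) (w i) (N i) (by linarith) h1 (by linarith)
      exact ((this.comp (by fun_prop : Continuous fun t : ℝ => (w i).im + (√(N i))⁻¹ * t)).aestronglyMeasurable).indicator
        measurableSet_Ioc
    · filter_upwards [hNpos, hxρ, hwre, hwn] with i h1 h2 h3 h4
      refine Eventually.of_forall fun t => ?_
      by_cases ht : t ∈ Set.Ioc (-√(N i)) (√(N i))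
      swap
      · rw [Set.indicator_of_notMem ht, norm_zero]; positivity
      rw [Set.indicator_of_mem ht]
      have ht' : |t| ≤ √(N i) := abs_le.2 ⟨ht.1.le, ht.2⟩
      have hwp : 0 < (w i).re := by linarith
      rw [JJ_eq (x i) (w i) (N i) t (by linarith) h1 hwp (hA i), Complex.norm_exp, ← Real.exp_add,
        Complex.add_re]
      apply Real.exp_le_exp.2
      have hs := sec i t h1 h3 h4 ht'
      have hg := geo i t h1 h3 h4 ht'
      have hp := phi_bound (x i) _ ρ h2.le hρ1 M hM1 hs.1 hs.2
      have hp' := (Complex.re_le_norm _).trans hp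
      set W := w i + ((√(N i))⁻¹ * t : ℝ) * I with hWdef
      have hWre : W.re = (w i).re := by
        rw [hWdef, Complex.add_re, Complex.re_ofReal_mul]; simp
      have hWn : W ≠ 0 := fun h => by rw [h] at hWre; simp at hWre; linarith
      have hWp : 0 < ‖W‖ := norm_pos_iff.2 hWn
      have e : (-(1 / W) * (t:ℂ) ^ 2).re = - ((w i).re / ‖W‖ ^ 2 * t ^ 2) := by
        rw [show -(1 / W) * (t:ℂ) ^ 2 = ((t ^ 2 : ℝ) : ℂ) * (-W⁻¹) by push_cast; ring,
          Complex.re_ofReal_mul, Complex.neg_re, Complex.inv_re, hWre, Complex.sq_norm]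
        ring
      rw [e]
      have hk : κ ≤ (w i).re / ‖W‖ ^ 2 := by
        rw [hκ]
        gcongr
      have := mul_le_mul_of_nonneg_right hk (sq_nonneg t)
      linarith
    · have := integrable_exp_neg_mul_sq hκ0
      exact this.const_mul _
    · refine Eventually.of_forall fun t => ?_
      have hsqN : Tendsto (fun i => √(N i)) l atTop := Real.tendsto_sqrt_atTop.comp hN
      have hinv : Tendsto (fun i => (√(N i))⁻¹ * t) l (𝓝 0) := by
        simpa using hsqN.inv_tendsto_atTop.mul_const t
      have hWl : Tendsto (fun i => w i + ((√(N i))⁻¹ * t : ℝ) * I) l (𝓝 w0) := by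
        have h1 := ((Complex.continuous_ofReal.tendsto 0).comp hinv).mul_const I
        have := hw.add h1
        simpa [Function.comp_def] using this
      have htN : ∀ᶠ i in l, |t| + 1 ≤ √(N i) := hsqN.eventually_ge_atTop _
      have hNinv : Tendsto (fun i => ((N i : ℂ))⁻¹) l (𝓝 0) := by
        have := hN.inv_tendsto_atTop
        have h2 := (Complex.continuous_ofReal.tendsto 0).comp this
        simpa [Function.comp_def] using h2
      have hsl : Tendsto (fun i => (w i + ((√(N i))⁻¹ * t : ℝ) * I) / N i) l (𝓝 0) := by
        have := hWl.mul hNinv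
        rw [mul_zero] at this
        exact this
      have hsec : ∀ᶠ i in l, 0 < ((w i + ((√(N i))⁻¹ * t : ℝ) * I) / N i).re ∧
          ‖(w i + ((√(N i))⁻¹ * t : ℝ) * I) / N i‖ ≤ M * ((w i + ((√(N i))⁻¹ * t : ℝ) * I) / N i).re := by
        filter_upwards [hNpos, hwre, hwn, htN] with i h1 h2 h3 h4
        exact sec i t h1 h2 h3 (by linarith)
      have hphi := phi_lim x _ x0 hx hx0 M hM1 hsl (hsec.mono fun i h => h.1) (hsec.mono fun i h => h.2)
      have hex : Tendsto (fun i => exp (phi (x i) ((w i + ((√(N i))⁻¹ * t : ℝ) * I) / N i) +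
          - (1 / (w i + ((√(N i))⁻¹ * t : ℝ) * I)) * (t:ℂ) ^ 2)) l
          (𝓝 (exp (φ0 + -(1 / w0) * (t:ℂ) ^ 2))) := by
        refine (continuous_exp.tendsto _).comp (hphi.add (Tendsto.mul_const _ (Tendsto.neg ?_)))
        exact tendsto_const_nhds.div hWl hw00
      refine hex.congr' ?_
      filter_upwards [hNpos, hxρ, hwre, htN] with i h1 h2 h3 h4
      have hm : t ∈ Set.Ioc (-√(N i)) (√(N i)) :=
        ⟨by linarith [neg_abs_le t], by linarith [le_abs_self t]⟩
      rw [Set.indicator_of_mem hm, JJ_eq (x i) (w i) (N i) t (by linarith) h1 (by linarith) (hA i)]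
  refine htd.congr' ?_
  filter_upwards [hNpos] with i hi
  exact (key i hi).symm

open Complex Filter Topology

theorem total_lim {ι : Type*} (l : Filter ι) [l.IsCountablyGenerated] (N : ι → ℝ) (x w : ι → ℂ) (x0 w0 : ℂ)
    (hN : Tendsto N l atTop) (hx : Tendsto x l (𝓝 x0)) (hx0 : ‖x0‖ < 1) (hw : Tendsto w l (𝓝 w0))
    (hw0 : 0 < w0.re) (hA : ∀ i, (w i) ^ 2 = dilog (x i ^ 2) / 4)
    (hA0 : w0 ^ 2 = dilog (x0 ^ 2) / 4) (c : ℝ) (hc0 : 0 ≤ c) (hcw : c < w0.re)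
    (hc : ∀ k, 1 ≤ k → k ≠ 2 → fk k x0 ≤ c) :
    ∃ G : ℂ, G ≠ 0 ∧ Tendsto (fun i => (√(N i) : ℂ) * ∫ y in (-(Real.pi * N i))..(Real.pi * N i),
      JJ (x i) (w i) (N i) y) l (𝓝 G) := by
  obtain ⟨G, hG, h1⟩ := region1 l N x w x0 w0 hN hx hx0 hw hw0 hA
  obtain ⟨η, hη, h2⟩ := region2 l N x w x0 w0 hN hx hx0 hw hw0 hA0 c hc0 hcw hc
  refine ⟨G, hG, ?_⟩
  have hre := (Complex.continuous_re.tendsto w0).comp hw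
  have him := (Complex.continuous_im.tendsto w0).comp hw
  have hNpos : ∀ᶠ i in l, 1 ≤ N i := hN.eventually_ge_atTop 1
  have hwre : ∀ᶠ i in l, 0 < (w i).re := hre.eventually (lt_mem_nhds hw0)
  have hwre2 : ∀ᶠ i in l, w0.re - η / 2 < (w i).re := hre.eventually (lt_mem_nhds (by linarith))
  have him2 : ∀ᶠ i in l, |(w i).im| < |w0.im| + 1 := him.abs.eventually (gt_mem_nhds (by linarith))
  have hNbig : ∀ᶠ i in l, |w0.im| + 2 ≤ N i := hN.eventually_ge_atTop _
  have hx1 : ∀ᶠ i in l, ‖x i‖ < 1 := hx.norm.eventually (gt_mem_nhds hx0)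
  have hJ : ∀ᶠ i in l, ∀ y : ℝ, |y| ≤ Real.pi * N i → 1 ≤ |y - (w i).im| →
      ‖JJ (x i) (w i) (N i) y‖ ≤ Real.exp (-(η / 2 * N i)) := by
    filter_upwards [h2, hNpos, hwre2] with i h hN1 hw2 y hy hy1
    have := h y hy hy1
    unfold JJ
    rw [Complex.norm_exp]
    apply Real.exp_le_exp.2
    have e : ((N i:ℂ) * (((w i).re:ℂ) + y * I)).re = N i * (w i).re := by
      rw [Complex.re_ofReal_mul]; simp
    have e2 : (2 * (N i:ℂ) * w i).re = 2 * N i * (w i).re := by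
      rw [show 2 * (N i:ℂ) = ((2 * N i : ℝ) : ℂ) by push_cast; rfl, Complex.re_ofReal_mul]
    rw [Complex.sub_re, Complex.add_re, e, e2]
    nlinarith
  have hz : Tendsto (fun i => (16 * Real.pi / η ^ 2) * ((η / 2 * N i) ^ 2 * Real.exp (-(η / 2 * N i)))) l (𝓝 0) := by
    have h3 := (Real.tendsto_pow_mul_exp_neg_atTop_nhds_zero 2).comp (hN.const_mul_atTop (by positivity : 0 < η / 2))
    simpa using h3.const_mul (16 * Real.pi / η ^ 2)
  have hrest : Tendsto (fun i => (√(N i) : ℂ) * ((∫ y in (-(Real.pi * N i))..((w i).im - 1), JJ (x i) (w i) (N i) y) +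
      ∫ y in ((w i).im + 1)..(Real.pi * N i), JJ (x i) (w i) (N i) y)) l (𝓝 0) := by
    refine squeeze_zero_norm' ?_ hz
    filter_upwards [hJ, hNpos, him2, hNbig] with i hJ h1 h2 h3
    have hpi := Real.pi_gt_three
    have hb := abs_lt.1 h2
    have hpN : |w0.im| + 2 ≤ Real.pi * N i := by nlinarith [abs_nonneg w0.im]
    have i1 : ‖∫ y in (-(Real.pi * N i))..((w i).im - 1), JJ (x i) (w i) (N i) y‖ ≤
        Real.exp (-(η / 2 * N i)) * (2 * Real.pi * N i) := by
      refine (intervalIntegral.norm_integral_le_of_norm_le_const (C := Real.exp (-(η / 2 * N i))) ?_).trans ?_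
      · intro y hy
        rw [Set.uIoc_of_le (by linarith)] at hy
        refine hJ y (abs_le.2 ⟨hy.1.le, by linarith [hy.2]⟩) ?_
        rw [le_abs]; right; linarith [hy.2]
      · gcongr
        rw [abs_le]; constructor <;> linarith
    have i2 : ‖∫ y in ((w i).im + 1)..(Real.pi * N i), JJ (x i) (w i) (N i) y‖ ≤
        Real.exp (-(η / 2 * N i)) * (2 * Real.pi * N i) := by
      refine (intervalIntegral.norm_integral_le_of_norm_le_const (C := Real.exp (-(η / 2 * N i))) ?_).trans ?_
      · intro y hy
        rw [Set.uIoc_of_le (by linarith)] at hy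
        refine hJ y (abs_le.2 ⟨by linarith [hy.1], hy.2⟩) ?_
        rw [le_abs]; left; linarith [hy.1]
      · gcongr
        rw [abs_le]; constructor <;> linarith
    have hsN : √(N i) ≤ N i := by
      rw [Real.sqrt_le_left (by linarith)]; nlinarith
    rw [norm_mul, Complex.norm_real, Real.norm_of_nonneg (Real.sqrt_nonneg _)]
    calc _ ≤ N i * (Real.exp (-(η / 2 * N i)) * (2 * Real.pi * N i) + Real.exp (-(η / 2 * N i)) * (2 * Real.pi * N i)) := by
          gcongr
          exact (norm_add_le _ _).trans (add_le_add i1 i2)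
      _ = _ := by field_simp; ring
  have := h1.add hrest
  rw [add_zero] at this
  refine this.congr' ?_
  filter_upwards [hNpos, hx1, hwre] with i hi1 hi2 hi3
  have hcont := JJ_cont (x i) (w i) (N i) hi2 (by linarith) hi3
  have hIntg : ∀ a b, IntervalIntegrable (JJ (x i) (w i) (N i)) MeasureTheory.volume a b :=
    fun a b => hcont.intervalIntegrable a b
  rw [← mul_add]
  congr 1
  rw [← intervalIntegral.integral_add_adjacent_intervals (hIntg (-(Real.pi * N i)) ((w i).im + 1)) (hIntg _ (Real.pi * N i)),
    ← intervalIntegral.integral_add_adjacent_intervals (hIntg (-(Real.pi * N i)) ((w i).im - 1)) (hIntg _ ((w i).im + 1))]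
  ring

theorem local_lim (K : Set ℂ) (x0 : ℂ) (hx0 : x0 ∈ interior R2) :
    Tendsto (fun i : ℕ × ℂ => Real.log ‖F i.1 i.2‖ / (2 * Real.sqrt i.1) -
      (1 / (2 : ℝ)) * ((dilog (i.2 ^ 2)) ^ (1 / 2 : ℂ)).re) (atTop ×ˢ 𝓝[K] x0) (𝓝 0) := by
  obtain ⟨h1, -, hpos, c, hc0, hc2, hc⟩ := interior_facts x0 hx0
  set l : Filter (ℕ × ℂ) := atTop ×ˢ 𝓝[K] x0 with hl
  have hwre : ∀ z : ℂ, ((dilog (z ^ 2)) ^ (1 / 2 : ℂ) / 2).re = fk 2 z := by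
    intro z
    rw [show (2:ℂ) = ((2:ℝ):ℂ) by norm_num]
    rw [Complex.div_ofReal_re]
    unfold fk
    push_cast
    ring
  have hwA : ∀ z : ℂ, ((dilog (z ^ 2)) ^ (1 / 2 : ℂ) / 2) ^ 2 = dilog (z ^ 2) / 4 := by
    intro z
    rw [div_pow, sqrt_sq]; norm_num
  have hN : Tendsto (fun i : ℕ × ℂ => √(i.1 : ℝ)) l atTop :=
    Real.tendsto_sqrt_atTop.comp (tendsto_natCast_atTop_atTop.comp tendsto_fst)
  have hx : Tendsto (fun i : ℕ × ℂ => i.2) l (𝓝 x0) :=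
    (tendsto_snd (f := atTop) (g := 𝓝[K] x0)).mono_right nhdsWithin_le_nhds
  have hcont : ContinuousAt (fun z : ℂ => (dilog (z ^ 2)) ^ (1 / 2 : ℂ) / 2) x0 :=
    (((analyticAt_sq 2 (by norm_num) x0 h1).cpow analyticAt_const
      (fk_pos_slit 2 x0 hpos)).div_const).continuousAt
  have hw := hcont.tendsto.comp hx
  obtain ⟨G, hG, hT⟩ := total_lim l (fun i => √(i.1 : ℝ)) (fun i => i.2)
    (fun i => (dilog (i.2 ^ 2)) ^ (1 / 2 : ℂ) / 2) x0 _ hN hx h1 hw (by rw [hwre]; exact hpos)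
    (fun i => hwA _) (hwA _) c hc0 (by rw [hwre]; exact hc2) hc
  set T : ℕ × ℂ → ℂ := fun i => ((√(√(i.1 : ℝ)) : ℝ) : ℂ) * ∫ y in (-(Real.pi * √(i.1 : ℝ)))..(Real.pi * √(i.1 : ℝ)),
      JJ i.2 ((dilog (i.2 ^ 2)) ^ (1 / 2 : ℂ) / 2) (√(i.1 : ℝ)) y with hTdef
  have hT' : Tendsto T l (𝓝 G) := hT
  have hx1 : ∀ᶠ i in l, ‖i.2‖ < 1 := hx.norm.eventually (gt_mem_nhds h1)
  have hn1 : ∀ᶠ i in l, 1 ≤ i.1 := tendsto_fst.eventually (eventually_ge_atTop 1)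
  have hσ : ∀ᶠ i in l, 0 < fk 2 i.2 := by
    have := (Complex.continuous_re.tendsto _).comp hw
    simp only [Function.comp_def, hwre] at this
    exact this.eventually (lt_mem_nhds hpos)
  have hTn : ∀ᶠ i in l, ‖T i‖ = √(√(i.1:ℝ)) * (Real.exp (-(2 * √(i.1:ℝ) * fk 2 i.2)) *
      (2 * Real.pi * √(i.1:ℝ) * ‖F i.1 i.2‖)) := by
    filter_upwards [hx1, hn1, hσ] with i g1 g2 g3
    have hC := cauchyF' i.2 g1 i.1 g2 (fk 2 i.2) g3
    set w := (dilog (i.2 ^ 2)) ^ (1 / 2 : ℂ) / 2 with hwdef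
    have hwr : w.re = fk 2 i.2 := hwre _
    have : ∀ y : ℝ, JJ i.2 w (√(i.1 : ℝ)) y = exp (-(2 * (√(i.1:ℝ):ℂ) * w)) *
        exp (HH i.2 (-exp (-(((fk 2 i.2 : ℝ) + y * I) / (√(i.1:ℝ) : ℝ)))) + (√(i.1:ℝ) : ℝ) * ((fk 2 i.2 : ℝ) + y * I)) := by
      intro y
      unfold JJ
      rw [hwr, ← exp_add]
      congr 1; ring
    simp only [hTdef]
    rw [← hwdef]
    simp_rw [this]
    rw [intervalIntegral.integral_const_mul, hC, norm_mul, norm_mul, norm_mul, norm_mul, norm_mul, norm_mul,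
      Complex.norm_exp, Complex.norm_real, Complex.norm_real, Complex.norm_real, norm_pow, norm_neg, norm_one, one_pow, one_mul,
      Real.norm_of_nonneg (Real.sqrt_nonneg _), Real.norm_of_nonneg (Real.sqrt_nonneg _), Complex.norm_ofNat,
      Real.norm_of_nonneg Real.pi_pos.le]
    congr 3
    rw [Complex.neg_re, show 2 * ((√(i.1:ℝ):ℝ):ℂ) * w = ((2 * √(i.1:ℝ) : ℝ) : ℂ) * w by push_cast; ring,
      Complex.re_ofReal_mul, hwr]
  have hlogT : Tendsto (fun i => Real.log ‖T i‖) l (𝓝 (Real.log ‖G‖)) :=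
    hT'.norm.log (norm_ne_zero_iff.2 hG)
  have hTne : ∀ᶠ i in l, T i ≠ 0 := hT'.eventually_ne hG
  have hlogN : Tendsto (fun i : ℕ × ℂ => Real.log (√(i.1:ℝ)) / √(i.1:ℝ)) l (𝓝 0) :=
    (Real.isLittleO_log_id_atTop.tendsto_div_nhds_zero).comp hN
  have hfin : Tendsto (fun i : ℕ × ℂ => (Real.log ‖T i‖ - Real.log (2 * Real.pi)) / √(i.1:ℝ) / 2 -
      3 / 4 * (Real.log (√(i.1:ℝ)) / √(i.1:ℝ))) l (𝓝 0) := by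
    have := (((hlogT.sub_const (Real.log (2 * Real.pi))).div_atTop hN).div_const 2).sub (hlogN.const_mul (3/4))
    simpa using this
  refine hfin.congr' ?_
  filter_upwards [hTn, hTne, hn1] with i g1 g2 g3
  have hNp : 0 < √(i.1:ℝ) := Real.sqrt_pos.2 (by exact_mod_cast g3)
  have hF : ‖F i.1 i.2‖ ≠ 0 := by
    intro h
    rw [h] at g1
    simp at g1
    exact g2 g1
  have hs : Real.log (√(√(i.1:ℝ))) = Real.log (√(i.1:ℝ)) / 2 := Real.log_sqrt hNp.le
  have hf : (1 / (2 : ℝ)) * ((dilog (i.2 ^ 2)) ^ (1 / 2 : ℂ)).re = fk 2 i.2 := by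
    unfold fk; push_cast; rfl
  rw [hf, g1, Real.log_mul (Real.sqrt_pos.2 hNp).ne' (by positivity), Real.log_mul (Real.exp_pos _).ne' (by positivity),
    Real.log_exp, Real.log_mul (by positivity) hF, Real.log_mul (by positivity) hNp.ne', hs]
  field_simp
  ring

theorem sqrt_n_asymptotics_region_2 (K : Set ℂ) (hK : K ⊆ interior R2) (hKc : IsCompact K) :
    TendstoUniformlyOn (fun (n : ℕ) (z : ℂ) => Real.log ‖F n z‖ / (2 * Real.sqrt n))
      (fun z : ℂ => (1 / (2 : ℝ)) * ((dilog (z ^ 2)) ^ (1 / 2 : ℂ)).re) atTop K := by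
  rw [← tendstoLocallyUniformlyOn_iff_tendstoUniformlyOn_of_compact hKc,
    tendstoLocallyUniformlyOn_iff_forall_tendsto]
  intro x0 hx0
  rw [tendsto_uniformity_iff_dist_tendsto_zero]
  have := (local_lim K x0 (hK hx0)).norm
  rw [norm_zero] at this
  refine this.congr fun i => ?_
  rw [dist_comm, Real.dist_eq, Real.norm_eq_abs]
end

section
/- Let h, k be relatively prime integers with 0 ≤ h < k, and fix a complex x with |x| < 1. Let Q̃ be the analytic continuation to ℂ ∖ {1} of Q_{h,k}(s) = ∑_{m≥1} ∑_{l≥1} (x^l e^{2πi l m h/k}/l)·(lm)^{−s}. Then there exists δ > 0 such that for all complex z with Re(z) > 0 and |z| < δ: P(x, e^{2πi(h/k + iz)}) = e^{w_{h,k}} · exp( Li₂(x^k)/(2π k² z) ) · exp( j_{h,k}(z) ), where w_{h,k} = (1/(2k))·ln(1 − x^k) + ∑_{l ≥ 1, k ∤ l} (x^l/l)·1/(e^{−2πi l h/k} − 1), and j_{h,k}(z) = (1/2πi)·∫ Q̃(s)·Γ(s)·(2πz)^{−s} ds, the integral taken over the vertical line Re(s) = −3/4 oriented upward (this integral converges absolutely).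 -/
open Complex Filter Real MeasureTheory

/-- The bivariate generating function `P(x,u) = ∏_{j≥1} (1 - x uʲ)⁻¹`. -/
noncomputable def Pgen (x u : ℂ) : ℂ := ∏' j : ℕ, (1 - x * u ^ (j + 1))⁻¹

/-- The term of the double series `Q_{h,k}(s)` indexed by `(m,l) = (p.1+1, p.2+1)`:
`(x^l e^{2πi l m h/k}/l)·(lm)^{-s}`. -/
noncomputable def Qterm (h k : ℕ) (x : ℂ) (s : ℂ) (p : ℕ × ℕ) : ℂ :=
  x ^ (p.2 + 1) * Complex.exp (2 * Real.pi * Complex.I * (p.2 + 1) * (p.1 + 1) * h / k) /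
    (p.2 + 1) * (((p.2 + 1) * (p.1 + 1) : ℂ)) ^ (-s)

/-- The constant `w_{h,k} = (1/2k)·ln(1-x^k) + ∑_{l≥1, k∤l} (x^l/l)/(e^{-2πi l h/k}-1)`. -/
noncomputable def whk (h k : ℕ) (x : ℂ) : ℂ :=
  (1 / (2 * (k : ℂ))) * Complex.log (1 - x ^ k) +
    ∑' l : ℕ, (if k ∣ (l + 1) then 0 else
      x ^ (l + 1) / (l + 1) *
        (1 / (Complex.exp (-(2 * Real.pi * Complex.I * (l + 1) * h / k)) - 1)))

lemma aux_norm_integrand {s c : ℂ} {t : ℝ} (ht : 0 < t) :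
    ‖(t : ℂ) ^ (s - 1) * Complex.exp (-(c * t))‖ = t ^ (s.re - 1) * Real.exp (-c.re * t) := by
  rw [norm_mul, Complex.norm_cpow_eq_rpow_re_of_pos ht, Complex.norm_exp]
  simp

lemma aux_real_integrable {σ c : ℝ} (hs : 0 < σ) (hc : 0 < c) :
    IntegrableOn (fun t : ℝ => t ^ (σ - 1) * Real.exp (-c * t)) (Set.Ioi 0) := by
  have := integrableOn_rpow_mul_exp_neg_mul_rpow (p := 1) (s := σ - 1) (b := c) (by linarith)
    one_pos hc
  simpa using this

lemma aux_contOn (s c : ℂ) :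
    ContinuousOn (fun t : ℝ => (t : ℂ) ^ (s - 1) * Complex.exp (-(c * t))) (Set.Ioi 0) := by
  refine ContinuousOn.mul ?_ (by fun_prop)
  intro t ht
  exact (Complex.continuousAt_ofReal_cpow_const _ _ (Or.inr (ne_of_gt ht))).continuousWithinAt

lemma aux_integrable {s c : ℂ} (hs : 0 < s.re) (hc : 0 < c.re) :
    IntegrableOn (fun t : ℝ => (t : ℂ) ^ (s - 1) * Complex.exp (-(c * t))) (Set.Ioi 0) := by
  refine Integrable.mono' (aux_real_integrable hs hc)
    ((aux_contOn s c).aestronglyMeasurable measurableSet_Ioi) ?_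
  filter_upwards [ae_restrict_mem measurableSet_Ioi] with t ht
  exact (aux_norm_integrand ht).le

lemma aux_differentiable {s c : ℂ} (hs : 0 < s.re) (hc : 0 < c.re) :
    DifferentiableAt ℂ (fun c : ℂ => ∫ t : ℝ in Set.Ioi 0,
      (t : ℂ) ^ (s - 1) * Complex.exp (-(c * t))) c := by
  have hopen : {w : ℂ | c.re / 2 < w.re} ∈ nhds c :=
    (isOpen_lt continuous_const Complex.continuous_re).mem_nhds (by simp; linarith)
  refine (hasDerivAt_integral_of_dominated_loc_of_deriv_le
    (μ := volume.restrict (Set.Ioi (0 : ℝ)))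
    (F := fun (w : ℂ) (t : ℝ) => (t : ℂ) ^ (s - 1) * Complex.exp (-(w * t)))
    (F' := fun w t => (t : ℂ) ^ (s - 1) * (Complex.exp (-(w * t)) * (-(t : ℂ))))
    (bound := fun t => t ^ (s.re + 1 - 1) * Real.exp (-(c.re / 2) * t))
    hopen ?_ (aux_integrable hs hc) ?_ ?_ ?_ ?_).2.differentiableAt
  · exact Filter.Eventually.of_forall fun w =>
      (aux_contOn s w).aestronglyMeasurable measurableSet_Ioi
  · have h1 : ContinuousOn (fun t : ℝ => ((t : ℂ) ^ (s - 1) * Complex.exp (-(c * t))) * (-(t : ℂ)))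
      (Set.Ioi 0) := (aux_contOn s c).mul (by fun_prop)
    simp only [mul_assoc] at h1
    exact h1.aestronglyMeasurable measurableSet_Ioi
  · filter_upwards [ae_restrict_mem measurableSet_Ioi] with t ht w hw
    have ht' : 0 < t := ht
    rw [← mul_assoc, norm_mul, aux_norm_integrand ht', norm_neg, Complex.norm_real,
      Real.norm_of_nonneg ht'.le]
    have h2 : t ^ (s.re + 1 - 1) = t ^ (s.re - 1) * t := by
      rw [← Real.rpow_add_one ht'.ne']; congr 1; ring
    rw [h2]
    have h3 : Real.exp (-w.re * t) ≤ Real.exp (-(c.re / 2) * t) := by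
      apply Real.exp_le_exp.mpr
      have : c.re / 2 < w.re := hw
      nlinarith
    have : 0 ≤ t ^ (s.re - 1) := Real.rpow_nonneg ht'.le _
    calc t ^ (s.re - 1) * Real.exp (-w.re * t) * t
        = (t ^ (s.re - 1) * t) * Real.exp (-w.re * t) := by ring
      _ ≤ _ := by gcongr
  · exact aux_real_integrable (by linarith) (by linarith)
  · filter_upwards with t w hw
    refine HasDerivAt.const_mul _ ?_
    refine HasDerivAt.cexp ?_
    have h5 := ((hasDerivAt_id w).mul_const (t : ℂ)).fun_neg
    simpa using h5

lemma cgamma_int {s c : ℂ} (hs : 0 < s.re) (hc : 0 < c.re) :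
    ∫ t : ℝ in Set.Ioi 0, (t : ℂ) ^ (s - 1) * Complex.exp (-(c * t)) =
      c ^ (-s) * Complex.Gamma s := by
  have hU : IsOpen {w : ℂ | 0 < w.re} := isOpen_lt continuous_const Complex.continuous_re
  have hf : AnalyticOnNhd ℂ (fun c : ℂ => ∫ t : ℝ in Set.Ioi 0,
      (t : ℂ) ^ (s - 1) * Complex.exp (-(c * t))) {w : ℂ | 0 < w.re} :=
    DifferentiableOn.analyticOnNhd
      (fun w hw => (aux_differentiable hs hw).differentiableWithinAt) hU
  have hg : AnalyticOnNhd ℂ (fun c : ℂ => c ^ (-s) * Complex.Gamma s) {w : ℂ | 0 < w.re} := by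
    refine DifferentiableOn.analyticOnNhd (fun w hw => ?_) hU
    exact ((differentiableAt_id.cpow_const (Or.inl hw)).mul_const _).differentiableWithinAt
  refine hf.eqOn_of_preconnected_of_frequently_eq hg
    (convex_halfSpace_re_gt 0).isPreconnected (z₀ := 1) (by simp) ?_ hc
  have hseq : Filter.Tendsto (fun n : ℕ => ((1 + 1 / ((n : ℝ) + 1) : ℝ) : ℂ)) Filter.atTop
      (nhdsWithin 1 {1}ᶜ) := by
    refine tendsto_nhdsWithin_iff.mpr ⟨?_, Filter.Eventually.of_forall fun n => ?_⟩
    · have : Filter.Tendsto (fun n : ℕ => (1 + 1 / ((n : ℝ) + 1) : ℝ)) Filter.atTop (nhds (1 + 0)) :=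
        tendsto_one_div_add_atTop_nhds_zero_nat.const_add 1
      rw [add_zero] at this
      have := (Complex.continuous_ofReal.tendsto 1).comp this
      rw [Complex.ofReal_one] at this
      exact this
    · have : (1 + 1 / ((n : ℝ) + 1) : ℝ) ≠ 1 := by
        have : 0 < 1 / ((n : ℝ) + 1) := by positivity
        linarith
      simp only [Set.mem_compl_iff, Set.mem_singleton_iff]
      exact_mod_cast this
  refine hseq.frequently (Filter.Frequently.of_forall fun n => ?_)
  have hpos : (0 : ℝ) < 1 + 1 / ((n : ℝ) + 1) := by positivity
  rw [Complex.integral_cpow_mul_exp_neg_mul_Ioi hs hpos, one_div, Complex.cpow_neg,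
    Complex.inv_cpow]
  rw [Complex.arg_ofReal_of_nonneg hpos.le]
  exact Real.pi_pos.ne

lemma csplit {r : ℝ} (hr : 0 < r) {z : ℂ} (hz : z ≠ 0) (s : ℂ) :
    (z * r) ^ s = z ^ s * (r : ℂ) ^ s := by
  have hr' : (r : ℂ) ≠ 0 := by exact_mod_cast hr.ne'
  rw [Complex.cpow_def_of_ne_zero (mul_ne_zero hz hr'), Complex.cpow_def_of_ne_zero hz,
    Complex.cpow_def_of_ne_zero hr', Complex.log_mul_ofReal r hr z hz, ← Complex.exp_add,
    Complex.ofReal_log hr.le]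
  congr 1; ring

lemma mellin_sum {ι : Type*} [Countable ι] {a c : ι → ℂ} {F : ℝ → ℂ} {s : ℂ}
    (hc : ∀ i, 0 < (c i).re) (hs : 0 < s.re)
    (hF : ∀ t ∈ Set.Ioi (0 : ℝ), HasSum (fun i ↦ a i * Complex.exp (-(c i * t))) (F t))
    (h_sum : Summable fun i ↦ ‖a i‖ * (1 / (c i).re) ^ s.re) :
    HasSum (fun i ↦ a i * ((c i) ^ (-s) * Complex.Gamma s)) (mellin F s) := by
  simp_rw [mellin, smul_eq_mul, ← setIntegral_congr_fun measurableSet_Ioi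
    (fun t ht ↦ congr_arg _ (hF t ht).tsum_eq), ← tsum_mul_left]
  have hre : ∀ i (t : ℝ), (t : ℂ) ^ (s - 1) * (a i * Complex.exp (-(c i * t))) =
    a i * ((t : ℂ) ^ (s - 1) * Complex.exp (-(c i * t))) := fun i t => by ring
  simp_rw [hre]
  have := hasSum_integral_of_summable_integral_norm (μ := volume.restrict (Set.Ioi (0:ℝ)))
    (F := fun i (t : ℝ) ↦ a i * ((t : ℂ) ^ (s - 1) * Complex.exp (-(c i * t))))
    (fun i => (aux_integrable hs (hc i)).const_mul (a i)) ?_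
  · refine this.congr_fun ?_
    intro i
    rw [integral_const_mul, cgamma_int hs (hc i)]
  · refine (h_sum.mul_right (Real.Gamma s.re)).congr fun i => ?_
    simp_rw [norm_mul (a i), integral_const_mul, mul_assoc]
    congr 1
    rw [← Real.integral_rpow_mul_exp_neg_mul_Ioi hs (hc i)]
    refine setIntegral_congr_fun measurableSet_Ioi (fun t ht => ?_)
    rw [aux_norm_integrand ht, neg_mul]
/-- Coefficient of the double series. -/
noncomputable def acoef (h k : ℕ) (x : ℂ) (p : ℕ × ℕ) : ℂ :=
  x ^ (p.2 + 1) * Complex.exp (2 * Real.pi * Complex.I * (p.2 + 1) * (p.1 + 1) * h / k) /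
    (p.2 + 1)

/-- The product index `l m`. -/
def lmr (p : ℕ × ℕ) : ℝ := ((p.2 : ℝ) + 1) * ((p.1 : ℝ) + 1)

/-- The logarithm of the generating function. -/
noncomputable def Fser (h k : ℕ) (x z : ℂ) : ℂ :=
  ∑' p : ℕ × ℕ, acoef h k x p * Complex.exp (-(2 * Real.pi * z * (lmr p : ℂ)))

lemma lmr_ge_one (p : ℕ × ℕ) : 1 ≤ lmr p := by
  unfold lmr
  have h1 : (0 : ℝ) ≤ p.1 := by positivity
  have h2 : (0 : ℝ) ≤ p.2 := by positivity
  nlinarith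

lemma lmr_pos (p : ℕ × ℕ) : 0 < lmr p := lt_of_lt_of_le one_pos (lmr_ge_one p)

lemma lmr_ge (p : ℕ × ℕ) : (p.1 : ℝ) + 1 ≤ lmr p := by
  unfold lmr
  have h1 : (0 : ℝ) ≤ p.1 := by positivity
  have h2 : (0 : ℝ) ≤ p.2 := by positivity
  nlinarith

lemma norm_cis (r : ℝ) {w : ℂ} (hw : w = r * Complex.I) : ‖Complex.exp w‖ = 1 := by
  rw [hw, Complex.norm_exp_ofReal_mul_I]

lemma norm_acoef (h k : ℕ) (x : ℂ) (p : ℕ × ℕ) :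
    ‖acoef h k x p‖ = ‖x‖ ^ (p.2 + 1) / ((p.2 : ℝ) + 1) := by
  unfold acoef
  rw [norm_div, norm_mul, norm_pow, norm_cis (2 * Real.pi * (p.2 + 1) * (p.1 + 1) * h / k)
    (by push_cast; ring), mul_one]
  congr 1
  have : ((p.2 : ℂ) + 1) = (((p.2 : ℝ) + 1 : ℝ) : ℂ) := by push_cast; rfl
  rw [this, Complex.norm_real, Real.norm_of_nonneg (by positivity)]

lemma norm_acoef_le (h k : ℕ) (x : ℂ) (p : ℕ × ℕ) :
    ‖acoef h k x p‖ ≤ ‖x‖ ^ (p.2 + 1) := by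
  rw [norm_acoef]
  apply div_le_self (by positivity)
  have h2 : (0 : ℝ) ≤ p.2 := by positivity
  linarith

lemma norm_expterm (z : ℂ) (r : ℝ) :
    ‖Complex.exp (-(2 * Real.pi * z * (r : ℂ)))‖ = Real.exp (-(2 * Real.pi * z.re * r)) := by
  rw [Complex.norm_exp]
  congr 1
  simp [Complex.mul_re]

lemma summable_bound {x : ℂ} (hx : ‖x‖ < 1) {c : ℝ} (hc : 0 < c) :
    Summable (fun p : ℕ × ℕ => ‖x‖ ^ (p.2 + 1) * Real.exp (-(2 * Real.pi * c * lmr p))) := by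
  have h1 : Summable (fun l : ℕ => ‖x‖ ^ (l + 1)) :=
    (summable_nat_add_iff 1).mpr (summable_geometric_of_lt_one (norm_nonneg x) hx)
  have hr : Real.exp (-(2 * Real.pi * c)) < 1 := by
    rw [Real.exp_lt_one_iff]; have := Real.pi_pos; nlinarith [mul_pos this hc]
  have h2 : Summable (fun m : ℕ => Real.exp (-(2 * Real.pi * c)) ^ (m + 1)) :=
    (summable_nat_add_iff 1).mpr (summable_geometric_of_lt_one (Real.exp_pos _).le hr)
  have h3 := h2.mul_of_nonneg h1 (fun _ => by positivity) (fun _ => by positivity)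
  refine Summable.of_nonneg_of_le (fun p => by positivity) (fun p => ?_) h3
  rw [mul_comm]
  gcongr
  rw [← Real.exp_nat_mul]
  apply Real.exp_le_exp.mpr
  have := lmr_ge p
  have h4 : 0 < 2 * Real.pi * c := by have := Real.pi_pos; positivity
  push_cast
  nlinarith

lemma norm_term_le (h k : ℕ) (x z : ℂ) (p : ℕ × ℕ) :
    ‖acoef h k x p * Complex.exp (-(2 * Real.pi * z * (lmr p : ℂ)))‖ ≤
      ‖x‖ ^ (p.2 + 1) * Real.exp (-(2 * Real.pi * z.re * lmr p)) := by
  rw [norm_mul, norm_expterm]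
  gcongr
  exact norm_acoef_le h k x p

lemma summable_term (h k : ℕ) {x : ℂ} (hx : ‖x‖ < 1) {z : ℂ} (hz : 0 < z.re) :
    Summable (fun p : ℕ × ℕ => acoef h k x p * Complex.exp (-(2 * Real.pi * z * (lmr p : ℂ)))) :=
  Summable.of_norm_bounded (summable_bound hx hz) (norm_term_le h k x z)

lemma Pgen_eq (h k : ℕ) {x : ℂ} (hx : ‖x‖ < 1) {z : ℂ} (hz : 0 < z.re) :
    Pgen x (Complex.exp (2 * Real.pi * Complex.I * ((h : ℂ) / k + Complex.I * z))) =
      Complex.exp (Fser h k x z) := by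
  set u := Complex.exp (2 * Real.pi * Complex.I * ((h : ℂ) / k + Complex.I * z)) with hu
  have hun : ‖u‖ < 1 := by
    rw [hu, Complex.norm_exp, Real.exp_lt_one_iff]
    have : (2 * Real.pi * Complex.I * ((h : ℂ) / k + Complex.I * z)) =
      ((2 * Real.pi * h / k : ℝ) : ℂ) * Complex.I - ((2 * Real.pi : ℝ) : ℂ) * z := by
      push_cast; linear_combination 2 * Real.pi * z * Complex.I_sq
    rw [this]
    simp only [Complex.sub_re, Complex.re_ofReal_mul, Complex.I_re]
    have := Real.pi_pos
    nlinarith [mul_pos this hz]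
  have hy : ∀ m : ℕ, ‖x * u ^ (m + 1)‖ < 1 := fun m => by
    rw [norm_mul, norm_pow]
    calc ‖x‖ * ‖u‖ ^ (m + 1) ≤ ‖x‖ * 1 := by
          gcongr; exact pow_le_one₀ (norm_nonneg _) hun.le
      _ < 1 := by simpa using hx
  have hsum : HasSum (fun m : ℕ => -Complex.log (1 - x * u ^ (m + 1))) (Fser h k x z) := by
    refine (summable_term h k hx hz).hasSum.prod_fiberwise fun m => ?_
    refine (Complex.hasSum_taylorSeries_neg_log' (hy m)).congr_fun fun l => ?_
    unfold acoef lmr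
    rw [mul_pow, ← pow_mul, hu, ← Complex.exp_nat_mul, div_mul_eq_mul_div, mul_assoc,
      ← Complex.exp_add]
    congr 3
    push_cast
    linear_combination -2 * Real.pi * z * ((l : ℂ) + 1) * (m + 1) * Complex.I_sq
  have hprod := hsum.cexp
  unfold Pgen
  rw [← hprod.tprod_eq]
  refine tprod_congr fun m => ?_
  have hne : 1 - x * u ^ (m + 1) ≠ 0 := by
    intro h0
    have : x * u ^ (m + 1) = 1 := (sub_eq_zero.mp h0).symm
    have h1 := hy m
    rw [this] at h1
    simp at h1
  simp only [Function.comp]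
  rw [Complex.exp_neg, Complex.exp_log hne]

lemma Fser_eq (h k : ℕ) {x : ℂ} (hx : ‖x‖ < 1) {z : ℂ} (hz : 0 < z.re) :
    HasSum (fun l : ℕ => x ^ (l + 1) / (l + 1) *
      (1 / (Complex.exp (2 * Real.pi * (l + 1) * z) *
        Complex.exp (-(2 * Real.pi * Complex.I * (l + 1) * h / k)) - 1))) (Fser h k x z) := by
  have hs := (summable_term h k hx hz).hasSum
  have hs' := (Equiv.prodComm ℕ ℕ).hasSum_iff.mpr hs
  refine hs'.prod_fiberwise fun l => ?_
  set q := Complex.exp (2 * Real.pi * Complex.I * (l + 1) * h / k - 2 * Real.pi * (l + 1) * z)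
    with hq
  have hqn : ‖q‖ < 1 := by
    rw [hq, Complex.norm_exp, Real.exp_lt_one_iff]
    have : (2 * Real.pi * Complex.I * (l + 1) * h / k - 2 * Real.pi * (l + 1) * z : ℂ) =
      ((2 * Real.pi * (l + 1) * h / k : ℝ) : ℂ) * Complex.I - ((2 * Real.pi * (l + 1) : ℝ) : ℂ) * z := by
      push_cast; ring
    rw [this]
    simp only [Complex.sub_re, Complex.re_ofReal_mul, Complex.I_re]
    have h1 : 0 < 2 * Real.pi * ((l : ℝ) + 1) := by have := Real.pi_pos; positivity
    nlinarith [mul_pos h1 hz]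
  have hq0 : q ≠ 0 := Complex.exp_ne_zero _
  have hq1 : 1 - q ≠ 0 := by
    intro h0
    rw [← sub_eq_zero.mp h0] at hqn
    simp at hqn
  have hval : Complex.exp (2 * Real.pi * (l + 1) * z) *
        Complex.exp (-(2 * Real.pi * Complex.I * (l + 1) * h / k)) = q⁻¹ := by
    rw [hq, ← Complex.exp_neg, ← Complex.exp_add]; congr 1; ring
  rw [hval]
  have hg := ((hasSum_geometric_of_norm_lt_one hqn).mul_left q).mul_left (x ^ (l + 1) / (l + 1 : ℂ))
  have hv2 : q * (1 - q)⁻¹ = 1 / (q⁻¹ - 1) := by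
    have : q⁻¹ - 1 = (1 - q) / q := by field_simp
    rw [this]; field_simp
  rw [hv2] at hg
  refine hg.congr_fun fun m => ?_
  simp only [Function.comp, Equiv.prodComm_apply, Prod.swap, acoef, lmr]
  rw [← pow_succ', hq, ← Complex.exp_nat_mul, div_mul_eq_mul_div, mul_assoc,
      ← Complex.exp_add, div_mul_eq_mul_div]
  congr 3
  push_cast
  ring
lemma lower_exp {u β : ℂ} (hβ : ‖β‖ = 1) (_hu : 0 < u.re) :
    u.re ≤ ‖Complex.exp u * β - 1‖ := by
  have h1 : ‖Complex.exp u * β‖ - ‖(1 : ℂ)‖ ≤ ‖Complex.exp u * β - 1‖ := norm_sub_norm_le _ _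
  rw [norm_mul, hβ, Complex.norm_exp, norm_one, mul_one] at h1
  have := Real.add_one_le_exp u.re
  linarith

lemma ray1 {v : ℂ} (hv : 0 < v.re) : ∃ C : ℝ, 0 ≤ C ∧ ∀ r : ℝ, 0 < r →
    ‖1 / (Complex.exp (r * v) - 1) - (1 / (r * v) - 1 / 2)‖ ≤ C * r := by
  have hv0 : v ≠ 0 := by rintro rfl; simp at hv
  have hvn : 0 < ‖v‖ := norm_pos_iff.mpr hv0
  set d := v.re / (2 * ‖v‖) with hd
  have hdpos : 0 < d := by positivity
  refine ⟨‖v‖ * (3 + 2 * (1 / d + 5 / 2)), by positivity, fun r hr => ?_⟩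
  set u : ℂ := r * v with hu
  have hun : ‖u‖ = r * ‖v‖ := by rw [hu, norm_mul, Complex.norm_real, Real.norm_of_nonneg hr.le]
  have hupos : 0 < ‖u‖ := by rw [hun]; positivity
  have hu0 : u ≠ 0 := norm_pos_iff.mp hupos
  have hure : u.re = r * v.re := by rw [hu, Complex.re_ofReal_mul]
  have hurepos : 0 < u.re := by rw [hure]; positivity
  have hlow := lower_exp (β := 1) (by simp) hurepos
  rw [mul_one] at hlow
  have hE0 : Complex.exp u - 1 ≠ 0 := norm_pos_iff.mp (lt_of_lt_of_le hurepos hlow)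
  have hgoal : ‖v‖ * (3 + 2 * (1 / d + 5 / 2)) * r = (3 + 2 * (1 / d + 5 / 2)) * ‖u‖ := by
    rw [hun]; ring
  rw [hgoal]
  by_cases hsm : ‖u‖ ≤ 1 / 2
  · have hR2 := Complex.norm_exp_sub_one_sub_id_le (x := u) (by linarith)
    have hR3 := Complex.exp_bound (x := u) (by linarith) (n := 3) (by norm_num)
    simp only [Finset.sum_range_succ, Finset.sum_range_zero, Nat.factorial] at hR3
    norm_num at hR3
    set R2 := Complex.exp u - 1 - u with hR2d
    set R3 := Complex.exp u - (1 + u + u ^ 2 / 2) with hR3d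
    have hEl : ‖u‖ / 2 ≤ ‖Complex.exp u - 1‖ := by
      have : ‖u‖ - ‖R2‖ ≤ ‖u - (-R2)‖ := by
        have := norm_sub_norm_le u (-R2); rwa [norm_neg] at this
      have h2 : u - (-R2) = Complex.exp u - 1 := by rw [hR2d]; ring
      rw [h2] at this
      nlinarith
    have hid : 1 / (Complex.exp u - 1) - (1 / u - 1 / 2) =
        (-2 * R3 + u * R2) / (2 * u * (Complex.exp u - 1)) := by
      rw [eq_div_iff (by simp [hu0, hE0])]
      rw [hR3d, hR2d]
      field_simp
      ring
    rw [hid, norm_div]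
    have hnum : ‖-2 * R3 + u * R2‖ ≤ 3 * ‖u‖ ^ 3 := by
      calc ‖-2 * R3 + u * R2‖ ≤ ‖-2 * R3‖ + ‖u * R2‖ := norm_add_le _ _
        _ = 2 * ‖R3‖ + ‖u‖ * ‖R2‖ := by simp
        _ ≤ 2 * (‖u‖ ^ 3 * (2 / 9)) + ‖u‖ * ‖u‖ ^ 2 := by gcongr
        _ ≤ 3 * ‖u‖ ^ 3 := by nlinarith [pow_pos hupos 3]
    have hden : ‖u‖ ^ 2 ≤ ‖2 * u * (Complex.exp u - 1)‖ := by
      rw [norm_mul (2 * u), norm_mul 2 u, show ‖(2 : ℂ)‖ = 2 by simp]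
      nlinarith
    calc ‖-2 * R3 + u * R2‖ / ‖2 * u * (Complex.exp u - 1)‖ ≤ 3 * ‖u‖ ^ 3 / ‖u‖ ^ 2 := by gcongr
      _ = 3 * ‖u‖ := by field_simp
      _ ≤ _ := by gcongr; linarith [show 0 ≤ 2 * (1 / d + 5 / 2) by positivity]
  · push Not at hsm
    have hdu : d ≤ ‖Complex.exp u - 1‖ := by
      refine le_trans ?_ hlow
      rw [hure, hd, div_le_iff₀ (by positivity)]
      rw [hun] at hsm
      nlinarith
    calc ‖1 / (Complex.exp u - 1) - (1 / u - 1 / 2)‖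
        ≤ ‖1 / (Complex.exp u - 1)‖ + (‖1 / u‖ + ‖(1 / 2 : ℂ)‖) :=
          (norm_sub_le _ _).trans (by gcongr; exact norm_sub_le _ _)
      _ ≤ 1 / d + (2 + 1 / 2) := by
          gcongr
          · rw [norm_div, norm_one]; gcongr
          · rw [norm_div, norm_one, div_le_iff₀ hupos]; linarith
          · simp
      _ = (1 / d + 5 / 2) * 1 := by ring
      _ ≤ (1 / d + 5 / 2) * (2 * ‖u‖) := by gcongr; linarith
      _ ≤ _ := by nlinarith

lemma ray2 {v : ℂ} (hv : 0 < v.re) {β : ℂ} (hβ : ‖β‖ = 1) (hβ1 : β ≠ 1) :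
    ∃ C : ℝ, 0 ≤ C ∧ ∀ r : ℝ, 0 < r →
    ‖1 / (Complex.exp (r * v) * β - 1) - 1 / (β - 1)‖ ≤ C * r := by
  have hv0 : v ≠ 0 := by rintro rfl; simp at hv
  have hvn : 0 < ‖v‖ := norm_pos_iff.mpr hv0
  have hb0 : β - 1 ≠ 0 := sub_ne_zero.mpr hβ1
  set b := ‖β - 1‖ with hb
  have hbpos : 0 < b := norm_pos_iff.mpr hb0
  have hb2 : b ≤ 2 := by
    have := norm_sub_le β 1; rw [hβ, norm_one] at this; linarith
  set d := b * v.re / (4 * ‖v‖) with hd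
  have hdpos : 0 < d := by positivity
  refine ⟨‖v‖ * (4 / b ^ 2 + (1 / d + 1 / b) * (4 / b)), by positivity, fun r hr => ?_⟩
  set u : ℂ := r * v with hu
  have hun : ‖u‖ = r * ‖v‖ := by rw [hu, norm_mul, Complex.norm_real, Real.norm_of_nonneg hr.le]
  have hupos : 0 < ‖u‖ := by rw [hun]; positivity
  have hure : u.re = r * v.re := by rw [hu, Complex.re_ofReal_mul]
  have hurepos : 0 < u.re := by rw [hure]; positivity
  have hlow := lower_exp hβ hurepos
  have hE0 : Complex.exp u * β - 1 ≠ 0 := norm_pos_iff.mp (lt_of_lt_of_le hurepos hlow)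
  have hgoal : ‖v‖ * (4 / b ^ 2 + (1 / d + 1 / b) * (4 / b)) * r =
      (4 / b ^ 2 + (1 / d + 1 / b) * (4 / b)) * ‖u‖ := by
    rw [hun]; ring
  rw [hgoal]
  by_cases hsm : ‖u‖ ≤ b / 4
  · have h1 : ‖Complex.exp u - 1‖ ≤ 2 * ‖u‖ := Complex.norm_exp_sub_one_le (by linarith)
    have hEl : b / 2 ≤ ‖Complex.exp u * β - 1‖ := by
      have h2 : ‖β - 1‖ - ‖(1 - Complex.exp u) * β‖ ≤ ‖(β - 1) - (1 - Complex.exp u) * β‖ :=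
        norm_sub_norm_le _ _
      have h3 : (β - 1) - (1 - Complex.exp u) * β = Complex.exp u * β - 1 := by ring
      rw [h3, norm_mul, hβ, mul_one, norm_sub_rev 1] at h2
      linarith
    have hid : 1 / (Complex.exp u * β - 1) - 1 / (β - 1) =
        (β * (1 - Complex.exp u)) / ((Complex.exp u * β - 1) * (β - 1)) := by
      rw [eq_div_iff (by simp [hb0, hE0])]
      field_simp
      ring
    rw [hid, norm_div, norm_mul, norm_mul, hβ, one_mul, norm_sub_rev 1, ← hb]
    calc ‖Complex.exp u - 1‖ / (‖Complex.exp u * β - 1‖ * b) ≤ 2 * ‖u‖ / (b / 2 * b) := by gcongr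
      _ = 4 / b ^ 2 * ‖u‖ := by field_simp; ring
      _ ≤ _ := by gcongr; linarith [show 0 ≤ (1 / d + 1 / b) * (4 / b) by positivity]
  · push Not at hsm
    have hdu : d ≤ ‖Complex.exp u * β - 1‖ := by
      refine le_trans ?_ hlow
      rw [hure, hd, div_le_iff₀ (by positivity)]
      rw [hun] at hsm
      nlinarith
    calc ‖1 / (Complex.exp u * β - 1) - 1 / (β - 1)‖
        ≤ ‖1 / (Complex.exp u * β - 1)‖ + ‖1 / (β - 1)‖ := norm_sub_le _ _
      _ ≤ 1 / d + 1 / b := by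
          gcongr
          · rw [norm_div, norm_one]; gcongr
          · rw [norm_div, norm_one]
      _ = (1 / d + 1 / b) * 1 := by ring
      _ ≤ (1 / d + 1 / b) * (4 / b * ‖u‖) := by
          gcongr
          rw [div_mul_eq_mul_div, le_div_iff₀ hbpos]; linarith
      _ = (1 / d + 1 / b) * (4 / b) * ‖u‖ := by ring
      _ ≤ _ := by gcongr; linarith [show 0 ≤ 4 / b ^ 2 by positivity]

/-- The root of unity `e^{-2πi j h/k}`. -/
noncomputable def bet (h k j : ℕ) : ℂ := Complex.exp (-(2 * Real.pi * Complex.I * j * h / k))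

lemma norm_bet (h k j : ℕ) : ‖bet h k j‖ = 1 := by
  unfold bet
  exact norm_cis (-(2 * Real.pi * j * h / k)) (by push_cast; ring)

lemma bet_eq_one_iff {h k : ℕ} (hk : 0 < k) (hco : Nat.Coprime h k) (j : ℕ) :
    bet h k j = 1 ↔ k ∣ j := by
  have hk0 : (k : ℂ) ≠ 0 := by exact_mod_cast hk.ne'
  have hpi : (2 * Real.pi * Complex.I : ℂ) ≠ 0 := Complex.two_pi_I_ne_zero
  unfold bet
  rw [Complex.exp_eq_one_iff]
  constructor
  · rintro ⟨n, hn⟩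
    have h1 : ((j : ℂ) * h) = -n * k := by
      have : (2 * Real.pi * Complex.I : ℂ) * ((j : ℂ) * h) = (2 * Real.pi * Complex.I) * (-n * k) := by
        field_simp at hn
        linear_combination -(2 * Real.pi * Complex.I : ℂ) * hn
      exact mul_left_cancel₀ hpi this
    have h2 : ((j * h : ℕ) : ℤ) = -n * k := by exact_mod_cast h1
    have h3 : (k : ℤ) ∣ ((j * h : ℕ) : ℤ) := ⟨-n, by rw [h2]; ring⟩
    exact hco.symm.dvd_of_dvd_mul_right (by exact_mod_cast h3)
  · rintro ⟨n, rfl⟩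
    refine ⟨-(n * h : ℤ), ?_⟩
    push_cast
    field_simp

lemma bet_mod {h k : ℕ} (hk : 0 < k) (j : ℕ) : bet h k j = bet h k (j % k) := by
  have hk0 : (k : ℂ) ≠ 0 := by exact_mod_cast hk.ne'
  have hj : (j : ℂ) = (j % k : ℕ) + (k : ℂ) * (j / k : ℕ) := by
    exact_mod_cast (Nat.mod_add_div j k).symm
  unfold bet
  rw [Complex.exp_eq_exp_iff_exists_int]
  generalize j / k = q at hj
  refine ⟨-((q : ℤ) * h), ?_⟩
  rw [hj]
  push_cast
  field_simp
  ring

lemma ray_all {h k : ℕ} (hk : 0 < k) (hco : Nat.Coprime h k) {v : ℂ} (hv : 0 < v.re) :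
    ∃ C : ℝ, 0 ≤ C ∧ ∀ j : ℕ, ∀ r : ℝ, 0 < r →
      ‖1 / (Complex.exp (r * v) * bet h k j - 1) -
        (if k ∣ j then 1 / (r * v) - 1 / 2 else 1 / (bet h k j - 1))‖ ≤ C * r := by
  have key : ∀ j : ℕ, ∃ C : ℝ, 0 ≤ C ∧ ∀ r : ℝ, 0 < r →
      ‖1 / (Complex.exp (r * v) * bet h k j - 1) -
        (if k ∣ j then 1 / (r * v) - 1 / 2 else 1 / (bet h k j - 1))‖ ≤ C * r := by
    intro j
    by_cases hj : k ∣ j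
    · simp only [hj, if_true, (bet_eq_one_iff hk hco j).mpr hj, mul_one]
      exact ray1 hv
    · simp only [hj, if_false]
      exact ray2 hv (norm_bet h k j) (fun h1 => hj ((bet_eq_one_iff hk hco j).mp h1))
  choose C hC0 hC using key
  refine ⟨∑ j ∈ Finset.range k, C j, Finset.sum_nonneg fun j _ => hC0 j, fun j r hr => ?_⟩
  have h1 := hC (j % k) r hr
  rw [← bet_mod hk j] at h1
  have h2 : (k ∣ j % k) ↔ k ∣ j := Nat.dvd_mod_iff (dvd_refl k)
  simp only [h2] at h1
  refine h1.trans ?_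
  gcongr
  exact Finset.single_le_sum (f := C) (fun i _ => hC0 i) (Finset.mem_range.mpr (Nat.mod_lt j hk))

lemma hasSum_dvd {k : ℕ} (hk : 0 < k) (f : ℕ → ℂ) {a : ℂ}
    (hf : HasSum (fun n : ℕ => f (k * (n + 1))) a) :
    HasSum (fun l : ℕ => if k ∣ (l + 1) then f (l + 1) else 0) a := by
  have hge : ∀ n : ℕ, k * (n + 1) - 1 + 1 = k * (n + 1) := fun n =>
    Nat.sub_add_cancel (Nat.mul_pos hk (Nat.succ_pos n))
  have hinj : Function.Injective (fun n : ℕ => k * (n + 1) - 1) := by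
    intro a b hab
    have h1 : k * (a + 1) = k * (b + 1) := by
      rw [← hge a, ← hge b]; simp only at hab; rw [hab]
    have := Nat.eq_of_mul_eq_mul_left hk h1
    omega
  rw [← hinj.hasSum_iff]
  · refine hf.congr_fun fun n => ?_
    simp only [Function.comp, hge, dvd_mul_right, if_true]
  · intro l hl
    rw [if_neg]
    rintro ⟨n, hn⟩
    apply hl
    cases n with
    | zero => simp at hn
    | succ n => exact ⟨n, by simp only; omega⟩
lemma summable_geo {x : ℂ} (hx : ‖x‖ < 1) : Summable (fun l : ℕ => ‖x‖ ^ (l + 1)) :=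
  (summable_nat_add_iff 1).mpr (summable_geometric_of_lt_one (norm_nonneg x) hx)

lemma hasSum_dilog {k : ℕ} (hk : 0 < k) {x : ℂ} (hx : ‖x‖ < 1) :
    HasSum (fun l : ℕ => if k ∣ (l + 1) then x ^ (l + 1) / ((l + 1 : ℕ) : ℂ) ^ 2 else 0)
      (dilog (x ^ k) / (k : ℂ) ^ 2) := by
  have hk0 : (k : ℂ) ≠ 0 := by exact_mod_cast hk.ne'
  refine hasSum_dvd hk (fun j => x ^ j / (j : ℂ) ^ 2) ?_
  have hxk : ‖x ^ k‖ < 1 := by rw [norm_pow]; exact pow_lt_one₀ (norm_nonneg _) hx hk.ne'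
  have hs : Summable (fun n : ℕ => (x ^ k) ^ (n + 1) / ((n : ℂ) + 1) ^ 2) := by
    refine Summable.of_norm_bounded (summable_geo hxk) fun n => ?_
    rw [norm_div, norm_pow, norm_pow]
    apply div_le_self (by positivity)
    have : ((n : ℂ) + 1) = (((n : ℝ) + 1 : ℝ) : ℂ) := by push_cast; rfl
    rw [this, norm_pow, Complex.norm_real, Real.norm_of_nonneg (by positivity)]
    apply one_le_pow₀
    have : (0 : ℝ) ≤ n := by positivity
    linarith
  have h1 := hs.hasSum.div_const ((k : ℂ) ^ 2)
  refine h1.congr_fun fun n => ?_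
  push_cast
  rw [pow_mul, mul_pow]
  have : ((n : ℂ) + 1) ≠ 0 := by exact_mod_cast Nat.succ_ne_zero n
  field_simp

lemma hasSum_log_part {k : ℕ} (hk : 0 < k) {x : ℂ} (hx : ‖x‖ < 1) :
    HasSum (fun l : ℕ => if k ∣ (l + 1) then x ^ (l + 1) / ((l + 1 : ℕ) : ℂ) else 0)
      (-Complex.log (1 - x ^ k) / (k : ℂ)) := by
  have hk0 : (k : ℂ) ≠ 0 := by exact_mod_cast hk.ne'
  refine hasSum_dvd hk (fun j => x ^ j / (j : ℂ)) ?_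
  have hxk : ‖x ^ k‖ < 1 := by rw [norm_pow]; exact pow_lt_one₀ (norm_nonneg _) hx hk.ne'
  have h1 := (Complex.hasSum_taylorSeries_neg_log' hxk).div_const (k : ℂ)
  refine h1.congr_fun fun n => ?_
  push_cast
  rw [pow_mul]
  have : ((n : ℂ) + 1) ≠ 0 := by exact_mod_cast Nat.succ_ne_zero n
  field_simp

lemma Fser_asymp {h k : ℕ} (hk : 0 < k) (hco : Nat.Coprime h k) {x : ℂ} (hx : ‖x‖ < 1)
    {z : ℂ} (hz : 0 < z.re) :
    ∃ C : ℝ, ∀ t : ℝ, 0 < t →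
      ‖Fser h k x (z * t) -
        (dilog (x ^ k) / (2 * Real.pi * (k : ℂ) ^ 2 * z) * (1 / (t : ℂ)) + whk h k x)‖ ≤ C * t := by
  have hz0 : z ≠ 0 := by rintro rfl; simp at hz
  have hpi : (Real.pi : ℂ) ≠ 0 := by exact_mod_cast Real.pi_ne_zero
  have hk0 : (k : ℂ) ≠ 0 := by exact_mod_cast hk.ne'
  have hv : 0 < (2 * Real.pi * z : ℂ).re := by
    have : (2 * Real.pi * z : ℂ) = ((2 * Real.pi : ℝ) : ℂ) * z := by push_cast; rfl
    rw [this, Complex.re_ofReal_mul]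
    have := Real.pi_pos; positivity
  obtain ⟨C, hC0, hC⟩ := ray_all hk hco hv
  refine ⟨C * ∑' l : ℕ, ‖x‖ ^ (l + 1), fun t ht => ?_⟩
  have ht0 : (t : ℂ) ≠ 0 := by exact_mod_cast ht.ne'
  have hzt : 0 < (z * t).re := by rw [Complex.re_mul_ofReal]; positivity
  have hF := Fser_eq h k hx hzt
  -- main terms
  let M : ℕ → ℂ := fun l => x ^ (l + 1) / ((l + 1 : ℕ) : ℂ) *
    (if k ∣ (l + 1) then 1 / ((((l + 1 : ℕ) * t : ℝ) : ℂ) * (2 * Real.pi * z)) - 1 / 2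
      else 1 / (bet h k (l + 1) - 1))
  let T : ℕ → ℂ := fun l => x ^ (l + 1) / (l + 1) *
      (1 / (Complex.exp (2 * Real.pi * (l + 1) * (z * t)) *
        Complex.exp (-(2 * Real.pi * Complex.I * (l + 1) * h / k)) - 1))
  have hD : ∀ l, ‖T l - M l‖ ≤ C * t * ‖x‖ ^ (l + 1) := by
    intro l
    have hl : (0 : ℝ) < (l + 1 : ℕ) := by positivity
    have h1 := hC (l + 1) ((l + 1 : ℕ) * t) (by positivity)
    have h2 : T l = x ^ (l + 1) / ((l + 1 : ℕ) : ℂ) *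
        (1 / (Complex.exp ((((l + 1 : ℕ) * t : ℝ) : ℂ) * (2 * Real.pi * z)) * bet h k (l + 1) - 1)) := by
      simp only [T, bet]
      congr 4
      · push_cast; rfl
      · congr 1
        push_cast; ring
      · congr 2
        push_cast; ring
    rw [h2]
    simp only [M]
    rw [← mul_sub, norm_mul]
    calc _ ≤ ‖x ^ (l + 1) / ((l + 1 : ℕ) : ℂ)‖ * (C * ((l + 1 : ℕ) * t)) := by gcongr
      _ = _ := by
        rw [norm_div, norm_pow, Complex.norm_natCast]
        field_simp
  have hgs : Summable (fun l : ℕ => C * t * ‖x‖ ^ (l + 1)) := (summable_geo hx).mul_left _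
  have hDs : Summable (fun l => T l - M l) := Summable.of_norm_bounded hgs hD
  have hMs : Summable M := by
    have := hF.summable.sub hDs
    refine this.congr fun l => ?_
    simp [T]
  have hdl := (hasSum_dilog hk hx).mul_left (1 / (2 * Real.pi * z * t))
  have hlg := (hasSum_log_part hk hx).mul_left (-1 / 2)
  have hW : ∀ l, M l - (1 / (2 * Real.pi * z * t) *
      (if k ∣ (l + 1) then x ^ (l + 1) / ((l + 1 : ℕ) : ℂ) ^ 2 else 0) +
      -1 / 2 * (if k ∣ (l + 1) then x ^ (l + 1) / ((l + 1 : ℕ) : ℂ) else 0)) =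
      (if k ∣ (l + 1) then 0 else
      x ^ (l + 1) / (l + 1) *
        (1 / (Complex.exp (-(2 * Real.pi * Complex.I * (l + 1) * h / k)) - 1))) := by
    intro l
    have hl0 : ((l + 1 : ℕ) : ℂ) ≠ 0 := by exact_mod_cast Nat.succ_ne_zero l
    simp only [M]
    by_cases hd : k ∣ l + 1
    · simp only [hd, if_true]
      rw [Complex.ofReal_mul, Complex.ofReal_natCast]
      field_simp
      ring
    · simp only [hd, if_false, mul_zero, add_zero, sub_zero, bet]
      push_cast
      rfl
  have hws : Summable (fun l : ℕ => (if k ∣ (l + 1) then 0 else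
      x ^ (l + 1) / ((l : ℂ) + 1) *
        (1 / (Complex.exp (-(2 * Real.pi * Complex.I * (l + 1) * h / k)) - 1)))) :=
    (hMs.sub (hdl.add hlg).summable).congr fun l => (hW l)
  have hMsum : HasSum M (dilog (x ^ k) / (2 * Real.pi * (k : ℂ) ^ 2 * z) * (1 / (t : ℂ)) +
      whk h k x) := by
    have := (hdl.add hlg).add hws.hasSum
    have hval : dilog (x ^ k) / (2 * Real.pi * (k : ℂ) ^ 2 * z) * (1 / (t : ℂ)) + whk h k x =
      1 / (2 * Real.pi * z * t) * (dilog (x ^ k) / (k : ℂ) ^ 2) +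
        -1 / 2 * (-Complex.log (1 - x ^ k) / (k : ℂ)) +
        ∑' l : ℕ, (if k ∣ (l + 1) then 0 else
          x ^ (l + 1) / ((l : ℂ) + 1) *
          (1 / (Complex.exp (-(2 * Real.pi * Complex.I * (l + 1) * h / k)) - 1))) := by
      unfold whk
      rw [← add_assoc]
      congr 1
      field_simp
    rw [hval]
    refine this.congr_fun fun l => ?_
    rw [← hW l]; ring
  have hfin := hF.sub hMsum
  rw [← hfin.tsum_eq]
  calc _ ≤ ∑' l : ℕ, C * t * ‖x‖ ^ (l + 1) := tsum_of_norm_bounded hgs.hasSum hD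
    _ = _ := by rw [tsum_mul_left]; ring
lemma Fser_continuousOn (h k : ℕ) {x : ℂ} (hx : ‖x‖ < 1) {z : ℂ} (hz : 0 < z.re) :
    ContinuousOn (fun t : ℝ => Fser h k x (z * t)) (Set.Ioi 0) := by
  intro t0 ht0
  have ht0' : (0 : ℝ) < t0 := ht0
  have hco : ContinuousOn (fun t : ℝ => Fser h k x (z * t)) (Set.Ioi (t0 / 2)) := by
    unfold Fser
    refine continuousOn_tsum (u := fun p : ℕ × ℕ => ‖x‖ ^ (p.2 + 1) *
      Real.exp (-(2 * Real.pi * (z.re * (t0 / 2)) * lmr p))) (fun p => by fun_prop)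
      (summable_bound hx (by positivity)) ?_
    intro p t ht
    refine (norm_term_le h k x _ p).trans ?_
    gcongr
    · exact (lmr_pos p).le
    · rw [Complex.re_mul_ofReal]
      have : t0 / 2 < t := ht
      gcongr
  exact (hco.continuousAt (Ioi_mem_nhds (by linarith))).continuousWithinAt

lemma Fser_decay (h k : ℕ) {x : ℂ} (hx : ‖x‖ < 1) {z : ℂ} (hz : 0 < z.re) :
    (fun t : ℝ => Fser h k x (z * t)) =O[atTop] (fun t : ℝ => Real.exp (-(2 * Real.pi * z.re) * t)) := by
  have hpos : 0 < 2 * Real.pi * z.re := by have := Real.pi_pos; positivity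
  refine Asymptotics.IsBigO.of_bound (Real.exp (2 * Real.pi * z.re) * ∑' p : ℕ × ℕ, ‖x‖ ^ (p.2 + 1) *
      Real.exp (-(2 * Real.pi * z.re * lmr p))) ?_
  filter_upwards [eventually_ge_atTop 1] with t ht
  have hs := (summable_bound hx hz).mul_left (Real.exp (-(2 * Real.pi * z.re) * (t - 1)))
  have hb : ∀ p, ‖acoef h k x p * Complex.exp (-(2 * Real.pi * (z * t) * (lmr p : ℂ)))‖ ≤
      Real.exp (-(2 * Real.pi * z.re) * (t - 1)) * (‖x‖ ^ (p.2 + 1) *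
      Real.exp (-(2 * Real.pi * z.re * lmr p))) := by
    intro p
    refine (norm_term_le h k x _ p).trans ?_
    rw [mul_left_comm, ← Real.exp_add]
    gcongr
    rw [Complex.re_mul_ofReal]
    nlinarith [mul_nonneg hpos.le (mul_nonneg (sub_nonneg.mpr ht) (sub_nonneg.mpr (lmr_ge_one p)))]
  have := tsum_of_norm_bounded hs.hasSum hb
  unfold Fser
  refine this.trans (le_of_eq ?_)
  rw [tsum_mul_left, Real.norm_of_nonneg (Real.exp_pos _).le,
    show -(2 * Real.pi * z.re) * (t - 1) = 2 * Real.pi * z.re + -(2 * Real.pi * z.re) * t by ring,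
    Real.exp_add]
  ring

lemma mellin_Fser (h k : ℕ) {x : ℂ} (hx : ‖x‖ < 1) {z : ℂ} (hz : 0 < z.re) {s q : ℂ}
    (hs : 1 < s.re) (hq : HasSum (fun p : ℕ × ℕ => Qterm h k x s p) q) :
    mellin (fun t : ℝ => Fser h k x (z * t)) s =
      q * Complex.Gamma s * (2 * Real.pi * z) ^ (-s) := by
  have hz0 : z ≠ 0 := by rintro rfl; simp at hz
  have hpi : (Real.pi : ℂ) ≠ 0 := by exact_mod_cast Real.pi_ne_zero
  have hpos : 0 < 2 * Real.pi * z.re := by have := Real.pi_pos; positivity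
  have hre : ∀ p, (2 * Real.pi * z * (lmr p : ℂ)).re = 2 * Real.pi * z.re * lmr p := by
    intro p
    rw [Complex.re_mul_ofReal]
    congr 1
    have : (2 * Real.pi * z : ℂ) = ((2 * Real.pi : ℝ) : ℂ) * z := by push_cast; rfl
    rw [this, Complex.re_ofReal_mul]
  have h1 := mellin_sum (a := acoef h k x) (c := fun p => 2 * Real.pi * z * (lmr p : ℂ))
    (F := fun t : ℝ => Fser h k x (z * t)) (s := s)
    (fun p => by rw [hre]; exact mul_pos hpos (lmr_pos p)) (by linarith) ?_ ?_
  · refine h1.unique ?_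
    rw [mul_assoc q]
    refine ((hq.mul_right (Complex.Gamma s * (2 * Real.pi * z) ^ (-s)))).congr_fun fun p => ?_
    rw [csplit (lmr_pos p) (by simp [hz0, hpi])]
    unfold Qterm acoef lmr
    push_cast
    ring
  · intro t ht
    have hzt : 0 < (z * t).re := by
      rw [Complex.re_mul_ofReal]; exact mul_pos hz ht
    refine (summable_term h k hx hzt).hasSum.congr_fun fun p => ?_
    congr 3
    ring
  · have hm : Summable (fun m : ℕ => 1 / ((m : ℝ) + 1) ^ s.re) := by
      have := (summable_nat_add_iff 1).mpr (Real.summable_one_div_nat_rpow.mpr hs)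
      simpa using this
    have h3 := (hm.mul_of_nonneg (summable_geo hx) (fun _ => by positivity)
      (fun _ => by positivity)).mul_left ((1 / (2 * Real.pi * z.re)) ^ s.re)
    refine Summable.of_nonneg_of_le (fun p => ?_) (fun p => ?_) h3
    · rw [hre]
      have := mul_pos hpos (lmr_pos p)
      positivity
    · rw [hre, show 1 / (2 * Real.pi * z.re * lmr p) = 1 / (2 * Real.pi * z.re) * (1 / lmr p) from
        (one_div_mul_one_div _ _).symm, Real.mul_rpow (by positivity)
        (by have := lmr_pos p; positivity), Real.div_rpow zero_le_one (lmr_pos p).le, Real.one_rpow]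
      have h4 := norm_acoef_le h k x p
      have h5 : ((p.1 : ℝ) + 1) ^ s.re ≤ (lmr p) ^ s.re :=
        Real.rpow_le_rpow (by positivity) (lmr_ge p) (by linarith)
      have h6 : 1 / (lmr p) ^ s.re ≤ 1 / ((p.1 : ℝ) + 1) ^ s.re := by gcongr
      have h7 : 0 ≤ 1 / (lmr p) ^ s.re := by have := lmr_pos p; positivity
      calc _ = (1 / (2 * Real.pi * z.re)) ^ s.re * ((1 / (lmr p) ^ s.re) * ‖acoef h k x p‖) := by ring
        _ ≤ _ := by gcongr
lemma hasMellin_cpow_compl (a : ℂ) {s : ℂ} (hs : s.re + a.re < 0) :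
    HasMellin (Set.indicator (Set.Ioc (0 : ℝ) 1)ᶜ (fun t => (t : ℂ) ^ a : ℝ → ℂ)) s
      (-(1 / (s + a))) := by
  have hset : Set.Ioi (0 : ℝ) ∩ (Set.Ioc 0 1)ᶜ = Set.Ioi 1 := by
    ext t
    simp only [Set.mem_inter_iff, Set.mem_Ioi, Set.mem_compl_iff, Set.mem_Ioc, not_and, not_le]
    constructor
    · rintro ⟨h1, h2⟩; exact h2 h1
    · intro h1; exact ⟨by linarith, fun _ => h1⟩
  have hm : MeasurableSet (Set.Ioc (0 : ℝ) 1)ᶜ := measurableSet_Ioc.compl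
  have hre : (s + a - 1).re < -1 := by simp; linarith
  have hcongr : Set.EqOn (fun t : ℝ => (t : ℂ) ^ (s + a - 1))
      (fun t : ℝ => (t : ℂ) ^ (s - 1) * (t : ℂ) ^ a) (Set.Ioi 1) := by
    intro t ht
    have ht0 : (t : ℂ) ≠ 0 := by
      have : (1 : ℝ) < t := ht
      exact_mod_cast (by linarith : (0:ℝ) < t).ne'
    simp only
    rw [← Complex.cpow_add _ _ ht0]; congr 1; ring
  have hfun : (fun t : ℝ => (t : ℂ) ^ (s - 1) •
      Set.indicator (Set.Ioc (0 : ℝ) 1)ᶜ (fun t => (t : ℂ) ^ a : ℝ → ℂ) t) =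
      Set.indicator (Set.Ioc (0 : ℝ) 1)ᶜ (fun t : ℝ => (t : ℂ) ^ (s - 1) * (t : ℂ) ^ a) := by
    ext t
    by_cases ht : t ∈ (Set.Ioc (0 : ℝ) 1)ᶜ
    · simp only [Set.indicator_of_mem ht, smul_eq_mul]
    · simp only [Set.indicator_of_notMem ht, smul_zero]
  constructor
  · unfold MellinConvergent
    rw [hfun, IntegrableOn, integrable_indicator_iff hm, IntegrableOn, Measure.restrict_restrict hm,
      Set.inter_comm, hset]
    exact (integrableOn_Ioi_cpow_of_lt hre one_pos).congr_fun hcongr measurableSet_Ioi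
  · unfold mellin
    rw [hfun, setIntegral_indicator hm, hset, ← setIntegral_congr_fun measurableSet_Ioi hcongr,
      integral_Ioi_cpow_of_lt hre one_pos]
    simp [neg_div]

lemma HasMellin_sub' {f g : ℝ → ℂ} {s m n : ℂ} (hf : HasMellin f s m) (hg : HasMellin g s n) :
    HasMellin (fun t => f t - g t) s (m - n) := by
  have := hasMellin_sub hf.1 hg.1
  rwa [hf.2, hg.2] at this

lemma HasMellin_add' {f g : ℝ → ℂ} {s m n : ℂ} (hf : HasMellin f s m) (hg : HasMellin g s n) :
    HasMellin (fun t => f t + g t) s (m + n) := by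
  have := hasMellin_add hf.1 hg.1
  rwa [hf.2, hg.2] at this

lemma HasMellin_mul' {f : ℝ → ℂ} {s m : ℂ} (hf : HasMellin f s m) (c : ℂ) :
    HasMellin (fun t => c * f t) s (c * m) := by
  have := hasMellin_const_smul hf.1 c
  rw [hf.2] at this
  exact this

lemma preconn_U : IsPreconnected
    (({s : ℂ | 1 < s.re} ∪ {s : ℂ | -1 < s.re} ∩ {s : ℂ | 0 < s.im}) ∪
      ({s : ℂ | -1 < s.re} ∩ {s : ℂ | s.re < 0})) := by
  have c1 : Convex ℝ {s : ℂ | 1 < s.re} := convex_halfSpace_re_gt 1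
  have c2 : Convex ℝ ({s : ℂ | -1 < s.re} ∩ {s : ℂ | 0 < s.im}) :=
    (convex_halfSpace_re_gt (-1)).inter (convex_halfSpace_im_gt 0)
  have c3 : Convex ℝ ({s : ℂ | -1 < s.re} ∩ {s : ℂ | s.re < 0}) :=
    (convex_halfSpace_re_gt (-1)).inter (convex_halfSpace_re_lt 0)
  refine IsPreconnected.union (-(1/2) + Complex.I) ?_ ?_
    (IsPreconnected.union (2 + Complex.I) ?_ ?_ c1.isPreconnected c2.isPreconnected)
    c3.isPreconnected
  · right; constructor <;> norm_num
  · constructor <;> norm_num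
  · norm_num
  · constructor <;> norm_num

lemma strip {F : ℝ → ℂ} (hFc : ContinuousOn F (Set.Ioi 0)) {a : ℝ} (ha : 0 < a)
    (hdec : F =O[atTop] (fun t : ℝ => Real.exp (-a * t))) {A w : ℂ} {C : ℝ}
    (hC : ∀ t : ℝ, 0 < t → ‖F t - (A * (1 / (t : ℂ)) + w)‖ ≤ C * t)
    {Λ : ℂ → ℂ} (hΛ : ∀ s : ℂ, -1 < s.re → s ≠ 0 → s ≠ 1 → DifferentiableAt ℂ Λ s)
    (hM : ∀ s : ℂ, 1 < s.re → mellin F s = Λ s) {s : ℂ} (hs1 : -1 < s.re) (hs0 : s.re < 0) :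
    HasMellin (fun t => F t - (A * (1 / (t : ℂ)) + w)) s (Λ s) := by
  let i1 : ℝ → ℂ := Set.indicator (Set.Ioc (0 : ℝ) 1) (fun t => (t : ℂ) ^ (-1 : ℂ))
  let i0 : ℝ → ℂ := Set.indicator (Set.Ioc (0 : ℝ) 1) (fun t => (t : ℂ) ^ (0 : ℂ))
  let j1 : ℝ → ℂ := Set.indicator (Set.Ioc (0 : ℝ) 1)ᶜ (fun t => (t : ℂ) ^ (-1 : ℂ))
  let j0 : ℝ → ℂ := Set.indicator (Set.Ioc (0 : ℝ) 1)ᶜ (fun t => (t : ℂ) ^ (0 : ℂ))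
  let H : ℝ → ℂ := fun t => F t - (A * i1 t + w * i0 t)
  have hH_in : ∀ t : ℝ, 0 < t → t ≤ 1 → H t = F t - (A * (1 / (t : ℂ)) + w) := by
    intro t h0 h1
    have hmem : t ∈ Set.Ioc (0 : ℝ) 1 := ⟨h0, h1⟩
    simp only [H, i1, i0, Set.indicator_of_mem hmem, Complex.cpow_neg_one, Complex.cpow_zero,
      mul_one, one_div]
  have hH_out : ∀ t : ℝ, 1 < t → H t = F t := by
    intro t h1
    have hmem : t ∉ Set.Ioc (0 : ℝ) 1 := fun h => absurd h.2 (not_le.mpr h1)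
    simp only [H, i1, i0, Set.indicator_of_notMem hmem, mul_zero, add_zero, sub_zero]
  have hloc_i : ∀ b : ℂ, LocallyIntegrableOn
      (Set.indicator (Set.Ioc (0 : ℝ) 1) (fun t => (t : ℂ) ^ b : ℝ → ℂ)) (Set.Ioi 0) := by
    intro b
    have hc : ContinuousOn (fun t : ℝ => (t : ℂ) ^ b) (Set.Ioi 0) := fun t ht =>
      (Complex.continuousAt_ofReal_cpow_const _ _ (Or.inr (ne_of_gt ht))).continuousWithinAt
    rw [locallyIntegrableOn_iff isOpen_Ioi.isLocallyClosed]
    intro K hK hKc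
    exact ((hc.mono hK).integrableOn_compact hKc).indicator measurableSet_Ioc
  have hHloc : LocallyIntegrableOn H (Set.Ioi 0) := by
    have h1 := hFc.locallyIntegrableOn measurableSet_Ioi (μ := volume)
    have h2 := (hloc_i (-1)).smul A
    have h3 := (hloc_i 0).smul w
    exact h1.sub (h2.add h3)
  have hHtop : H =O[atTop] (fun t : ℝ => Real.exp (-a * t)) := by
    refine hdec.congr' ?_ Filter.EventuallyEq.rfl
    filter_upwards [eventually_gt_atTop 1] with t ht
    exact (hH_out t ht).symm
  have hHbot : H =O[nhdsWithin 0 (Set.Ioi 0)] (fun t : ℝ => t ^ (-(-1 : ℝ))) := by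
    refine Asymptotics.IsBigO.of_bound C ?_
    filter_upwards [Ioc_mem_nhdsGT (zero_lt_one (α := ℝ))] with t ht
    rw [hH_in t ht.1 ht.2, neg_neg, Real.rpow_one, Real.norm_of_nonneg ht.1.le]
    exact hC t ht.1
  have hHconv : ∀ s : ℂ, -1 < s.re → HasMellin H s (mellin H s) := fun s hs =>
    ⟨mellinConvergent_of_isBigO_rpow_exp ha hHloc hHtop hHbot hs, rfl⟩
  have hHdiff : ∀ s : ℂ, -1 < s.re → DifferentiableAt ℂ (mellin H) s := fun s hs =>
    mellin_differentiableAt_of_isBigO_rpow_exp ha hHloc hHtop hHbot hs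
  have hid1 : ∀ s : ℂ, 1 < s.re →
      mellin H s + (A * (1 / (s + -1)) + w * (1 / (s + 0))) = Λ s := by
    intro s hs
    rw [← hM s hs]
    have e1 := HasMellin_mul' (hasMellin_cpow_Ioc (-1) (s := s) (by simp; linarith)) A
    have e0 := HasMellin_mul' (hasMellin_cpow_Ioc 0 (s := s) (by simp; linarith)) w
    have e := HasMellin_add' (hHconv s (by linarith)) (HasMellin_add' e1 e0)
    rw [← e.2]
    congr 1
    ext t
    simp only [H, i1, i0]
    ring
  set U := (({s : ℂ | 1 < s.re} ∪ {s : ℂ | -1 < s.re} ∩ {s : ℂ | 0 < s.im}) ∪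
      ({s : ℂ | -1 < s.re} ∩ {s : ℂ | s.re < 0})) with hU
  have o1 : IsOpen {s : ℂ | 1 < s.re} := isOpen_lt continuous_const Complex.continuous_re
  have o2 : IsOpen {s : ℂ | -1 < s.re} := isOpen_lt continuous_const Complex.continuous_re
  have o3 : IsOpen {s : ℂ | 0 < s.im} := isOpen_lt continuous_const Complex.continuous_im
  have o4 : IsOpen {s : ℂ | s.re < 0} := isOpen_lt Complex.continuous_re continuous_const
  have hUo : IsOpen U := (o1.union (o2.inter o3)).union (o2.inter o4)
  have hUprop : ∀ s ∈ U, -1 < s.re ∧ s ≠ 0 ∧ s ≠ 1 := by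
    rintro s ((h1 | ⟨h1, h2⟩) | ⟨h1, h2⟩)
    · have h1' : 1 < s.re := h1
      refine ⟨by linarith, ?_, ?_⟩ <;> · rintro rfl; norm_num at h1'
    · have h2' : 0 < s.im := h2
      refine ⟨h1, ?_, ?_⟩ <;> · rintro rfl; norm_num at h2'
    · have h2' : s.re < 0 := h2
      refine ⟨h1, ?_, ?_⟩ <;> · rintro rfl; norm_num at h2'
  have hf : AnalyticOnNhd ℂ (fun s => mellin H s + (A * (1 / (s + -1)) + w * (1 / (s + 0)))) U := by
    refine DifferentiableOn.analyticOnNhd (fun s hs => ?_) hUo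
    obtain ⟨h1, h2, h3⟩ := hUprop s hs
    have d1 : DifferentiableAt ℂ (fun s : ℂ => 1 / (s + -1)) s :=
      (differentiableAt_const _).div (by fun_prop) (by rwa [← sub_eq_add_neg, sub_ne_zero])
    have d2 : DifferentiableAt ℂ (fun s : ℂ => 1 / (s + 0)) s :=
      (differentiableAt_const _).div (by fun_prop) (by rwa [add_zero])
    exact ((hHdiff s h1).add ((d1.const_mul A).add (d2.const_mul w))).differentiableWithinAt
  have hg : AnalyticOnNhd ℂ Λ U := by
    refine DifferentiableOn.analyticOnNhd (fun s hs => ?_) hUo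
    obtain ⟨h1, h2, h3⟩ := hUprop s hs
    exact (hΛ s h1 h2 h3).differentiableWithinAt
  have hEq := hf.eqOn_of_preconnected_of_eventuallyEq hg preconn_U (z₀ := 2)
    (by left; left; norm_num) (by
      filter_upwards [o1.mem_nhds (show (2 : ℂ) ∈ {s : ℂ | 1 < s.re} by norm_num)] with s hs
      exact hid1 s hs)
  have hsU : s ∈ U := Or.inr ⟨hs1, hs0⟩
  have hval := hEq hsU
  have e1 := HasMellin_mul' (hasMellin_cpow_compl (-1) (s := s) (by simp; linarith)) A
  have e0 := HasMellin_mul' (hasMellin_cpow_compl 0 (s := s) (by simp; linarith)) w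
  have e := HasMellin_sub' (hHconv s hs1) (HasMellin_add' e1 e0)
  have hv2 : mellin H s - (A * -(1 / (s + -1)) + w * -(1 / (s + 0))) = Λ s := by
    rw [← hval]; ring
  rw [hv2] at e
  convert e using 2 with t
  by_cases ht : t ∈ Set.Ioc (0 : ℝ) 1
  · have ht' : t ∉ (Set.Ioc (0 : ℝ) 1)ᶜ := fun h => h ht
    rw [hH_in t ht.1 ht.2]
    simp only [Set.indicator_of_notMem ht', mul_zero, add_zero, sub_zero]
  · have ht' : t ∈ (Set.Ioc (0 : ℝ) 1)ᶜ := ht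
    simp only [H, i1, i0, Set.indicator_of_notMem ht, Set.indicator_of_mem ht', mul_zero, add_zero,
      sub_zero, Complex.cpow_neg_one, Complex.cpow_zero, mul_one, one_div]
lemma mellin_vert_bound {G : ℝ → ℂ} {Λ : ℂ → ℂ} {σ : ℝ}
    (hG : ∀ y : ℝ, HasMellin G (σ + y * Complex.I) (Λ (σ + y * Complex.I))) :
    ∃ B : ℝ, ∀ y : ℝ, ‖Λ (σ + y * Complex.I)‖ ≤ B := by
  refine ⟨∫ t : ℝ in Set.Ioi 0, t ^ (σ - 1) * ‖G t‖, fun y => ?_⟩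
  rw [← (hG y).2, mellin]
  refine (norm_integral_le_integral_norm _).trans (le_of_eq ?_)
  refine setIntegral_congr_fun measurableSet_Ioi fun t ht => ?_
  rw [norm_smul, Complex.norm_cpow_eq_rpow_re_of_pos ht]
  simp

/-- The Mellin transform side. -/
noncomputable def Lam (Qt : ℂ → ℂ) (z s : ℂ) : ℂ :=
  Qt s * Complex.Gamma s * (2 * Real.pi * z) ^ (-s)

lemma Lam_diff {Qt : ℂ → ℂ} (hQt : DifferentiableOn ℂ Qt {(1 : ℂ)}ᶜ) {z : ℂ} (hz : z ≠ 0)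
    {s : ℂ} (hs : -1 < s.re) (hs0 : s ≠ 0) (hs1 : s ≠ 1) : DifferentiableAt ℂ (Lam Qt z) s := by
  have hpi : (Real.pi : ℂ) ≠ 0 := by exact_mod_cast Real.pi_ne_zero
  have d1 : DifferentiableAt ℂ Qt s := hQt.differentiableAt (isOpen_compl_singleton.mem_nhds hs1)
  have d2 : DifferentiableAt ℂ Complex.Gamma s := by
    refine Complex.differentiableAt_Gamma s fun m hm => ?_
    rcases Nat.eq_zero_or_pos m with rfl | hmp
    · exact hs0 (by simpa using hm)
    · rw [hm] at hs
      have : (1 : ℝ) ≤ m := by exact_mod_cast hmp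
      simp at hs
      linarith
  have d3 : DifferentiableAt ℂ (fun s : ℂ => (2 * Real.pi * z) ^ (-s)) s :=
    (differentiableAt_id.neg).const_cpow (Or.inl (by simp [hz, hpi]))
  exact (d1.mul d2).mul d3

lemma main_mellin {h k : ℕ} (hhk : h < k) (hco : Nat.Coprime h k)
    {x : ℂ} (hx : ‖x‖ < 1)
    {Qt : ℂ → ℂ} (hQt : DifferentiableOn ℂ Qt {(1 : ℂ)}ᶜ)
    (hQsum : ∀ s : ℂ, 1 < s.re → HasSum (fun p : ℕ × ℕ => Qterm h k x s p) (Qt s))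
    {z : ℂ} (hz : 0 < z.re) {s : ℂ} (hs1 : -1 < s.re) (hs0 : s.re < 0) :
    HasMellin (fun t : ℝ => Fser h k x (z * t) -
        (dilog (x ^ k) / (2 * Real.pi * (k : ℂ) ^ 2 * z) * (1 / (t : ℂ)) + whk h k x)) s
      (Lam Qt z s) := by
  have hk : 0 < k := by omega
  have hz0 : z ≠ 0 := by rintro rfl; simp at hz
  obtain ⟨C, hC⟩ := Fser_asymp hk hco hx hz
  exact strip (Fser_continuousOn h k hx hz) (by have := Real.pi_pos; positivity)
    (Fser_decay h k hx hz) hC (fun s h1 h2 h3 => Lam_diff hQt hz0 h1 h2 h3)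
    (fun s hs => mellin_Fser h k hx hz hs (hQsum s hs)) hs1 hs0

lemma rotate {z : ℂ} (hz : 0 < z.re) {φ : ℝ} (h1 : |z.arg + φ| < Real.pi / 2) :
    0 < (z * Complex.exp (φ * Complex.I)).re ∧ ∀ s : ℂ,
      (2 * Real.pi * (z * Complex.exp (φ * Complex.I))) ^ (-s) =
        (2 * Real.pi * z) ^ (-s) * Complex.exp (-(φ * Complex.I * s)) := by
  have hz0 : z ≠ 0 := by rintro rfl; simp at hz
  have hpi : (Real.pi : ℂ) ≠ 0 := by exact_mod_cast Real.pi_ne_zero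
  have hpp := Real.pi_pos
  have h1' := abs_lt.mp h1
  have hne : (2 * Real.pi * z : ℂ) ≠ 0 := by simp [hz0, hpi]
  constructor
  · have : z * Complex.exp (φ * Complex.I) = Complex.exp (Complex.log z + φ * Complex.I) := by
      rw [Complex.exp_add, Complex.exp_log hz0]
    rw [this, Complex.exp_re]
    have him : (Complex.log z + φ * Complex.I).im = z.arg + φ := by simp [Complex.log_im]
    rw [him]
    exact mul_pos (Real.exp_pos _) (Real.cos_pos_of_mem_Ioo ⟨by linarith, by linarith⟩)
  · intro s
    have hlog : Complex.log (2 * Real.pi * (z * Complex.exp (φ * Complex.I))) =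
        Complex.log (2 * Real.pi * z) + φ * Complex.I := by
      have e : (2 * Real.pi * (z * Complex.exp (φ * Complex.I)) : ℂ) =
          Complex.exp (Complex.log (2 * Real.pi * z) + φ * Complex.I) := by
        rw [Complex.exp_add, Complex.exp_log hne]; ring
      have him : (Complex.log (2 * Real.pi * z) + φ * Complex.I).im = z.arg + φ := by
        have : (2 * Real.pi * z : ℂ) = ((2 * Real.pi : ℝ) : ℂ) * z := by push_cast; rfl
        rw [this, Complex.add_im, Complex.log_im, Complex.arg_real_mul _ (by positivity)]
        simp
      rw [e, Complex.log_exp (by rw [him]; linarith) (by rw [him]; linarith)]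
    have hne2 : (2 * Real.pi * (z * Complex.exp (φ * Complex.I)) : ℂ) ≠ 0 := by
      simp [hz0, hpi]
    rw [Complex.cpow_def_of_ne_zero hne2, Complex.cpow_def_of_ne_zero hne, hlog, ← Complex.exp_add]
    congr 1; ring

lemma cosh_lower (u : ℝ) : 1 + u ^ 2 / 2 ≤ Real.exp u + Real.exp (-u) := by
  rcases le_total 0 u with hu | hu
  · have := Real.quadratic_le_exp_of_nonneg hu
    have := Real.exp_pos (-u)
    linarith
  · have := Real.quadratic_le_exp_of_nonneg (neg_nonneg.mpr hu)
    have := Real.exp_pos u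
    nlinarith

lemma Lam_rot {Qt : ℂ → ℂ} {z : ℂ} (hz : 0 < z.re) {φ : ℝ} (h1 : |z.arg + φ| < Real.pi / 2)
    (σ y : ℝ) : ‖Lam Qt (z * Complex.exp (φ * Complex.I)) (σ + y * Complex.I)‖ =
      ‖Lam Qt z (σ + y * Complex.I)‖ * Real.exp (φ * y) := by
  unfold Lam
  rw [(rotate hz h1).2, ← mul_assoc, norm_mul _ (Complex.exp _), Complex.norm_exp]
  congr 2
  simp

lemma Lam_integrable {h k : ℕ} (hhk : h < k) (hco : Nat.Coprime h k)
    {x : ℂ} (hx : ‖x‖ < 1)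
    {Qt : ℂ → ℂ} (hQt : DifferentiableOn ℂ Qt {(1 : ℂ)}ᶜ)
    (hQsum : ∀ s : ℂ, 1 < s.re → HasSum (fun p : ℕ × ℕ => Qterm h k x s p) (Qt s))
    {z : ℂ} (hz : 0 < z.re) {σ : ℝ} (hs1 : -1 < σ) (hs0 : σ < 0) :
    Integrable (fun y : ℝ => Lam Qt z (σ + y * Complex.I)) := by
  have hz0 : z ≠ 0 := by rintro rfl; simp at hz
  have hre : ∀ y : ℝ, ((σ : ℂ) + y * Complex.I).re = σ := fun y => by simp
  have hbd : ∀ z : ℂ, 0 < z.re → ∃ B : ℝ, ∀ y : ℝ, ‖Lam Qt z (σ + y * Complex.I)‖ ≤ B :=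
    fun z hz => mellin_vert_bound fun y => main_mellin hhk hco hx hQt hQsum hz
      (by rw [hre]; exact hs1) (by rw [hre]; exact hs0)
  have harg : |z.arg| < Real.pi / 2 := Complex.abs_arg_lt_pi_div_two_iff.mpr (Or.inl hz)
  set φ := (Real.pi / 2 - |z.arg|) / 2 with hφ
  have hφpos : 0 < φ := by rw [hφ]; linarith
  have ha1 : |z.arg + φ| < Real.pi / 2 := by
    have := abs_add_le z.arg φ; rw [abs_of_pos hφpos] at this; linarith
  have ha2 : |z.arg + (-φ : ℝ)| < Real.pi / 2 := by
    have := abs_add_le z.arg (-φ); rw [abs_neg, abs_of_pos hφpos] at this; linarith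
  obtain ⟨B1, hB1⟩ := hbd _ (rotate hz ha1).1
  obtain ⟨B2, hB2⟩ := hbd _ (rotate hz ha2).1
  have hmpos : 0 < min 1 (φ ^ 2 / 2) := by positivity
  set m := min 1 (φ ^ 2 / 2) with hm
  refine Integrable.mono' (integrable_inv_one_add_sq.const_mul ((B1 + B2) / m)) ?_ ?_
  · refine Continuous.aestronglyMeasurable ?_
    rw [continuous_iff_continuousAt]
    intro y
    have hne : ∀ c : ℂ, 0 ≤ c.re → (σ : ℂ) + y * Complex.I ≠ c := by
      intro c hc he
      rw [← he, hre] at hc; linarith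
    have hd := Lam_diff hQt hz0 (s := (σ : ℂ) + y * Complex.I) (by rw [hre]; exact hs1)
      (hne 0 (by simp)) (hne 1 (by simp))
    exact ContinuousAt.comp (f := fun y : ℝ => (σ : ℂ) + y * Complex.I) hd.continuousAt
      (by fun_prop)
  · refine Filter.Eventually.of_forall fun y => ?_
    have e1 := hB1 y
    have e2 := hB2 y
    rw [Lam_rot hz ha1] at e1
    rw [Lam_rot hz ha2] at e2
    set N := ‖Lam Qt z (σ + y * Complex.I)‖ with hN
    have hN0 : 0 ≤ N := norm_nonneg _
    have e3 := cosh_lower (φ * y)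
    rw [neg_mul] at e2
    have e4 : m * (1 + y ^ 2) ≤ 1 + (φ * y) ^ 2 / 2 := by
      have i1 : m ≤ 1 := min_le_left _ _
      have i2 : m ≤ φ ^ 2 / 2 := min_le_right _ _
      nlinarith [sq_nonneg y]
    have e5 : N * (m * (1 + y ^ 2)) ≤ B1 + B2 := by
      calc N * (m * (1 + y ^ 2)) ≤ N * (Real.exp (φ * y) + Real.exp (-(φ * y))) := by
            gcongr; linarith
        _ ≤ _ := by linarith
    rw [← div_eq_mul_inv, div_div, le_div_iff₀ (by positivity)]
    exact e5

/-- Factorization of the generating function near the rational point `e^{2πih/k}`: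
`P(x, e^{2πi(h/k + iz)}) = e^{w_{h,k}} · exp(Li₂(x^k)/(2πk²z)) · exp(j_{h,k}(z))`, where
`j_{h,k}(z) = (1/2πi)∫_{Re s = -3/4} Q̃(s)Γ(s)(2πz)^{-s} ds` and this integral converges
absolutely. -/
theorem generating_function_factorization (h k : ℕ) (hhk : h < k) (hco : Nat.Coprime h k)
    (x : ℂ) (hx : ‖x‖ < 1)
    (Qt : ℂ → ℂ) (hQt : DifferentiableOn ℂ Qt {(1 : ℂ)}ᶜ)
    (hQsum : ∀ s : ℂ, 1 < s.re → HasSum (fun p : ℕ × ℕ => Qterm h k x s p) (Qt s)) :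
    ∃ δ > (0 : ℝ), ∀ z : ℂ, 0 < z.re → ‖z‖ < δ →
      Integrable (fun t : ℝ =>
        Qt (-(3/4) + t * Complex.I) * Complex.Gamma (-(3/4) + t * Complex.I) *
          (2 * Real.pi * z) ^ (-(-(3/4) + t * Complex.I))) ∧
      Pgen x (Complex.exp (2 * Real.pi * Complex.I * ((h : ℂ) / k + Complex.I * z))) =
        Complex.exp (whk h k x) *
        Complex.exp (dilog (x ^ k) / (2 * Real.pi * (k : ℂ) ^ 2 * z)) *
        Complex.exp ((1 / (2 * Real.pi * Complex.I)) *
          ∫ t : ℝ, Qt (-(3/4) + t * Complex.I) * Complex.Gamma (-(3/4) + t * Complex.I) *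
            (2 * Real.pi * z) ^ (-(-(3/4) + t * Complex.I)) * Complex.I) := by
  refine ⟨1, one_pos, fun z hz _ => ?_⟩
  have hσ : ((-(3 / 4) : ℝ) : ℂ) = -(3 / 4) := by push_cast; rfl
  have hpi : (Real.pi : ℂ) ≠ 0 := by exact_mod_cast Real.pi_ne_zero
  have hLint := Lam_integrable hhk hco hx hQt hQsum hz (σ := -(3 / 4)) (by norm_num) (by norm_num)
  have hmel : ∀ y : ℝ, HasMellin (fun t : ℝ => Fser h k x (z * t) -
        (dilog (x ^ k) / (2 * Real.pi * (k : ℂ) ^ 2 * z) * (1 / (t : ℂ)) + whk h k x))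
        (((-(3 / 4) : ℝ) : ℂ) + y * Complex.I)
      (Lam Qt z (((-(3 / 4) : ℝ) : ℂ) + y * Complex.I)) := fun y =>
    main_mellin hhk hco hx hQt hQsum hz (by simp <;> norm_num) (by simp)
  have hvert : Complex.VerticalIntegrable (mellin (fun t : ℝ => Fser h k x (z * t) -
        (dilog (x ^ k) / (2 * Real.pi * (k : ℂ) ^ 2 * z) * (1 / (t : ℂ)) + whk h k x)))
        (-(3 / 4)) := by
    unfold Complex.VerticalIntegrable
    simp only [fun y => (hmel y).2]
    exact hLint
  have hconv := (hmel 0).1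
  rw [Complex.ofReal_zero, zero_mul, add_zero] at hconv
  have hcont : ContinuousAt (fun t : ℝ => Fser h k x (z * t) -
        (dilog (x ^ k) / (2 * Real.pi * (k : ℂ) ^ 2 * z) * (1 / (t : ℂ)) + whk h k x)) 1 := by
    refine ((Fser_continuousOn h k hx hz).continuousAt (Ioi_mem_nhds one_pos)).sub ?_
    refine (ContinuousAt.mul continuousAt_const ?_).add continuousAt_const
    exact continuousAt_const.div Complex.continuous_ofReal.continuousAt (by simp)
  have hinv := mellinInv_mellin_eq (-(3 / 4)) _ one_pos hconv hvert hcont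
  unfold mellinInv at hinv
  simp only [fun y => (hmel y).2] at hinv
  simp only [Complex.ofReal_one, Complex.one_cpow, one_smul, mul_one, div_one] at hinv
  rw [hσ] at hinv hLint
  refine ⟨hLint, ?_⟩
  rw [Pgen_eq h k hx hz, ← Complex.exp_add, ← Complex.exp_add]
  congr 1
  rw [integral_mul_const]
  change _ = _ + 1 / (2 * Real.pi * Complex.I) *
    ((∫ t : ℝ, Lam Qt z (-(3 / 4) + t * Complex.I)) * Complex.I)
  have hF : Fser h k x z = (1 / (2 * Real.pi) : ℂ) *
      (∫ t : ℝ, Lam Qt z (-(3 / 4) + t * Complex.I)) +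
      (dilog (x ^ k) / (2 * Real.pi * (k : ℂ) ^ 2 * z) + whk h k x) := by
    rw [← sub_eq_iff_eq_add, ← hinv, Complex.real_smul]
    push_cast
    rfl
  rw [hF]
  generalize (∫ t : ℝ, Lam Qt z (-(3 / 4) + t * Complex.I)) = J
  have hI := Complex.I_ne_zero
  field_simp
  ring
end
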